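/- arXiv:1803.09306 — 5 statements merged into one kernel-verified Lean document; each statement's English description precedes it below -/
import Mathlib

section
/- Let s ≥ 2 and d ≥ 2 be integers and let f be a homogeneous polynomial of degree s in d variables with rational coefficients such that the set {x ∈ ℚ^d : f(x) = 0} is finite. If ξ = (ξ₁,…,ξ_d) ∈ ℝ^d is totally irrational and f(ξ) = 1, then the uniform Diophantine exponent of ξ satisfies ω̂(ξ) ≤ H_{d−1,s}, where H_{d−1,s} is the unique positive root of the equation 1 − x = x · Σ_{k=1}^{d−1} (x/(s−1))^k. -/
open Filter

/-- The "uniform approximation at exponent `γ`" property: for every sufficiently large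
real `Q`, the system `max_j |q θ_j - a_j| < Q^(-γ)`, `1 ≤ q ≤ Q` has an integer solution.
The uniform Diophantine exponent `ω̂(θ)` is the supremum of such `γ`. -/
def UnifApprox {m : ℕ} (θ : Fin m → ℝ) (γ : ℝ) : Prop :=
  ∀ᶠ Q : ℝ in atTop, ∃ (q : ℤ) (a : Fin m → ℤ),
    1 ≤ q ∧ (q : ℝ) ≤ Q ∧ ∀ j, |(q : ℝ) * θ j - (a j : ℝ)| < Q ^ (-γ)

/-- `1, θ₁, …, θ_m` are linearly independent over `ℚ`. -/
def TotallyIrrational {m : ℕ} (θ : Fin m → ℝ) : Prop :=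
  LinearIndependent ℚ (Fin.cons (1 : ℝ) θ)

/-!
Let `q i` be the denominators of the best approximations to `ξ`, let `a i` be the integer vector
nearest to `q i • ξ`, and suppose that the uniform exponent exceeds `η > H`. Clear denominators to
replace `f` by an integral form `g` with `g ξ = D`. If `a i` lay on the hypersurface
`g x = D * q i ^ s`, then `q i` would divide the value of `g` at the nonzero integer vector
`q i • a (i - 1) - q (i - 1) • a i`, whose size is at most `q i ^ (1 - η)`; as `g` has no nontrivial
integer zero, this gives `q i ≪ q i ^ (s (1 - η))`, which is impossible because `s (1 - H) < 1`. So
`a i` is eventually off the hypersurface, which bounds the distance from `q i • ξ` to `a i` from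
below by `≫ q i ^ (1 - s)`, and hence `q (i + 1) ^ η ≤ q i ^ (s - 1)`.

On the other hand, total irrationality yields `d + 1` linearly independent integer points
`(q i, a i)`, arbitrarily far out. In the determinant they form, each row can be reduced by the
point immediately preceding it in the sequence of best approximations, which clears its first
coordinate. The resulting upper bound for the determinant, together with the growth restriction and
`H * ∑ i < d, (H / (s - 1)) ^ i = 1`, falls below `1`, a contradiction.
-/

section JumpSet

open Submodule

variable {K V ι : Type*} [DivisionRing K] [AddCommGroup V] [Module K V] [LinearOrder ι]

/-- The indices at which the span of the initial segments of `v` grows; the vectors of `v` at these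
indices form a basis of the span of `v` adapted to the order of the indices. -/
def jumpSet (K : Type*) {V ι : Type*} [DivisionRing K] [AddCommGroup V] [Module K V]
    [LinearOrder ι] (v : ι → V) : Set ι :=
  {i | v i ∉ span K (v '' Set.Iio i)}

lemma linearIndepOn_jumpSet (v : ι → V) : LinearIndepOn K v (jumpSet K v) := by
  classical
  refine linearIndepOn_of_finite _ fun t ht htfin ↦ ?_
  lift t to Finset ι using htfin
  induction t using Finset.induction_on_max with
  | empty => simp
  | insert i t hlt ih =>
    rw [Finset.coe_insert] at ht ⊢
    refine (ih ((Set.subset_insert _ _).trans ht)).insert fun hi ↦ ht (Set.mem_insert _ _) ?_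
    exact span_mono (Set.image_mono fun k hk ↦ hlt k hk) hi

lemma mem_span_image_jumpSet_inter_Iic [WellFoundedLT ι] (v : ι → V) (i : ι) :
    v i ∈ span K (v '' (jumpSet K v ∩ Set.Iic i)) := by
  induction i using WellFoundedLT.induction with
  | ind i ih =>
    by_cases hi : i ∈ jumpSet K v
    · exact subset_span (Set.mem_image_of_mem v ⟨hi, le_rfl⟩)
    · refine span_le.mpr ?_ (not_not.mp hi)
      rintro _ ⟨k, hk, rfl⟩
      have hki : k < i := hk
      exact span_mono (Set.image_mono <| Set.inter_subset_inter_right _ <|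
        Set.Iic_subset_Iic.mpr hki.le) (ih k hki)

lemma span_image_jumpSet [WellFoundedLT ι] (v : ι → V) :
    span K (v '' jumpSet K v) = span K (Set.range v) := by
  refine le_antisymm (span_mono (Set.image_subset_range _ _)) (span_le.mpr ?_)
  rintro _ ⟨i, rfl⟩
  exact span_mono (Set.image_mono Set.inter_subset_left) (mem_span_image_jumpSet_inter_Iic v i)

lemma span_image_Iio_le_of_orderIso_jumpSet [WellFoundedLT ι] {κ : Type*} [Preorder κ]
    {v : ι → V} (e : κ ≃o jumpSet K v) (k : κ) :
    span K (v '' Set.Iio (e k : ι)) ≤ span K ((fun l ↦ v (e l)) '' Set.Iio k) := by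
  rw [span_le]
  rintro _ ⟨i, hi, rfl⟩
  refine span_mono ?_ (mem_span_image_jumpSet_inter_Iic v i)
  rintro _ ⟨j, ⟨hj, hji⟩, rfl⟩
  refine ⟨e.symm ⟨j, hj⟩, ?_, by simp⟩
  rw [Set.mem_Iio, OrderIso.symm_apply_lt]
  exact Subtype.coe_lt_coe.mp (lt_of_le_of_lt hji hi)

lemma nonempty_orderIso_fin_jumpSet [WellFoundedLT ι] [FiniteDimensional K V] {v : ι → V}
    (hv : span K (Set.range v) = ⊤) :
    Nonempty (Fin (Module.finrank K V) ≃o jumpSet K v) := by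
  have hli : LinearIndependent K fun i : jumpSet K v ↦ v i := linearIndepOn_jumpSet v
  have : Fintype (jumpSet K v) := @Fintype.ofFinite _ hli.finite
  refine ⟨Fintype.orderIsoFinOfCardEq _ ?_⟩
  rw [← finrank_span_eq_card hli, ← Set.image_eq_range, span_image_jumpSet, hv, finrank_top]

end JumpSet

section Determinant

lemma det_eq_det_of_sub_mem_span_image_Iio {R m : Type*} [CommRing R] [Fintype m] [LinearOrder m]
    {A B : Matrix m m R} (h : ∀ i, A.row i - B.row i ∈ Submodule.span R (B.row '' Set.Iio i)) :
    A.det = B.det := by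
  have hcoeff : ∀ i, ∃ c : m → R,
      (∀ k, ¬ k < i → c k = 0) ∧ ∑ k, c k • B.row k = A.row i - B.row i := by
    intro i
    obtain ⟨c, hc, hsum⟩ := (Finsupp.mem_span_image_iff_linearCombination R).mp (h i)
    refine ⟨c, fun k hk ↦ Finsupp.notMem_support_iff.mp fun hmem ↦ hk (hc hmem), ?_⟩
    rw [← hsum, Finsupp.linearCombination_apply, Finsupp.sum_fintype]
    exact fun _ ↦ zero_smul R _
  choose c hc hsum using hcoeff
  have hA : A = (1 + Matrix.of c) * B := by
    ext i j
    rw [add_mul, one_mul, Matrix.add_apply, Matrix.mul_apply, add_comm, ← sub_eq_iff_eq_add]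
    simpa using (congrFun (hsum i) j).symm
  have hlower : (1 + Matrix.of c).IsLowerTriangular := fun i j hij ↦ by
    have hij : i < j := hij
    simp [hij.ne, hc i j hij.not_gt]
  have hdiag : ∀ i, (1 + Matrix.of c) i i = 1 := fun i ↦ by simp [hc i i (lt_irrefl i)]
  rw [hA, Matrix.det_mul, Matrix.det_of_isLowerTriangular _ hlower]
  simp only [hdiag, Finset.prod_const_one, one_mul]

lemma abs_det_le_factorial_mul_prod {R n : Type*} [CommRing R] [LinearOrder R]
    [IsStrictOrderedRing R] [Fintype n] [DecidableEq n] {M : Matrix n n R} {B : n → R}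
    (h : ∀ i j, |M i j| ≤ B i) : |M.det| ≤ (Fintype.card n).factorial * ∏ i, B i := by
  calc |M.det| ≤ ∑ σ : Equiv.Perm n, |Equiv.Perm.sign σ • ∏ i, M.transpose (σ i) i| := by
        rw [← Matrix.det_transpose, Matrix.det_apply]
        exact Finset.abs_sum_le_sum_abs _ _
    _ = ∑ σ : Equiv.Perm n, ∏ i, |M i (σ i)| := by
        refine Finset.sum_congr rfl fun σ _ ↦ ?_
        rcases Int.units_eq_one_or (Equiv.Perm.sign σ) with hσ | hσ <;> simp [hσ, Finset.abs_prod]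
    _ ≤ ∑ _σ : Equiv.Perm n, ∏ i, B i := by gcongr; exact h _ _
    _ = (Fintype.card n).factorial * ∏ i, B i := by
        rw [Finset.sum_const, Finset.card_univ, Fintype.card_perm, nsmul_eq_mul]

lemma exists_strictMono_one_le_factorial_mul_prod {n : ℕ} {z : ℕ → Fin n → ℤ} {B : ℕ → ℝ}
    (hspan : Submodule.span ℚ (Set.range fun i t ↦ (z i t : ℚ)) = ⊤)
    (hB : ∀ i, ∃ u : Fin n → ℚ,
      (u - fun t ↦ (z i t : ℚ)) ∈ Submodule.span ℚ ((fun i t ↦ (z i t : ℚ)) '' Set.Iio i) ∧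
        ∀ t, |(u t : ℝ)| ≤ B i) :
    ∃ j : Fin n → ℕ, StrictMono j ∧ 1 ≤ n.factorial * ∏ k, B (j k) := by
  choose u hu hB using hB
  obtain ⟨e⟩ := nonempty_orderIso_fin_jumpSet hspan
  rw [Module.finrank_fin_fun] at e
  let Z : Matrix (Fin n) (Fin n) ℤ := .of fun k t ↦ z (e k) t
  let U : Matrix (Fin n) (Fin n) ℚ := .of fun k ↦ u (e k)
  have hUZ : U.det = (Z.det : ℚ) := by
    have hdet : U.det = (Z.map (Int.cast : ℤ → ℚ)).det :=
      det_eq_det_of_sub_mem_span_image_Iio fun k ↦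
        span_image_Iio_le_of_orderIso_jumpSet e k (hu (e k))
    rw [hdet, Int.cast_det]
  have hZ : Z.det ≠ 0 := by
    have hli : LinearIndependent ℚ (Z.map (Int.cast : ℤ → ℚ)).row :=
      (linearIndepOn_jumpSet _).linearIndependent.comp e e.injective
    rw [Matrix.linearIndependent_rows_iff_isUnit, Matrix.isUnit_iff_isUnit_det,
      ← Int.cast_det] at hli
    exact_mod_cast hli.ne_zero
  refine ⟨fun k ↦ e k, fun k l hkl ↦ e.strictMono hkl, ?_⟩
  calc (1 : ℝ) ≤ |(Z.det : ℝ)| := by exact_mod_cast Int.one_le_abs hZ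
    _ = |(U.map (Rat.cast : ℚ → ℝ)).det| := by
        rw [← Rat.cast_det, hUZ, Rat.cast_intCast]
    _ ≤ n.factorial * ∏ k, B (e k) := by
        simpa using abs_det_le_factorial_mul_prod
          (M := U.map (Rat.cast : ℚ → ℝ)) fun k t ↦ hB (e k) t

end Determinant

section GrowthSum

lemma sum_comp_strictMono_le {ℓ b : ℕ → ℝ} {A H r δ : ℝ} (hℓ : Monotone ℓ) (hH : 0 ≤ H)
    (hr : 0 ≤ r) (hgrowth : ∀ i, r * ℓ (i + 1) ≤ ℓ i) (hb : ∀ i, b i ≤ ℓ i + A)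
    (hstep : ∀ i, b (i + 1) ≤ (1 - H) * ℓ (i + 1) - ℓ i - δ) {m : ℕ}
    (hm : H * ∑ i ∈ Finset.range m, r ^ i ≤ 1) {j : Fin (m + 1) → ℕ} (hj : StrictMono j) :
    ∑ k, b (j k) ≤
      (1 - H * ∑ i ∈ Finset.range m, r ^ i) * ℓ (j (Fin.last m)) + A - m * δ := by
  induction m with
  | zero => simpa using hb (j 0)
  | succ m ih =>
    have hgeom : 0 ≤ H * ∑ i ∈ Finset.range m, r ^ i := by positivity
    have hm' : H * ∑ i ∈ Finset.range m, r ^ i ≤ 1 := by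
      refine le_trans ?_ hm
      gcongr
      simp
    have hsum := ih hm' (hj.comp Fin.strictMono_castSucc)
    obtain ⟨p, hp⟩ : ∃ p, j (Fin.last (m + 1)) = p + 1 :=
      Nat.exists_eq_succ_of_ne_zero (hj (Fin.last_pos)).ne_bot
    have hjp : j (Fin.last m).castSucc ≤ p := by
      have := hj (Fin.castSucc_lt_last (Fin.last m))
      omega
    have hlast : (1 - H * ∑ i ∈ Finset.range m, r ^ i) * ℓ (j (Fin.last m).castSucc) ≤
        (1 - H * ∑ i ∈ Finset.range m, r ^ i) * ℓ p :=
      mul_le_mul_of_nonneg_left (hℓ hjp) (sub_nonneg.mpr hm')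
    have hpred : H * (∑ i ∈ Finset.range m, r ^ i) * (r * ℓ (p + 1)) ≤
        H * (∑ i ∈ Finset.range m, r ^ i) * ℓ p :=
      mul_le_mul_of_nonneg_left (hgrowth p) hgeom
    rw [Fin.sum_univ_castSucc, geom_sum_succ, hp]
    simp only [Function.comp_apply] at hsum
    push_cast
    linarith [hstep p]

end GrowthSum

section RecordMin

variable {α : Type*} [LinearOrder α] {L : ℕ → α} {n : ℕ}

/-- `n ≥ 1` is a strict record minimum of `L`, whose value at `0` is ignored. For
`L n = ‖nξ - ℤ^d‖` the record minima are the denominators of the best approximations to `ξ`. -/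
def IsRecordMin (L : ℕ → α) (n : ℕ) : Prop :=
  0 < n ∧ ∀ k, 0 < k → k < n → L n < L k

lemma exists_isRecordMin_le (hn : 0 < n) : ∃ m ≤ n, IsRecordMin L m ∧ L m ≤ L n := by
  induction n using Nat.strong_induction_on with
  | _ n ih =>
    by_cases hrec : IsRecordMin L n
    · exact ⟨n, le_rfl, hrec, le_rfl⟩
    · simp only [IsRecordMin, hn, true_and, not_forall, not_lt] at hrec
      obtain ⟨k, hk, hkn, hLk⟩ := hrec
      obtain ⟨m, hmk, hm, hLm⟩ := ih k hkn hk
      exact ⟨m, hmk.trans hkn.le, hm, hLm.trans hLk⟩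

lemma infinite_setOf_isRecordMin (hL : ∀ n > 0, ∃ m > 0, L m < L n) :
    {n | IsRecordMin L n}.Infinite := by
  refine Set.infinite_of_forall_exists_gt fun n ↦ ?_
  obtain ⟨k, hk, hkmin⟩ := Finset.exists_min_image (Finset.Icc 1 (n + 1)) L ⟨1, by simp⟩
  obtain ⟨m, hm, hmk⟩ := hL k (Finset.mem_Icc.mp hk).1
  obtain ⟨p, -, hp, hpm⟩ := exists_isRecordMin_le (L := L) hm
  refine ⟨p, hp, ?_⟩
  by_contra! hpn
  exact (hkmin p (Finset.mem_Icc.mpr ⟨hp.1, by omega⟩)).not_gt (hpm.trans_lt hmk)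

lemma apply_nth_isRecordMin_le (hinf : {n | IsRecordMin L n}.Infinite) {i k : ℕ} (hk : 0 < k)
    (hlt : k < Nat.nth (IsRecordMin L) (i + 1)) : L (Nat.nth (IsRecordMin L) i) ≤ L k := by
  obtain ⟨m, hmk, hm, hLm⟩ := exists_isRecordMin_le (L := L) hk
  refine le_trans ?_ hLm
  rcases (Nat.le_nth_of_lt_nth_succ (hmk.trans_lt hlt) hm).eq_or_lt with heq | hlt
  · rw [heq]
  · exact ((Nat.nth_mem_of_infinite hinf i).2 m hm.1 hlt).le

end RecordMin

section HomogeneousForm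

open MvPolynomial

variable {σ : Type*} {s : ℕ}

lemma aeval_smul_of_isHomogeneous {R S : Type*} [CommSemiring R] [CommSemiring S] [Algebra R S]
    {g : MvPolynomial σ R} (hg : g.IsHomogeneous s) (c : S) (x : σ → S) :
    aeval (c • x) g = c ^ s * aeval x g := by
  simp only [aeval_def, eval₂_eq, Finset.mul_sum]
  refine Finset.sum_congr rfl fun m hm ↦ ?_
  simp only [Pi.smul_apply, smul_eq_mul, mul_pow, Finset.prod_mul_distrib,
    Finset.prod_pow_eq_pow_sum, ← hg.degree_eq_sum_deg_support hm]
  ring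

lemma aeval_intCast_comp {R : Type*} [CommRing R] (v : σ → ℤ) (g : MvPolynomial σ ℤ) :
    aeval (fun j ↦ (v j : R)) g = ((aeval v g : ℤ) : R) :=
  aeval_algebraMap_apply R v g

lemma norm_intCast_comp [Fintype σ] (v : σ → ℤ) : ‖fun j ↦ (v j : ℝ)‖ = ‖v‖ := by
  simp only [Pi.norm_def, NNReal.coe_inj]
  exact Finset.sup_congr rfl fun j _ ↦ NNReal.eq (Int.norm_cast_real (v j))

lemma exists_forall_abs_aeval_le_mul_norm_pow [Fintype σ] {g : MvPolynomial σ ℤ}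
    (hg : g.IsHomogeneous s) : ∃ C > 0, ∀ v : σ → ℤ, |(aeval v g : ℝ)| ≤ C * ‖v‖ ^ s := by
  have hcont : Continuous fun x : σ → ℝ ↦ aeval x g := by
    simpa only [aeval_eq_eval₂Hom, ← eval_map, coe_eval₂Hom] using
      continuous_eval (map (algebraMap ℤ ℝ) g)
  obtain ⟨C, hC⟩ := (isCompact_closedBall (0 : σ → ℝ) 1).exists_bound_of_continuousOn
    hcont.continuousOn
  refine ⟨max C 1, by positivity, fun v ↦ ?_⟩
  let x : σ → ℝ := fun j ↦ v j
  have hx : ‖x‖ • ‖x‖⁻¹ • x = x := by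
    rcases eq_or_ne x 0 with h0 | h0
    · simp [h0]
    · rw [smul_inv_smul₀ (norm_ne_zero_iff.mpr h0)]
  have hunit : ‖x‖⁻¹ • x ∈ Metric.closedBall (0 : σ → ℝ) 1 := by
    rw [mem_closedBall_zero_iff, norm_smul, norm_inv, norm_norm]
    exact inv_mul_le_one
  calc |(aeval v g : ℝ)| = |aeval x g| := by rw [aeval_intCast_comp]
    _ = ‖x‖ ^ s * |aeval (‖x‖⁻¹ • x) g| := by
        conv_lhs => rw [← hx, aeval_smul_of_isHomogeneous hg, abs_mul, abs_pow, abs_norm]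
    _ ≤ ‖x‖ ^ s * max C 1 := by gcongr; exact (hC _ hunit).trans (le_max_left _ _)
    _ = max C 1 * ‖v‖ ^ s := by rw [mul_comm, norm_intCast_comp]

lemma dvd_aeval_smul_sub_smul {g : MvPolynomial σ ℤ} (hg : g.IsHomogeneous s) {n : ℕ}
    {a : σ → ℤ} (hdvd : (n : ℤ) ∣ aeval a g) (b : σ → ℤ) (m : ℤ) :
    (n : ℤ) ∣ aeval ((n : ℤ) • b - m • a) g := by
  rw [← ZMod.intCast_zmod_eq_zero_iff_dvd, ← aeval_intCast_comp] at hdvd ⊢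
  have hmod : (fun j ↦ ((((n : ℤ) • b - m • a) j : ℤ) : ZMod n)) =
      (-m : ZMod n) • fun j ↦ (a j : ZMod n) := by
    ext j
    simp
  rw [hmod, aeval_smul_of_isHomogeneous hg, hdvd, mul_zero]

lemma exists_forall_le_mul_norm_pow_of_dvd_aeval [Fintype σ] {g : MvPolynomial σ ℤ}
    (hg : g.IsHomogeneous s) (haniso : ∀ v : σ → ℤ, v ≠ 0 → aeval v g ≠ 0) :
    ∃ C > 0, ∀ (n : ℕ) (m : ℤ) (a b : σ → ℤ), (n : ℤ) ∣ aeval a g → (n : ℤ) • b - m • a ≠ 0 →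
      (n : ℝ) ≤ C * ‖(n : ℤ) • b - m • a‖ ^ s := by
  obtain ⟨C, hC, hbound⟩ := exists_forall_abs_aeval_le_mul_norm_pow hg
  refine ⟨C, hC, fun n m a b hdvd hne ↦ le_trans ?_ (hbound _)⟩
  exact_mod_cast Int.le_of_dvd (abs_pos.mpr (haniso _ hne))
    ((dvd_abs _ _).mpr (dvd_aeval_smul_sub_smul hg hdvd b m))

lemma exists_eventually_one_le_mul_pow_mul_norm [Fintype σ] {g : MvPolynomial σ ℤ}
    (hg : g.IsHomogeneous s) (hs : s ≠ 0) {D : ℤ} {ξ : σ → ℝ} (hξ : aeval ξ g = (D : ℝ)) :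
    ∃ C > 0, ∀ᶠ n : ℕ in atTop, ∀ a : σ → ℤ, aeval a g ≠ D * (n : ℤ) ^ s →
      ‖(n : ℝ) • ξ - fun j ↦ (a j : ℝ)‖ ≤ 1 →
        1 ≤ C * (n : ℝ) ^ (s - 1) * ‖(n : ℝ) • ξ - fun j ↦ (a j : ℝ)‖ := by
  have hdiff : DifferentiableAt ℝ (fun x : σ → ℝ ↦ aeval x g) ξ :=
    (AnalyticAt.aeval_mvPolynomial (f := fun x : σ → ℝ ↦ x)
      (fun j ↦ (ContinuousLinearMap.proj (R := ℝ) j).analyticAt ξ) g).differentiableAt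
  obtain ⟨C, hC, hlip⟩ := hdiff.isBigO_sub.exists_pos
  obtain ⟨ε, hε, hball⟩ := Metric.eventually_nhds_iff.mp hlip.bound
  refine ⟨C, hC, ?_⟩
  filter_upwards [eventually_gt_atTop 0,
    tendsto_natCast_atTop_atTop.eventually_gt_atTop (ε⁻¹ : ℝ)] with n hn hnε a hne hle
  have hn' : (0 : ℝ) < n := by exact_mod_cast hn
  let x : σ → ℝ := fun j ↦ a j
  set δ : ℝ := ‖(n : ℝ) • ξ - x‖
  have hdist : ‖(n : ℝ)⁻¹ • x - ξ‖ = (n : ℝ)⁻¹ * δ := by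
    rw [norm_sub_rev, ← inv_smul_smul₀ hn'.ne' ξ, ← smul_sub, norm_smul, norm_inv, norm_natCast]
  have hnear : dist ((n : ℝ)⁻¹ • x) ξ < ε := by
    rw [dist_eq_norm, hdist]
    calc (n : ℝ)⁻¹ * δ ≤ (n : ℝ)⁻¹ * 1 := by gcongr
      _ < ε := by rw [mul_one]; exact inv_lt_of_inv_lt₀ hε hnε
  have hx := hball hnear
  rw [hdist, aeval_smul_of_isHomogeneous hg, aeval_intCast_comp, hξ, Real.norm_eq_abs] at hx
  calc (1 : ℝ) ≤ |((aeval a g - D * (n : ℤ) ^ s : ℤ) : ℝ)| := by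
        exact_mod_cast Int.one_le_abs (sub_ne_zero.mpr hne)
    _ = (n : ℝ) ^ s * |(n : ℝ)⁻¹ ^ s * (aeval a g : ℤ) - D| := by
        rw [← abs_of_pos (pow_pos hn' s), ← abs_mul]
        push_cast
        rw [mul_sub, ← mul_assoc, ← mul_pow, mul_inv_cancel₀ hn'.ne', one_pow, one_mul,
          mul_comm (D : ℝ)]
    _ ≤ (n : ℝ) ^ s * (C * ((n : ℝ)⁻¹ * δ)) := by gcongr
    _ = C * (n : ℝ) ^ (s - 1) * δ := by
        rw [← pow_sub_one_mul hs]
        field_simp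

lemma exists_map_intCast_eq_smul (f : MvPolynomial σ ℚ) :
    ∃ D : ℤ, D ≠ 0 ∧ ∃ g : MvPolynomial σ ℤ, map (Int.castRingHom ℚ) g = (D : ℚ) • f := by
  let : Algebra (MvPolynomial σ ℤ) (MvPolynomial σ ℚ) := algebraMvPolynomial
  obtain ⟨⟨g, ⟨_, D, hD, rfl⟩⟩, hg⟩ :=
    IsLocalization.surj ((nonZeroDivisors ℤ).map (C (σ := σ))) f
  refine ⟨D, nonZeroDivisors.ne_zero hD, g, ?_⟩
  rw [smul_eq_C_mul, mul_comm]
  simpa using hg.symm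

lemma eval_ne_zero_of_finite_setOf_eval_eq_zero {K : Type*} [Field K] [Infinite K]
    {f : MvPolynomial σ K} (hf : f.IsHomogeneous s)
    (hfin : {x : σ → K | eval x f = 0}.Finite) {v : σ → K} (hv : v ≠ 0) : eval v f ≠ 0 := by
  intro h0
  refine Set.infinite_of_injective_forall_mem (smul_left_injective K hv) (fun c ↦ ?_) hfin
  rw [Set.mem_ofPred_eq, ← aeval_eq_eval, aeval_smul_of_isHomogeneous hf, aeval_eq_eval,
    h0, mul_zero]

lemma exists_integral_anisotropic_form {f : MvPolynomial σ ℚ} (hf : f.IsHomogeneous s)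
    (hfin : {x : σ → ℚ | eval x f = 0}.Finite) {ξ : σ → ℝ} (hξ : aeval ξ f = 1) :
    ∃ (D : ℤ) (g : MvPolynomial σ ℤ), g.IsHomogeneous s ∧
      (∀ v : σ → ℤ, v ≠ 0 → aeval v g ≠ 0) ∧ aeval ξ g = (D : ℝ) := by
  obtain ⟨D, hD, g, hgf⟩ := exists_map_intCast_eq_smul f
  refine ⟨D, g, ?_, fun v hv hgv ↦ ?_, ?_⟩
  · refine .of_map (f := Int.castRingHom ℚ) Int.cast_injective ?_
    rw [hgf, smul_eq_C_mul]
    simpa using (isHomogeneous_C σ (D : ℚ)).mul hf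
  · refine eval_ne_zero_of_finite_setOf_eval_eq_zero hf hfin
      (v := fun j ↦ (v j : ℚ)) (fun h ↦ hv (funext fun j ↦ by simpa using congrFun h j)) ?_
    have h : aeval (fun j ↦ (v j : ℚ)) ((D : ℚ) • f) = 0 := by
      rw [← hgf]
      exact (aeval_map_algebraMap ℚ _ g).trans (by rw [aeval_intCast_comp, hgv, Int.cast_zero])
    simpa [hD] using h
  · have h : aeval ξ ((D : ℚ) • f) = aeval ξ g := by
      rw [← hgf]
      exact aeval_map_algebraMap ℚ ξ g
    simp [← h, hξ]

end HomogeneousForm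

section Approximation

variable {ι : Type*} {d : ℕ}

/-- The integer vector obtained from `n • ξ` by rounding each coordinate; it minimises the
sup-norm distance to `n • ξ`. -/
noncomputable def nearestInt (ξ : ι → ℝ) (n : ℕ) : ι → ℤ :=
  fun j ↦ round (n * ξ j)

/-- The vector `(n, a)` with `a` the integer vector nearest to `n • ξ`, i.e. the integer point of
height `n` closest to the line spanned by `(1, ξ)`. -/
noncomputable def integerVec (ξ : Fin d → ℝ) (n : ℕ) : Fin (d + 1) → ℤ :=
  Fin.cons n (nearestInt ξ n)

/-- The minors `n * a j - p * b j` of the pair `(p, a)`, `(n, b)` of nearest integer points at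
heights `p` and `n`. -/
noncomputable def crossDiff (ξ : ι → ℝ) (p n : ℕ) : ι → ℤ :=
  (n : ℤ) • nearestInt ξ p - (p : ℤ) • nearestInt ξ n

/-- The sup-norm distance from `n • ξ` to the integer lattice. -/
noncomputable def distInt [Fintype ι] (ξ : ι → ℝ) (n : ℕ) : ℝ :=
  ‖(n : ℝ) • ξ - fun j ↦ (nearestInt ξ n j : ℝ)‖

lemma intCast_crossDiff (ξ : ι → ℝ) (p n : ℕ) :
    (fun j ↦ (crossDiff ξ p n j : ℝ)) =
      (p : ℝ) • ((n : ℝ) • ξ - fun j ↦ (nearestInt ξ n j : ℝ)) -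
        (n : ℝ) • ((p : ℝ) • ξ - fun j ↦ (nearestInt ξ p j : ℝ)) := by
  ext j
  simp only [crossDiff, Pi.sub_apply, Pi.smul_apply, smul_eq_mul]
  push_cast
  ring

section Fintype

variable [Fintype ι] (ξ : ι → ℝ)

lemma distInt_nonneg (n : ℕ) : 0 ≤ distInt ξ n := norm_nonneg _

lemma distInt_le_norm_sub (n : ℕ) (a : ι → ℤ) :
    distInt ξ n ≤ ‖(n : ℝ) • ξ - fun j ↦ (a j : ℝ)‖ :=
  (pi_norm_le_iff_of_nonneg (norm_nonneg _)).mpr fun j ↦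
    (round_le _ _).trans (norm_le_pi_norm ((n : ℝ) • ξ - fun j ↦ (a j : ℝ)) j)

lemma distInt_le_one (n : ℕ) : distInt ξ n ≤ 1 :=
  (pi_norm_le_iff_of_nonneg zero_le_one).mpr fun _ ↦
    (abs_sub_round _).trans (by norm_num)

lemma norm_nearestInt_le (n : ℕ) : ‖nearestInt ξ n‖ ≤ n * ‖ξ‖ + 1 := by
  rw [← norm_intCast_comp]
  calc ‖fun j ↦ (nearestInt ξ n j : ℝ)‖
      ≤ ‖(n : ℝ) • ξ‖ + distInt ξ n := norm_le_norm_add_norm_sub _ _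
    _ ≤ n * ‖ξ‖ + 1 := by
        rw [norm_smul, RCLike.norm_natCast]
        gcongr
        exact distInt_le_one ξ n

variable {ξ} {p n : ℕ}

lemma norm_crossDiff_le (hpn : p ≤ n) (hle : distInt ξ n ≤ distInt ξ p) :
    ‖crossDiff ξ p n‖ ≤ 2 * n * distInt ξ p := by
  rw [← norm_intCast_comp, intCast_crossDiff]
  calc _ ≤ p * distInt ξ n + n * distInt ξ p := by
        refine (norm_sub_le _ _).trans_eq ?_
        rw [norm_smul, norm_smul, RCLike.norm_natCast, RCLike.norm_natCast]
        rfl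
    _ ≤ n * distInt ξ p + n * distInt ξ p := by
        gcongr
        exact distInt_nonneg ξ n
    _ = 2 * n * distInt ξ p := by ring

lemma crossDiff_ne_zero (hpn : p < n) (hlt : distInt ξ n < distInt ξ p) :
    crossDiff ξ p n ≠ 0 := by
  intro h0
  have hvec := intCast_crossDiff ξ p n
  simp only [h0, Pi.zero_apply, Int.cast_zero] at hvec
  have hnorm : p * distInt ξ n = n * distInt ξ p := by
    simpa [norm_smul, distInt] using congrArg norm (sub_eq_zero.mp hvec.symm)
  have hn : (0 : ℝ) < n := by exact_mod_cast p.zero_le.trans_lt hpn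
  refine hnorm.not_lt ?_
  calc p * distInt ξ n ≤ n * distInt ξ n := by
        gcongr
        exact distInt_nonneg ξ n
    _ < n * distInt ξ p := by gcongr

end Fintype

variable {ξ : Fin d → ℝ}

lemma distInt_pos [NeZero d] (hirr : TotallyIrrational ξ) {n : ℕ} (hn : n ≠ 0) :
    0 < distInt ξ n := by
  refine (distInt_nonneg ξ n).lt_of_ne' fun h0 ↦ hn ?_
  obtain ⟨j⟩ : Nonempty (Fin d) := inferInstance
  have hval : n * ξ j = (nearestInt ξ n j : ℝ) := by
    simpa using congrFun (sub_eq_zero.mp (norm_eq_zero.mp h0)) j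
  have hcoeff := Fintype.linearIndependent_iff.mp hirr
    (Fin.cons (nearestInt ξ n j) (Pi.single j (-n)))
    (by simp [Fin.sum_univ_succ, Pi.single_apply, Rat.smul_def, apply_ite, ← hval]) j.succ
  simpa using hcoeff

lemma eventually_exists_distInt_lt {γ : ℝ} (h : UnifApprox ξ γ) :
    ∀ᶠ Q : ℝ in atTop, ∃ n : ℕ, 0 < n ∧ (n : ℝ) ≤ Q ∧ distInt ξ n < Q ^ (-γ) := by
  filter_upwards [h, eventually_gt_atTop 0] with Q ⟨n, a, hn, hnQ, ha⟩ hQ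
  lift n to ℕ using by lia
  refine ⟨n, by lia, hnQ, (distInt_le_norm_sub ξ n a).trans_lt ?_⟩
  exact (pi_norm_lt_iff (by positivity)).mpr ha

lemma exists_distInt_lt [NeZero d] (hirr : TotallyIrrational ξ) {γ : ℝ} (hγ : 0 < γ)
    (h : UnifApprox ξ γ) {n : ℕ} (hn : n ≠ 0) : ∃ m > 0, distInt ξ m < distInt ξ n := by
  obtain ⟨Q, hQ, m, hm, -, hlt⟩ := (((tendsto_rpow_neg_atTop hγ).eventually_lt_const
    (distInt_pos hirr hn)).and (eventually_exists_distInt_lt h)).exists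
  exact ⟨m, hm, hlt.trans hQ⟩

lemma tendsto_inv_mul_integerVec (ξ : Fin d → ℝ) (t : Fin (d + 1)) :
    Tendsto (fun n : ℕ ↦ (n : ℝ)⁻¹ * integerVec ξ n t) atTop
      (nhds ((Fin.cons 1 ξ : Fin (d + 1) → ℝ) t)) := by
  have hcoord : ∀ n : ℕ, |(integerVec ξ n t : ℝ) - n * (Fin.cons 1 ξ : Fin (d + 1) → ℝ) t| ≤ 1 := by
    intro n
    refine Fin.cases (by simp [integerVec]) (fun j ↦ ?_) t
    simp only [integerVec, nearestInt, Fin.cons_succ]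
    rw [abs_sub_comm]
    exact (abs_sub_round _).trans (by norm_num)
  refine tendsto_iff_norm_sub_tendsto_zero.mpr <| squeeze_zero' (.of_forall fun _ ↦ norm_nonneg _)
    ?_ tendsto_inv_atTop_nhds_zero_nat
  filter_upwards [eventually_ne_atTop 0] with n hn
  have hn' : (n : ℝ) ≠ 0 := by exact_mod_cast hn
  calc ‖(n : ℝ)⁻¹ * integerVec ξ n t - (Fin.cons 1 ξ : Fin (d + 1) → ℝ) t‖
      = |(n : ℝ)⁻¹ * (integerVec ξ n t - n * (Fin.cons 1 ξ : Fin (d + 1) → ℝ) t)| := by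
        rw [mul_sub, inv_mul_cancel_left₀ hn', Real.norm_eq_abs]
    _ = (n : ℝ)⁻¹ * |integerVec ξ n t - n * (Fin.cons 1 ξ : Fin (d + 1) → ℝ) t| := by
        rw [abs_mul, abs_of_nonneg (by positivity)]
    _ ≤ (n : ℝ)⁻¹ := mul_le_of_le_one_right (by positivity) (hcoord n)

lemma span_range_integerVec_eq_top (hirr : TotallyIrrational ξ) {q : ℕ → ℕ}
    (hq : Tendsto q atTop atTop) :
    Submodule.span ℚ (Set.range fun i t ↦ (integerVec ξ (q i) t : ℚ)) = ⊤ := by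
  by_contra hne
  obtain ⟨φ, hφ, hker⟩ := Submodule.exists_le_ker_of_lt_top _ (lt_top_iff_ne_top.mpr hne)
  let c : Fin (d + 1) → ℚ := fun t ↦ φ fun u ↦ if t = u then 1 else 0
  have hφc : ∀ x, φ x = ∑ t, x t * c t := φ.pi_apply_eq_sum_univ
  have hzero : ∀ i, ∑ t, (integerVec ξ (q i) t : ℝ) * c t = 0 := by
    intro i
    have h := hker (Submodule.subset_span ⟨i, rfl⟩)
    rw [LinearMap.mem_ker, hφc] at h
    exact_mod_cast h
  have hlim : Tendsto (fun i ↦ ∑ t, (q i : ℝ)⁻¹ * integerVec ξ (q i) t * c t) atTop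
      (nhds (∑ t, (Fin.cons 1 ξ : Fin (d + 1) → ℝ) t * c t)) :=
    tendsto_finsetSum _ fun t _ ↦ ((tendsto_inv_mul_integerVec ξ t).comp hq).mul_const _
  have hrel : ∑ t, c t • (Fin.cons 1 ξ : Fin (d + 1) → ℝ) t = 0 := by
    simp only [Rat.smul_def, mul_comm (c _ : ℝ)]
    refine tendsto_nhds_unique hlim (tendsto_const_nhds.congr fun i ↦ ?_)
    simp only [mul_assoc, ← Finset.mul_sum, hzero, mul_zero]
  have hc := Fintype.linearIndependent_iff.mp hirr c hrel
  exact hφ (LinearMap.ext fun x ↦ by simp [hφc, hc])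

end Approximation

section UniformApproxSeq

open Asymptotics MvPolynomial

variable {ι : Type*} [Fintype ι] {η : ℝ} {q : ℕ → ℕ} {s : ℕ}

/-- The properties of the denominators `q` of the best approximations to a vector `ξ` whose uniform
exponent exceeds `η`: they increase, the distances to the integer lattice decrease, and the
distance at one denominator is negligible compared with the `-η`-th power of the next one. -/
structure IsUniformApproxSeq (ξ : ι → ℝ) (η : ℝ) (q : ℕ → ℕ) : Prop where
  pos : ∀ i, 0 < q i
  strictMono : StrictMono q
  distInt_succ_lt : ∀ i, distInt ξ (q (i + 1)) < distInt ξ (q i)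
  isLittleO_distInt : (fun i ↦ distInt ξ (q i)) =o[atTop] fun i ↦ (q (i + 1) : ℝ) ^ (-η)

lemma isLittleO_half_rpow_neg {γ η : ℝ} (h : η < γ) :
    (fun x : ℝ ↦ (x / 2) ^ (-γ)) =o[atTop] fun x ↦ x ^ (-η) := by
  have hsmall : (fun x : ℝ ↦ x ^ (-γ)) =o[atTop] fun x ↦ x ^ (-η) := by
    refine isLittleO_of_tendsto' ?_ ((tendsto_rpow_neg_atTop (sub_pos.mpr h)).congr' ?_)
    · filter_upwards [eventually_gt_atTop 0] with x hx h0
      exact absurd h0 (Real.rpow_pos_of_pos hx _).ne'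
    · filter_upwards [eventually_gt_atTop 0] with x hx
      rw [← Real.rpow_sub hx]
      congr 1
      ring
  refine (hsmall.const_mul_left ((2 : ℝ) ^ (-γ))⁻¹).congr' ?_ .rfl
  filter_upwards [eventually_ge_atTop 0] with x hx
  rw [Real.div_rpow hx zero_le_two, div_eq_inv_mul]

lemma exists_isUniformApproxSeq {d : ℕ} [NeZero d] {ξ : Fin d → ℝ} (hirr : TotallyIrrational ξ)
    {γ : ℝ} (hγ : 0 < γ) (hηγ : η < γ) (h : UnifApprox ξ γ) : ∃ q, IsUniformApproxSeq ξ η q := by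
  have hinf : {n | IsRecordMin (distInt ξ) n}.Infinite :=
    infinite_setOf_isRecordMin fun n hn ↦ exists_distInt_lt hirr hγ h hn.ne'
  have hrec := Nat.nth_mem_of_infinite hinf
  have hmono : StrictMono (Nat.nth (IsRecordMin (distInt ξ))) := Nat.nth_strictMono hinf
  have htendsto : Tendsto (fun i ↦ (Nat.nth (IsRecordMin (distInt ξ)) (i + 1) : ℝ)) atTop atTop :=
    tendsto_natCast_atTop_atTop.comp (hmono.tendsto_atTop.comp (tendsto_add_atTop_nat 1))
  refine ⟨Nat.nth (IsRecordMin (distInt ξ)), fun i ↦ (hrec i).1, hmono, fun i ↦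
    (hrec (i + 1)).2 _ (hrec i).1 (hmono i.lt_succ_self), ?_⟩
  refine IsBigO.trans_isLittleO (.of_bound' ?_)
    ((isLittleO_half_rpow_neg hηγ).comp_tendsto htendsto)
  filter_upwards [(htendsto.atTop_div_const two_pos).eventually (eventually_exists_distInt_lt h)]
    with i ⟨n, hn, hle, hlt⟩
  have hpos : (0 : ℝ) < Nat.nth (IsRecordMin (distInt ξ)) (i + 1) := by
    exact_mod_cast (hrec (i + 1)).1
  have hnlt : n < Nat.nth (IsRecordMin (distInt ξ)) (i + 1) := by
    exact_mod_cast hle.trans_lt (half_lt_self hpos)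
  rw [Real.norm_of_nonneg (distInt_nonneg ξ _)]
  exact ((apply_nth_isRecordMin_le hinf hn hnlt).trans hlt.le).trans (Real.le_norm_self _)

namespace IsUniformApproxSeq

variable {ξ : ι → ℝ}

lemma eventually_mul_distInt_le (hq : IsUniformApproxSeq ξ η q) {C : ℝ} (hC : 0 < C) :
    ∀ᶠ i in atTop, C * distInt ξ (q i) ≤ (q (i + 1) : ℝ) ^ (-η) := by
  filter_upwards [hq.isLittleO_distInt.def (inv_pos.mpr hC)] with i hi
  rwa [Real.norm_of_nonneg (distInt_nonneg ξ _), Real.norm_of_nonneg (by positivity),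
    le_inv_mul_iff₀ hC] at hi

lemma eventually_mul_norm_crossDiff_le (hq : IsUniformApproxSeq ξ η q) {C : ℝ} (hC : 0 < C) :
    ∀ᶠ i in atTop, C * ‖crossDiff ξ (q i) (q (i + 1))‖ ≤ (q (i + 1) : ℝ) ^ (1 - η) := by
  filter_upwards [hq.eventually_mul_distInt_le (C := C * 2) (by positivity)] with i hi
  have hpos : (0 : ℝ) < q (i + 1) := by exact_mod_cast hq.pos (i + 1)
  calc C * ‖crossDiff ξ (q i) (q (i + 1))‖ ≤ C * (2 * q (i + 1) * distInt ξ (q i)) := by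
        gcongr
        exact norm_crossDiff_le (hq.strictMono i.lt_succ_self).le (hq.distInt_succ_lt i).le
    _ = q (i + 1) * (C * 2 * distInt ξ (q i)) := by ring
    _ ≤ q (i + 1) * (q (i + 1) : ℝ) ^ (-η) := by gcongr
    _ = (q (i + 1) : ℝ) ^ (1 - η) := by
        rw [sub_eq_add_neg, Real.rpow_add hpos, Real.rpow_one]

lemma eventually_not_dvd_aeval (hq : IsUniformApproxSeq ξ η q) {g : MvPolynomial ι ℤ}
    (hg : g.IsHomogeneous s) (haniso : ∀ v : ι → ℤ, v ≠ 0 → aeval v g ≠ 0) (hs : s ≠ 0)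
    (hη : s * (1 - η) < 1) : ∀ᶠ i in atTop, ¬ (q i : ℤ) ∣ aeval (nearestInt ξ (q i)) g := by
  obtain ⟨C, hC, hbound⟩ := exists_forall_le_mul_norm_pow_of_dvd_aeval hg haniso
  rw [← map_add_atTop_eq_nat 1, eventually_map]
  filter_upwards [hq.eventually_mul_norm_crossDiff_le (C := max C 1) (by positivity)] with i hi hdvd
  have hone : (1 : ℝ) < q (i + 1) := by
    exact_mod_cast lt_of_le_of_lt (hq.pos i) (hq.strictMono i.lt_succ_self)
  have hcross := hbound _ _ _ _ hdvd
    (crossDiff_ne_zero (hq.strictMono i.lt_succ_self) (hq.distInt_succ_lt i))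
  refine lt_irrefl (q (i + 1) : ℝ) ?_
  calc (q (i + 1) : ℝ) ≤ C * ‖crossDiff ξ (q i) (q (i + 1))‖ ^ s := hcross
    _ ≤ max C 1 ^ s * ‖crossDiff ξ (q i) (q (i + 1))‖ ^ s := by
        gcongr
        exact (le_max_left C 1).trans (le_self_pow₀ (le_max_right C 1) hs)
    _ ≤ ((q (i + 1) : ℝ) ^ (1 - η)) ^ s := by
        rw [← mul_pow]
        gcongr
    _ = (q (i + 1) : ℝ) ^ (s * (1 - η)) := by
        rw [← Real.rpow_mul_natCast (by positivity), mul_comm]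
    _ < q (i + 1) := by simpa using Real.rpow_lt_rpow_of_exponent_lt hone hη

lemma eventually_mul_log_succ_le (hq : IsUniformApproxSeq ξ η q) {g : MvPolynomial ι ℤ}
    (hg : g.IsHomogeneous s) (haniso : ∀ v : ι → ℤ, v ≠ 0 → aeval v g ≠ 0) {D : ℤ}
    (hξ : aeval ξ g = (D : ℝ)) (hs : s ≠ 0) (hη : s * (1 - η) < 1) :
    ∀ᶠ i in atTop, η * Real.log (q (i + 1)) ≤ (s - 1) * Real.log (q i) := by
  obtain ⟨C, hC, hoff⟩ := exists_eventually_one_le_mul_pow_mul_norm hg hs hξ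
  filter_upwards [hq.strictMono.tendsto_atTop.eventually hoff, hq.eventually_mul_distInt_le hC,
    hq.eventually_not_dvd_aeval hg haniso hs hη] with i hoff hle hndvd
  have hpos : (0 : ℝ) < q i := by exact_mod_cast hq.pos i
  have hpos' : (0 : ℝ) < q (i + 1) := by exact_mod_cast hq.pos (i + 1)
  have hne : aeval (nearestInt ξ (q i)) g ≠ D * (q i : ℤ) ^ s := fun h ↦
    hndvd (h ▸ dvd_mul_of_dvd_right (dvd_pow_self _ hs) D)
  have hpow : 1 ≤ (q i : ℝ) ^ (s - 1) * (q (i + 1) : ℝ) ^ (-η) :=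
    calc (1 : ℝ) ≤ C * (q i : ℝ) ^ (s - 1) * distInt ξ (q i) := hoff _ hne (distInt_le_one ξ _)
      _ = (q i : ℝ) ^ (s - 1) * (C * distInt ξ (q i)) := by ring
      _ ≤ (q i : ℝ) ^ (s - 1) * (q (i + 1) : ℝ) ^ (-η) := by gcongr
  have hlog := Real.log_nonneg hpow
  rw [Real.log_mul (by positivity) (by positivity), Real.log_pow, Real.log_rpow hpos',
    Nat.cast_pred (Nat.pos_of_ne_zero hs)] at hlog
  linarith

end IsUniformApproxSeq

end UniformApproxSeq

section MinorBound

variable {d : ℕ} {ξ : Fin d → ℝ} {η H r : ℝ} {q : ℕ → ℕ}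

lemma abs_integerVec_le {n : ℕ} (hn : 0 < n) (t : Fin (d + 1)) :
    |(integerVec ξ n t : ℝ)| ≤ n * (‖ξ‖ + 1) := by
  have hn' : (1 : ℝ) ≤ n := by exact_mod_cast hn
  refine Fin.cases ?_ (fun j ↦ ?_) t
  · simpa [integerVec] using le_mul_of_one_le_right n.cast_nonneg (by simp)
  · calc |(nearestInt ξ n j : ℝ)| ≤ ‖nearestInt ξ n‖ := by
          simpa [Int.norm_eq_abs] using norm_le_pi_norm (nearestInt ξ n) j
      _ ≤ n * ‖ξ‖ + 1 := norm_nearestInt_le ξ n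
      _ ≤ n * (‖ξ‖ + 1) := by linarith

lemma exists_sub_mem_span_integerVec {p : ℕ} (hp : 0 < p) (n : ℕ) :
    ∃ u : Fin (d + 1) → ℚ,
      (u - fun t ↦ (integerVec ξ n t : ℚ)) ∈ Submodule.span ℚ {fun t ↦ (integerVec ξ p t : ℚ)} ∧
        ∀ t, |(u t : ℝ)| ≤ ‖crossDiff ξ p n‖ / p := by
  have hp' : (p : ℝ) ≠ 0 := by exact_mod_cast hp.ne'
  refine ⟨fun t ↦ integerVec ξ n t - (n / p : ℚ) * integerVec ξ p t,
    Submodule.mem_span_singleton.mpr ⟨-(n / p), by ext t; simp⟩, fun t ↦ ?_⟩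
  refine Fin.cases ?_ (fun j ↦ ?_) t
  · simpa [integerVec, div_mul_cancel₀ _ hp'] using
      div_nonneg (norm_nonneg (crossDiff ξ p n)) p.cast_nonneg
  · have hminor : (nearestInt ξ n j - n / p * nearestInt ξ p j : ℝ) = -crossDiff ξ p n j / p := by
      simp only [crossDiff, Pi.sub_apply, Pi.smul_apply, smul_eq_mul]
      push_cast
      field_simp
      ring
    simp only [integerVec, Fin.cons_succ]
    push_cast
    rw [hminor, abs_div, abs_neg, Nat.abs_cast]
    gcongr
    simpa [Int.norm_eq_abs] using norm_le_pi_norm (crossDiff ξ p n) j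

/-- An upper bound for the coordinates of the `i`-th of the integer points at heights `q`, after a
multiple of its predecessor has been subtracted so as to clear the height coordinate. -/
noncomputable def reducedBound (ξ : Fin d → ℝ) (q : ℕ → ℕ) : ℕ → ℝ
  | 0 => q 0 * (‖ξ‖ + 1)
  | i + 1 => ‖crossDiff ξ (q i) (q (i + 1))‖ / q i

lemma reducedBound_nonneg (ξ : Fin d → ℝ) (q : ℕ → ℕ) : ∀ i, 0 ≤ reducedBound ξ q i
  | 0 => by rw [reducedBound]; positivity
  | i + 1 => by rw [reducedBound]; positivity

lemma exists_strictMono_one_le_factorial_mul_prod_reducedBound (hirr : TotallyIrrational ξ)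
    (hq : ∀ i, 0 < q i) (htop : Tendsto q atTop atTop) :
    ∃ j : Fin (d + 1) → ℕ, StrictMono j ∧
      1 ≤ (d + 1).factorial * ∏ k, reducedBound ξ q (j k) := by
  refine exists_strictMono_one_le_factorial_mul_prod (span_range_integerVec_eq_top hirr htop) ?_
  rintro (_ | i)
  · exact ⟨fun t ↦ integerVec ξ (q 0) t, by simp, fun t ↦ by
      simpa [reducedBound] using abs_integerVec_le (hq 0) t⟩
  · obtain ⟨u, hu, hbound⟩ := exists_sub_mem_span_integerVec (ξ := ξ) (hq i) (q (i + 1))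
    refine ⟨u, Submodule.span_mono ?_ hu, hbound⟩
    exact Set.singleton_subset_iff.mpr ⟨i, i.lt_succ_self, rfl⟩

lemma mul_log_le_of_norm_crossDiff_le (hirr : TotallyIrrational ξ) (hmono : StrictMono q)
    (hpos : 0 < q 0) (hH : 0 ≤ H) (hHη : H ≤ η) (hr : 0 ≤ r)
    (hgeom : H * ∑ i ∈ Finset.range d, r ^ i = 1)
    (hgrowth : ∀ i, r * Real.log (q (i + 1)) ≤ Real.log (q i))
    (hcross : ∀ i, ‖crossDiff ξ (q i) (q (i + 1))‖ ≤ (q (i + 1) : ℝ) ^ (1 - η)) :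
    d * ((η - H) * Real.log (q 0)) ≤ Real.log (d + 1).factorial + Real.log (‖ξ‖ + 1) := by
  have hq : ∀ i, 0 < q i := fun i ↦ hpos.trans_le (hmono.monotone i.zero_le)
  have hq' : ∀ i, (0 : ℝ) < q i := fun i ↦ by exact_mod_cast hq i
  let ℓ : ℕ → ℝ := fun i ↦ Real.log (q i)
  let b : ℕ → ℝ
    | 0 => ℓ 0 + Real.log (‖ξ‖ + 1)
    | i + 1 => (1 - η) * ℓ (i + 1) - ℓ i
  have hexp : ∀ i, reducedBound ξ q i ≤ Real.exp (b i) := by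
    rintro (_ | i)
    · rw [Real.exp_add, Real.exp_log (hq' 0), Real.exp_log (by positivity), reducedBound]
    · rw [Real.exp_sub, mul_comm, Real.exp_mul, Real.exp_log (hq' _), Real.exp_log (hq' _)]
      exact div_le_div_of_nonneg_right (hcross i) (hq' i).le
  obtain ⟨j, hj, hprod⟩ :=
    exists_strictMono_one_le_factorial_mul_prod_reducedBound hirr hq hmono.tendsto_atTop
  have hlower : 0 ≤ Real.log (d + 1).factorial + ∑ k, b (j k) := by
    rw [← Real.log_exp (∑ k, b (j k)), Real.exp_sum,
      ← Real.log_mul (by positivity) (by positivity)]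
    refine Real.log_nonneg (hprod.trans ?_)
    gcongr with k
    · exact fun k _ ↦ reducedBound_nonneg ξ q (j k)
    · exact hexp (j k)
  have hℓ : Monotone ℓ := fun i k hik ↦
    Real.log_le_log (hq' i) (by exact_mod_cast hmono.monotone hik)
  have hℓ0 : ∀ i, 0 ≤ ℓ i := fun i ↦ Real.log_natCast_nonneg _
  have hb : ∀ i, b i ≤ ℓ i + Real.log (‖ξ‖ + 1)
    | 0 => le_rfl
    | i + 1 => by
      have hA : 0 ≤ Real.log (‖ξ‖ + 1) := Real.log_nonneg (by simp)
      linarith [mul_nonneg (hH.trans hHη) (hℓ0 (i + 1)), hℓ0 i]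
  have hstep : ∀ i, b (i + 1) ≤ (1 - H) * ℓ (i + 1) - ℓ i - (η - H) * ℓ 0 := fun i ↦ by
    linarith [mul_le_mul_of_nonneg_left (hℓ (i + 1).zero_le) (sub_nonneg.mpr hHη)]
  have hupper := sum_comp_strictMono_le hℓ hH hr hgrowth hb hstep hgeom.le hj
  rw [hgeom, sub_self, zero_mul, zero_add] at hupper
  linarith

lemma IsUniformApproxSeq.frequently_log_lt_mul_log_succ (hq : IsUniformApproxSeq ξ η q)
    (hirr : TotallyIrrational ξ) (hH : 0 ≤ H) (hHη : H < η) (hr : 0 ≤ r)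
    (hgeom : H * ∑ i ∈ Finset.range d, r ^ i = 1) :
    ∃ᶠ i in atTop, Real.log (q i) < r * Real.log (q (i + 1)) := by
  intro hgrowth
  have hd : (0 : ℝ) < d := by
    rcases d.eq_zero_or_pos with rfl | hd
    · simp at hgeom
    · exact_mod_cast hd
  have hlarge : Tendsto (fun i ↦ d * ((η - H) * Real.log (q i))) atTop atTop :=
    ((Real.tendsto_log_atTop.comp (tendsto_natCast_atTop_atTop.comp
      hq.strictMono.tendsto_atTop)).const_mul_atTop (sub_pos.mpr hHη)).const_mul_atTop hd
  obtain ⟨N, hN⟩ := eventually_atTop.mp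
    ((hlarge.eventually_gt_atTop (Real.log (d + 1).factorial + Real.log (‖ξ‖ + 1))).and
      (hgrowth.and (hq.eventually_mul_norm_crossDiff_le one_pos)))
  refine (hN N le_rfl).1.not_ge (mul_log_le_of_norm_crossDiff_le (q := fun i ↦ q (N + i)) hirr
    (fun _ _ hij ↦ hq.strictMono (Nat.add_lt_add_left hij N)) (hq.pos N) hH hHη.le hr hgeom
    (fun i ↦ ?_) fun i ↦ ?_)
  · exact not_lt.mp (hN (N + i) (N.le_add_right i)).2.1
  · simpa only [one_mul, add_assoc] using (hN (N + i) (N.le_add_right i)).2.2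

end MinorBound

section Root

variable {d : ℕ} {H : ℝ}

lemma mul_geom_sum_eq_one_of_root {r : ℝ} (hd : d ≠ 0)
    (hroot : 1 - H = H * ∑ k ∈ Finset.range (d - 1), r ^ (k + 1)) :
    H * ∑ i ∈ Finset.range d, r ^ i = 1 := by
  obtain ⟨e, rfl⟩ := Nat.exists_eq_succ_of_ne_zero hd
  rw [Nat.succ_sub_one] at hroot
  rw [Finset.sum_range_succ', pow_zero, mul_add, ← hroot]
  ring

lemma mul_one_sub_lt_one_of_mul_geom_sum_eq_one {a : ℝ} (ha : 0 < a) (hH : 0 < H)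
    (hgeom : H * ∑ i ∈ Finset.range d, (H / a) ^ i = 1) : (a + 1) * (1 - H) < 1 := by
  by_contra! hle
  have hH_le : H ≤ 1 - H / a := by
    rw [le_sub_iff_add_le, ← le_sub_iff_add_le', div_le_iff₀ ha]
    linarith
  have hlt : H * ∑ i ∈ Finset.range d, (H / a) ^ i < 1 :=
    calc H * ∑ i ∈ Finset.range d, (H / a) ^ i
        ≤ (1 - H / a) * ∑ i ∈ Finset.range d, (H / a) ^ i := by gcongr
      _ = 1 - (H / a) ^ d := mul_neg_geom_sum _ _
      _ < 1 := sub_lt_self _ (by positivity)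
  exact hlt.ne hgeom

end Root

/-- Theorem 2a: if `f` is a homogeneous polynomial of degree `s ≥ 2` in `d ≥ 2` variables
with rational coefficients having only finitely many rational zeros, and `ξ` is totally
irrational with `f(ξ) = 1`, then `ω̂(ξ) ≤ H_{d-1,s}`, where `H_{d-1,s}` is the unique
positive root of `1 - x = x · Σ_{k=1}^{d-1} (x/(s-1))^k`. -/
theorem uniform_exponent_le_of_on_homogeneous_hypersurface
    (d s : ℕ) (hd : 2 ≤ d) (hs : 2 ≤ s)
    (f : MvPolynomial (Fin d) ℚ) (hhom : f.IsHomogeneous s)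
    (hfin : {x : Fin d → ℚ | MvPolynomial.eval x f = 0}.Finite)
    (ξ : Fin d → ℝ)
    (hirr : TotallyIrrational ξ)
    (hsurf : MvPolynomial.aeval ξ f = 1)
    (H : ℝ) (hHpos : 0 < H)
    (hHroot : 1 - H = H * ∑ k ∈ Finset.range (d - 1), (H / ((s : ℝ) - 1)) ^ (k + 1)) :
    ∀ γ : ℝ, UnifApprox ξ γ → γ ≤ H := by
  intro γ hγ
  by_contra! hHγ
  obtain ⟨η, hHη, hηγ⟩ := exists_between hHγ
  have : NeZero d := ⟨by lia⟩
  have hs1 : (0 : ℝ) < s - 1 := sub_pos.mpr (by exact_mod_cast hs)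
  have hgeom := mul_geom_sum_eq_one_of_root (NeZero.ne d) hHroot
  have hη : s * (1 - η) < 1 :=
    calc s * (1 - η) ≤ s * (1 - H) := by gcongr
      _ < 1 := by simpa using mul_one_sub_lt_one_of_mul_geom_sum_eq_one hs1 hHpos hgeom
  obtain ⟨D, g, hg, haniso, hξ⟩ := exists_integral_anisotropic_form hhom hfin hsurf
  obtain ⟨q, hq⟩ := exists_isUniformApproxSeq hirr (hHpos.trans hHγ) hηγ hγ
  refine hq.frequently_log_lt_mul_log_succ hirr hHpos.le hHη (by positivity) hgeom ?_
  filter_upwards [hq.eventually_mul_log_succ_le hg haniso hξ (by lia) hη] with i hgrowth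
  rw [not_lt, div_mul_eq_mul_div, div_le_iff₀' hs1]
  exact (mul_le_mul_of_nonneg_right hHη.le (Real.log_natCast_nonneg _)).trans hgrowth
end

section
/- Let f be an arbitrary polynomial of degree s ≥ 2 in d variables with rational coefficients such that the set {x ∈ ℚ^d : f(x) = 1} is finite, and let ξ = (ξ₁,…,ξ_d) ∈ ℝ^d \ ℚ^d satisfy f(ξ) = 1. Then the ordinary Diophantine exponent of ξ satisfies ω(ξ) ≤ s − 1. -/
/-- The "ordinary approximation at exponent `γ`" property: there are infinitely many
integer solutions `(q, a₁, …, a_m)` with `q > 0` of `max_j |q θ_j - a_j| < q^(-γ)`.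
The ordinary Diophantine exponent `ω(θ)` is the supremum of such `γ`. -/
def OrdApprox {m : ℕ} (θ : Fin m → ℝ) (γ : ℝ) : Prop :=
  {p : ℤ × (Fin m → ℤ) | 0 < p.1 ∧
    ∀ j, |(p.1 : ℝ) * θ j - (p.2 j : ℝ)| < (p.1 : ℝ) ^ (-γ)}.Infinite

/-!
This is Liouville's argument. If `f` has rational coefficients and degree `s`, then a nonzero value
of `f` at a rational point with common denominator `q` is at least a constant times `q ^ (-s)`. Near
a zero `ξ` of `f` the value is at most a constant times the distance to `ξ`. So rational points at
which `f` does not vanish stay at distance at least a constant times `q ^ (-s)` from `ξ`, whereas an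
approximation with exponent `γ` comes within `q ^ (-γ - 1)`, for arbitrarily large `q`. A
hypersurface with finitely many rational points has none of them near an irrational `ξ`.
-/

open Filter MvPolynomial Topology
open scoped nonZeroDivisors

section ClearDenominators

variable {R K σ : Type*} [CommRing R] [Field K] [Algebra R K]

lemma isInteger_pow_mul_prod_div_pow {q : R} (hq : algebraMap R K q ≠ 0) (a : σ → R) {m : σ →₀ ℕ}
    {n : ℕ} (hm : m.degree ≤ n) :
    IsLocalization.IsInteger R
      (algebraMap R K q ^ n * m.prod fun i k ↦ (algebraMap R K (a i) / algebraMap R K q) ^ k) := by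
  refine ⟨q ^ (n - m.degree) * m.prod fun i k ↦ a i ^ k, ?_⟩
  have hprod : (m.prod fun i k ↦ (algebraMap R K (a i) / algebraMap R K q) ^ k) =
      (m.prod fun i k ↦ algebraMap R K (a i) ^ k) / algebraMap R K q ^ m.degree := by
    simp only [Finsupp.prod, Finsupp.degree_apply, div_pow, Finset.prod_div_distrib,
      Finset.prod_pow_eq_pow_sum]
  rw [hprod, ← Nat.sub_add_cancel hm, Nat.add_sub_cancel, pow_add, map_mul, map_pow,
    map_finsuppProd]
  simp only [map_pow]
  field_simp

variable (R) in
lemma exists_forall_isInteger_mul_pow_totalDegree_mul_eval [IsFractionRing R K]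
    (f : MvPolynomial σ K) :
    ∃ D : R⁰, ∀ (q : R) (a : σ → R), algebraMap R K q ≠ 0 →
      IsLocalization.IsInteger R (algebraMap R K D * (algebraMap R K q ^ f.totalDegree *
        eval (fun i ↦ algebraMap R K (a i) / algebraMap R K q) f)) := by
  obtain ⟨D, hD⟩ := IsLocalization.exist_integer_multiples R⁰ f.support f.coeff
  refine ⟨D, fun q a hq ↦ ?_⟩
  rw [eval_eq, Finset.mul_sum, Finset.mul_sum]
  refine Subsemiring.sum_mem _ fun m hm ↦ ?_
  have hcoeff : IsLocalization.IsInteger R (algebraMap R K D * f.coeff m) := by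
    simpa only [Algebra.smul_def] using hD m hm
  have hmonomial := isInteger_pow_mul_prod_div_pow hq a (le_totalDegree hm)
  rw [mul_left_comm (_ ^ _), ← mul_assoc]
  exact IsLocalization.isInteger_mul hcoeff hmonomial

end ClearDenominators

section Liouville

variable {σ : Type*}

lemma exists_pos_forall_le_pow_totalDegree_mul_abs_eval (f : MvPolynomial σ ℚ) :
    ∃ c : ℚ, 0 < c ∧ ∀ (q : ℤ) (a : σ → ℤ), 0 < q → eval (fun i ↦ (a i : ℚ) / q) f ≠ 0 →
      c ≤ (q : ℚ) ^ f.totalDegree * |eval (fun i ↦ (a i : ℚ) / q) f| := by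
  obtain ⟨D, hD⟩ := exists_forall_isInteger_mul_pow_totalDegree_mul_eval ℤ f
  have hD_pos : 0 < |(D : ℚ)| := by simp
  refine ⟨1 / |(D : ℚ)|, by positivity, fun q a hq hne ↦ ?_⟩
  have hq' : (0 : ℚ) < q := mod_cast hq
  obtain ⟨n, hn⟩ := hD q a (by simpa using hq.ne')
  simp only [eq_intCast] at hn
  have hn_ne : n ≠ 0 := by
    rintro rfl
    simp [hne, hq.ne'] at hn
  rw [div_le_iff₀' hD_pos]
  calc (1 : ℚ) ≤ |(n : ℚ)| := mod_cast Int.one_le_abs hn_ne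
    _ = |(D : ℚ)| * ((q : ℚ) ^ f.totalDegree * |eval (fun i ↦ (a i : ℚ) / q) f|) := by
      rw [hn, abs_mul, abs_mul, abs_pow, abs_of_pos hq']

lemma aeval_ratCast_comp {K : Type*} [Field K] [CharZero K] (y : σ → ℚ) (f : MvPolynomial σ ℚ) :
    aeval (Rat.cast ∘ y : σ → K) f = (eval y f : K) := by
  rw [← coe_aeval_eq_eval]
  exact aeval_algebraMap_apply K y f

variable [Fintype σ] {ξ : σ → ℝ} {f : MvPolynomial σ ℚ}

lemma exists_pos_eventually_abs_aeval_le_mul_dist (hf : aeval ξ f = 0) :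
    ∃ C : ℝ, 0 < C ∧ ∀ᶠ x in 𝓝 ξ, |aeval x f| ≤ C * dist x ξ := by
  have hdiff : DifferentiableAt ℝ (fun x : σ → ℝ ↦ aeval x f) ξ :=
    (AnalyticAt.aeval_mvPolynomial (𝕜 := ℝ) (f := id)
      (fun i ↦ (ContinuousLinearMap.proj (R := ℝ) i).analyticAt ξ) f).differentiableAt
  obtain ⟨C, hC, hbound⟩ := hdiff.isBigO_sub.exists_pos
  refine ⟨C, hC, hbound.bound.mono fun x hx ↦ ?_⟩
  simpa only [hf, sub_zero, Real.norm_eq_abs, dist_eq_norm] using hx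

lemma exists_pos_forall_le_pow_totalDegree_mul_dist (hf : aeval ξ f = 0)
    (hξ : ξ ∉ closure ((Rat.cast ∘ ·) '' {x : σ → ℚ | eval x f = 0})) :
    ∃ c : ℝ, 0 < c ∧ ∀ (q : ℤ) (a : σ → ℤ), 0 < q →
      c ≤ (q : ℝ) ^ f.totalDegree * dist (fun i ↦ (a i : ℝ) / q) ξ := by
  obtain ⟨b, hb, hvalue⟩ := exists_pos_forall_le_pow_totalDegree_mul_abs_eval f
  obtain ⟨C, hC, hlip⟩ := exists_pos_eventually_abs_aeval_le_mul_dist hf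
  have hnonzero := isClosed_closure.isOpen_compl.eventually_mem hξ
  obtain ⟨ε, hε, hball⟩ := Metric.eventually_nhds_iff.mp (hlip.and hnonzero)
  refine ⟨min (b / C) ε, by positivity, fun q a hq ↦ ?_⟩
  set x : σ → ℝ := fun i ↦ (a i : ℝ) / q with hx
  have hq_one : (1 : ℝ) ≤ q := mod_cast hq
  rcases lt_or_ge (dist x ξ) ε with hnear | hfar
  · obtain ⟨hx_le, hx_notMem⟩ := hball hnear
    set y : σ → ℚ := fun i ↦ (a i : ℚ) / q with hy
    have hxy : x = Rat.cast ∘ y := by ext i; simp [hx, hy]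
    have hy_ne : eval y f ≠ 0 := fun h ↦ hx_notMem (subset_closure ⟨y, h, hxy.symm⟩)
    have hvalue_y : b ≤ (q : ℚ) ^ f.totalDegree * |eval y f| := hvalue q a hq hy_ne
    refine (min_le_left _ _).trans ((div_le_iff₀' hC).mpr ?_)
    calc (b : ℝ) ≤ (q : ℝ) ^ f.totalDegree * |aeval x f| := by
          rw [hxy, aeval_ratCast_comp]; exact_mod_cast hvalue_y
      _ ≤ (q : ℝ) ^ f.totalDegree * (C * dist x ξ) := by gcongr
      _ = C * ((q : ℝ) ^ f.totalDegree * dist x ξ) := by ring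
  · calc min (b / C) ε ≤ dist x ξ := (min_le_right _ _).trans hfar
      _ ≤ (q : ℝ) ^ f.totalDegree * dist x ξ :=
        le_mul_of_one_le_left dist_nonneg (one_le_pow₀ hq_one)

end Liouville

lemma finite_setOf_forall_abs_sub_intCast_lt {ι : Type*} [Finite ι] (x : ι → ℝ) (r : ℝ) :
    {a : ι → ℤ | ∀ i, |x i - a i| < r}.Finite := by
  refine Set.Finite.pi' (t := fun i ↦ {n : ℤ | |x i - n| < r}) fun i ↦
    (Set.finite_Ioo ⌊x i - r⌋ ⌈x i + r⌉).subset fun n (hn : |x i - n| < r) ↦ ?_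
  obtain ⟨hlt, hgt⟩ := abs_sub_lt_iff.mp hn
  exact ⟨Int.floor_lt.mpr (by linarith), Int.lt_ceil.mpr (by linarith)⟩

namespace OrdApprox

variable {m : ℕ} {θ : Fin m → ℝ} {γ : ℝ}

lemma frequently_atTop (h : OrdApprox θ γ) :
    ∃ᶠ q : ℤ in atTop, ∃ a : Fin m → ℤ, ∀ j, |q * θ j - a j| < (q : ℝ) ^ (-γ) := by
  intro hev
  obtain ⟨N, hN⟩ := eventually_atTop.mp hev
  refine h (Set.Finite.of_finite_fibers Prod.fst ((Set.finite_Icc 0 N).subset ?_) fun q _ ↦ ?_)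
  · rintro _ ⟨⟨q, a⟩, ⟨hq, ha⟩, rfl⟩
    exact ⟨hq.le, le_of_not_ge fun hNq ↦ hN q hNq ⟨a, ha⟩⟩
  · refine ((Set.finite_singleton q).prod (finite_setOf_forall_abs_sub_intCast_lt
      (fun j ↦ q * θ j) ((q : ℝ) ^ (-γ)))).subset ?_
    rintro ⟨_, a⟩ ⟨⟨-, ha⟩, rfl⟩
    exact ⟨rfl, ha⟩

lemma le_sub_one_of_forall_le_rpow_mul_dist (h : OrdApprox θ γ) {c τ : ℝ} (hc : 0 < c)
    (hθ : ∀ (q : ℤ) (a : Fin m → ℤ), 0 < q → c ≤ (q : ℝ) ^ τ * dist (fun j ↦ (a j : ℝ) / q) θ) :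
    γ ≤ τ - 1 := by
  by_contra! hγ
  have hsmall : ∀ᶠ q : ℤ in atTop, (q : ℝ) ^ (-(γ + 1 - τ)) < c :=
    tendsto_intCast_atTop_atTop.eventually
      ((tendsto_rpow_neg_atTop (by linarith)).eventually_lt_const hc)
  obtain ⟨q, ⟨a, ha⟩, hqc, hq⟩ :=
    (h.frequently_atTop.and_eventually (hsmall.and (eventually_gt_atTop 0))).exists
  have hq' : (0 : ℝ) < q := mod_cast hq
  have hdist : dist (fun j ↦ (a j : ℝ) / q) θ ≤ (q : ℝ) ^ (-γ - 1) := by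
    refine (dist_pi_le_iff (by positivity)).mpr fun j ↦ ?_
    rw [dist_comm, Real.dist_eq, Real.rpow_sub_one hq'.ne', le_div_iff₀' hq', ← abs_of_pos hq',
      ← abs_mul, abs_of_pos hq', mul_sub, mul_div_cancel₀ _ hq'.ne']
    exact (ha j).le
  refine hqc.not_ge ?_
  calc c ≤ (q : ℝ) ^ τ * dist (fun j ↦ (a j : ℝ) / q) θ := hθ q a hq
    _ ≤ (q : ℝ) ^ τ * (q : ℝ) ^ (-γ - 1) := by gcongr
    _ = (q : ℝ) ^ (-(γ + 1 - τ)) := by rw [← Real.rpow_add hq']; ring_nf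

end OrdApprox

theorem ordinary_exponent_le_of_on_hypersurface_general {d : ℕ} {f : MvPolynomial (Fin d) ℚ} {c : ℚ}
    {ξ : Fin d → ℝ} (hξ : ξ ∉ closure ((Rat.cast ∘ ·) '' {x : Fin d → ℚ | eval x f = c}))
    (hsurf : aeval ξ f = (c : ℝ)) {γ : ℝ} (hγ : OrdApprox ξ γ) : γ ≤ f.totalDegree - 1 := by
  have hzero : aeval ξ (f - C c) = 0 := by simp [hsurf]
  obtain ⟨b, hb, hdist⟩ := exists_pos_forall_le_pow_totalDegree_mul_dist hzero
    (by simpa only [map_sub, eval_C, sub_eq_zero] using hξ)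
  have hdeg : ((f - C c).totalDegree : ℝ) ≤ f.totalDegree := mod_cast totalDegree_sub_C_le f c
  have hγ_le := hγ.le_sub_one_of_forall_le_rpow_mul_dist hb
    (τ := (f - C c).totalDegree) (by simpa only [Real.rpow_natCast] using hdist)
  linarith

/-- Theorem 2b(i): if `f` is a polynomial of degree `s ≥ 2` in `d` variables with rational
coefficients such that `{x ∈ ℚ^d : f(x) = 1}` is finite, and `ξ ∉ ℚ^d` satisfies
`f(ξ) = 1`, then `ω(ξ) ≤ s - 1`. -/
theorem ordinary_exponent_le_of_on_hypersurface
    (d s : ℕ) (hs : 2 ≤ s)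
    (f : MvPolynomial (Fin d) ℚ) (hdeg : f.totalDegree = s)
    (hfin : {x : Fin d → ℚ | MvPolynomial.eval x f = 1}.Finite)
    (ξ : Fin d → ℝ)
    (hirr : ¬ ∃ x : Fin d → ℚ, (fun i => (x i : ℝ)) = ξ)
    (hsurf : MvPolynomial.aeval ξ f = 1) :
    ∀ γ : ℝ, OrdApprox ξ γ → γ ≤ (s : ℝ) - 1 := by
  have hξ : ξ ∉ closure ((Rat.cast ∘ ·) '' {x : Fin d → ℚ | eval x f = 1}) := by
    rw [(hfin.image _).isClosed.closure_eq]
    exact fun ⟨x, _, hx⟩ ↦ hirr ⟨x, hx⟩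
  exact fun γ hγ ↦
    hdeg ▸ ordinary_exponent_le_of_on_hypersurface_general hξ (by simpa using hsurf) hγ
end

section
/- Let f be an arbitrary polynomial of degree s ≥ 2 in d ≥ 2 variables with rational coefficients such that the set {x ∈ ℚ^d : f(x) = 1} is finite, and let ξ = (ξ₁,…,ξ_d) ∈ ℝ^d be totally irrational with f(ξ) = 1. Then the uniform Diophantine exponent of ξ satisfies ω̂(ξ) ≤ H_{d−1,s}, where H_{d−1,s} is the unique positive root of the equation 1 − x = x · Σ_{k=1}^{d−1} (x/(s−1))^k. -/
open Filter

/-!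
Let `(x_n)` be the sequence of minimal points of `ξ` in `ℤ ^ (d + 1)`, let `L_n` be the rational
line through `x_n`, and let `h` be the logarithm of the height (the covolume of the lattice of
integer points) of a rational subspace. If `γ` is an admissible exponent, then
`h (L_n + L_{n+1}) ≤ (1 - g) h (L_{n+1})` eventually, for every `g < γ`. On the other hand `f - 1`
vanishes at `ξ` but not at rational points near `ξ`, so a Liouville argument bounds the error of
`x_n` from below by a constant times the power `-(s - 1)` of its denominator, which gives
`g h (L_{n+1}) ≤ (s - 1) h (L_n)`.

The height is log-submodular, `h (U + V) + h (U ∩ V) ≤ h U + h V`. Replacing a sequence of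
`k`-dimensional subspaces by the distinct sums of consecutive members, and using submodularity for
two consecutive sums, whose intersection is a member of the old sequence, transports the two
inequalities from dimension `k` to dimension `k + 1` with new constants. As `ξ` is totally
irrational, the lines `L_n` are not eventually contained in a proper subspace, and the process
reaches dimension `d`. There it says `1 - g ∑_{i < d} (g / (s - 1)) ^ i ≥ 0`, which fails for
`g > H_{d-1,s}`.
-/

namespace UniformExponent

section Determinant

open Matrix
open scoped ComplexOrder MatrixOrder

variable {𝕜 α β γ : Type*} [RCLike 𝕜]

lemma one_le_det_one_add [Fintype α] [DecidableEq α] {Q : Matrix α α 𝕜} (hQ : Q.PosSemidef) :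
    1 ≤ (1 + Q).det := by
  set U := hQ.1.eigenvectorUnitary
  have hU : (U : Matrix α α 𝕜) * star (U : Matrix α α 𝕜) = 1 := Unitary.coe_mul_star_self U
  have hdet : (1 + Q).det = ∏ i, (1 + (hQ.1.eigenvalues i : 𝕜)) := by
    conv_lhs => rw [hQ.1.spectral_theorem, ← map_one (Unitary.conjStarAlgAut 𝕜 _ _), ← map_add,
      Unitary.conjStarAlgAut_apply, det_mul_right_comm, hU, one_mul,
      ← diagonal_one, diagonal_add, det_diagonal]
    rfl
  rw [hdet]
  exact Finset.one_le_prod fun i => by simpa using hQ.eigenvalues_nonneg i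

lemma det_le_det_add [Fintype α] [DecidableEq α] {A P : Matrix α α 𝕜} (hA : A.PosDef)
    (hP : P.PosSemidef) :
    A.det ≤ (A + P).det := by
  obtain ⟨B, rfl⟩ : ∃ B, A = Bᴴ * B :=
    CStarAlgebra.nonneg_iff_eq_star_mul_self.1 hA.posSemidef.nonneg
  have hB : IsUnit B.det := by
    have := hA.det_pos.ne'
    rw [det_mul] at this
    exact (right_ne_zero_of_mul this).isUnit
  have hfactor : Bᴴ * B + P = Bᴴ * (1 + (B⁻¹)ᴴ * P * B⁻¹) * B := by
    have hBH : Bᴴ * (B⁻¹)ᴴ = 1 := by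
      rw [← conjTranspose_mul, nonsing_inv_mul _ hB, conjTranspose_one]
    simp only [mul_add, add_mul, mul_one, Matrix.mul_assoc, nonsing_inv_mul _ hB]
    rw [← Matrix.mul_assoc Bᴴ, hBH, Matrix.one_mul]
  calc (Bᴴ * B).det ≤ (Bᴴ * B).det * (1 + (B⁻¹)ᴴ * P * B⁻¹).det :=
        le_mul_of_one_le_right hA.det_pos.le
          (one_le_det_one_add (hP.conjTranspose_mul_mul_same _))
    _ = (Bᴴ * B + P).det := by rw [hfactor]; simp only [det_mul]; ring

lemma posDef_toBlocks₁₁ {M : Matrix (α ⊕ β) (α ⊕ β) 𝕜} (hM : M.PosDef) : M.toBlocks₁₁.PosDef :=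
  hM.submatrix Sum.inl_injective

lemma toBlocks₂₁_eq_conjTranspose {M : Matrix (α ⊕ β) (α ⊕ β) 𝕜} (hM : M.IsHermitian) :
    M.toBlocks₂₁ = M.toBlocks₁₂ᴴ := by
  ext i j
  exact (hM.apply (Sum.inr i) (Sum.inl j)).symm

variable [Fintype α] [DecidableEq α]

/-- The Schur complement of the upper left block. -/
noncomputable def schurComplement (M : Matrix (α ⊕ β) (α ⊕ β) 𝕜) : Matrix β β 𝕜 :=
  M.toBlocks₂₂ - M.toBlocks₂₁ * M.toBlocks₁₁⁻¹ * M.toBlocks₁₂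

lemma det_eq_det_mul_det_schurComplement [Fintype β] [DecidableEq β]
    {M : Matrix (α ⊕ β) (α ⊕ β) 𝕜} (hM : M.PosDef) :
    M.det = M.toBlocks₁₁.det * (schurComplement M).det := by
  have : Invertible M.toBlocks₁₁ := (posDef_toBlocks₁₁ hM).isUnit.invertible
  conv_lhs => rw [← fromBlocks_toBlocks M, det_fromBlocks₁₁, invOf_eq_nonsing_inv]
  rfl

lemma posDef_schurComplement [Finite β] {M : Matrix (α ⊕ β) (α ⊕ β) 𝕜} (hM : M.PosDef) :
    (schurComplement M).PosDef := by
  classical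
  have := Fintype.ofFinite β
  have hA := posDef_toBlocks₁₁ hM
  have : Invertible M.toBlocks₁₁ := hA.isUnit.invertible
  have hsemi : (schurComplement M).PosSemidef := by
    rw [schurComplement, toBlocks₂₁_eq_conjTranspose hM.1, ← PosDef.fromBlocks₁₁ _ _ hA,
      ← toBlocks₂₁_eq_conjTranspose hM.1, fromBlocks_toBlocks]
    exact hM.posSemidef
  rw [hsemi.posDef_iff_det_ne_zero]
  exact right_ne_zero_of_mul (det_eq_det_mul_det_schurComplement hM ▸ hM.det_pos.ne')

lemma det_le_det_toBlocks_mul_det_toBlocks [Fintype β] [DecidableEq β]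
    {M : Matrix (α ⊕ β) (α ⊕ β) 𝕜} (hM : M.PosDef) :
    M.det ≤ M.toBlocks₁₁.det * M.toBlocks₂₂.det := by
  have hA := posDef_toBlocks₁₁ hM
  have hcorr : (M.toBlocks₂₁ * M.toBlocks₁₁⁻¹ * M.toBlocks₁₂).PosSemidef := by
    rw [toBlocks₂₁_eq_conjTranspose hM.1]
    exact hA.inv.posSemidef.conjTranspose_mul_mul_same _
  have hle := det_le_det_add (posDef_schurComplement hM) hcorr
  rw [schurComplement, sub_add_cancel, ← schurComplement] at hle
  rw [det_eq_det_mul_det_schurComplement hM]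
  exact mul_le_mul_of_nonneg_left hle hA.det_pos.le

lemma det_submatrix_map_id {ι : Type*} [Fintype ι] [DecidableEq ι]
    {M : Matrix (α ⊕ β) (α ⊕ β) 𝕜} (hM : M.PosDef) {f : ι → β} (hf : f.Injective) :
    (M.submatrix (Sum.map id f) (Sum.map id f)).det =
      M.toBlocks₁₁.det * ((schurComplement M).submatrix f f).det :=
  det_eq_det_mul_det_schurComplement (hM.submatrix (Function.injective_id.sumMap hf))

-- Koteljanskii's inequality is Fischer's inequality for the Schur complement of the first block.
lemma det_mul_det_toBlocks₁₁_le [Fintype β] [Fintype γ] [DecidableEq β] [DecidableEq γ]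
    {M : Matrix (α ⊕ (β ⊕ γ)) (α ⊕ (β ⊕ γ)) 𝕜} (hM : M.PosDef) :
    M.det * M.toBlocks₁₁.det ≤
      (M.submatrix (Sum.map id Sum.inl) (Sum.map id Sum.inl)).det *
        (M.submatrix (Sum.map id Sum.inr) (Sum.map id Sum.inr)).det := by
  have hA := (posDef_toBlocks₁₁ hM).det_pos.le
  have hfischer := det_le_det_toBlocks_mul_det_toBlocks (posDef_schurComplement hM)
  rw [det_submatrix_map_id hM Sum.inl_injective, det_submatrix_map_id hM Sum.inr_injective,
    det_eq_det_mul_det_schurComplement hM]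
  calc _ = M.toBlocks₁₁.det * M.toBlocks₁₁.det * (schurComplement M).det := by ring
    _ ≤ M.toBlocks₁₁.det * M.toBlocks₁₁.det * _ :=
        mul_le_mul_of_nonneg_left hfischer (mul_nonneg hA hA)
    _ = _ := mul_mul_mul_comm _ _ _ _

end Determinant

section GramDeterminant

open Matrix

variable {κ ι α β γ : Type*} [Fintype κ]

/-- The Gram matrix of a family of integer vectors, with its entries regarded as real numbers. -/
noncomputable def realGram (v : ι → κ → ℤ) : Matrix ι ι ℝ :=
  (of v * (of v)ᵀ).map (Int.cast : ℤ → ℝ)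

lemma submatrix_realGram (v : ι → κ → ℤ) (f : α → ι) :
    (realGram v).submatrix f f = realGram (v ∘ f) :=
  rfl

lemma posSemidef_realGram [Finite ι] (v : ι → κ → ℤ) : (realGram v).PosSemidef := by
  have hgram : realGram v = (of v).map (Int.cast : ℤ → ℝ) * ((of v).map (Int.cast : ℤ → ℝ))ᴴ := by
    ext i j
    simp [realGram, mul_apply]
  exact hgram ▸ posSemidef_self_mul_conjTranspose _

/-- The Gram determinant of a finite family of integer vectors; for an independent family it is the
squared covolume of the lattice spanned by the family. -/
noncomputable def gramDet [Fintype ι] [DecidableEq ι] (v : ι → κ → ℤ) : ℤ :=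
  (of v * (of v)ᵀ).det

lemma intCast_gramDet [Fintype ι] [DecidableEq ι] (v : ι → κ → ℤ) :
    (gramDet v : ℝ) = (realGram v).det :=
  RingHom.map_det (Int.castRingHom ℝ) _

lemma gramDet_nonneg [Fintype ι] [DecidableEq ι] (v : ι → κ → ℤ) : 0 ≤ gramDet v := by
  exact_mod_cast (intCast_gramDet v).symm ▸ (posSemidef_realGram v).det_nonneg

lemma gramDet_ne_zero [Fintype ι] [DecidableEq ι] {v : ι → κ → ℤ}
    (hv : LinearIndependent ℤ v) : gramDet v ≠ 0 := by
  intro hdet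
  obtain ⟨c, hc, hker⟩ := exists_vecMul_eq_zero_iff.2 hdet
  have hself : (c ᵥ* of v) ⬝ᵥ (c ᵥ* of v) = 0 := by
    rw [← vecMul_vecMul, vecMul_transpose] at hker
    rw [← dotProduct_mulVec, hker, dotProduct_zero]
  have hrel : ∑ i, c i • v i = 0 := by
    rw [← dotProduct_self_eq_zero.1 hself, vecMul_eq_sum]
    rfl
  exact hc (funext (Fintype.linearIndependent_iff.1 hv c hrel))

lemma posDef_realGram [Finite ι] {v : ι → κ → ℤ} (hv : LinearIndependent ℤ v) :
    (realGram v).PosDef := by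
  classical
  have := Fintype.ofFinite ι
  rw [(posSemidef_realGram v).posDef_iff_det_ne_zero, ← intCast_gramDet]
  exact_mod_cast gramDet_ne_zero hv

variable [Fintype ι] [DecidableEq ι]

lemma gramDet_pos {v : ι → κ → ℤ} (hv : LinearIndependent ℤ v) : 0 < gramDet v :=
  (gramDet_nonneg v).lt_of_ne' (gramDet_ne_zero hv)

lemma gramDet_comp_equiv [Fintype α] [DecidableEq α] (e : ι ≃ α) (v : α → κ → ℤ) :
    gramDet (v ∘ e) = gramDet v :=
  det_submatrix_equiv_self e (of v * (of v)ᵀ)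

lemma gramDet_sumElim_mul_gramDet_le [Fintype α] [Fintype β] [Fintype γ] [DecidableEq α]
    [DecidableEq β] [DecidableEq γ] {w : α → κ → ℤ} {u : β → κ → ℤ} {v : γ → κ → ℤ}
    (h : LinearIndependent ℤ (Sum.elim w (Sum.elim u v))) :
    gramDet (Sum.elim w (Sum.elim u v)) * gramDet w ≤
      gramDet (Sum.elim w u) * gramDet (Sum.elim w v) := by
  have hkot := det_mul_det_toBlocks₁₁_le (posDef_realGram h)
  rw [show (realGram (Sum.elim w (Sum.elim u v))).toBlocks₁₁ = realGram w from rfl,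
    submatrix_realGram, submatrix_realGram, Sum.elim_comp_map, Sum.elim_comp_map,
    Sum.elim_comp_inl, Sum.elim_comp_inr, Function.comp_id] at hkot
  simp only [← intCast_gramDet] at hkot
  exact_mod_cast hkot

lemma gramDet_basis_le {L : Submodule ℤ (κ → ℤ)} (b : Module.Basis ι ℤ L) {v : ι → κ → ℤ}
    (hv : LinearIndependent ℤ v) (hmem : ∀ i, v i ∈ L) :
    gramDet (fun i => (b i : κ → ℤ)) ≤ gramDet v := by
  set M : Matrix ι ι ℤ := of fun i j => b.repr ⟨v i, hmem i⟩ j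
  have hcoord : of v = M * of fun i => (b i : κ → ℤ) := by
    ext i k
    calc v i k = ((∑ j, b.repr ⟨v i, hmem i⟩ j • b j : L) : κ → ℤ) k := by rw [b.sum_repr]
      _ = _ := by simp [M, mul_apply, -Module.Basis.sum_repr]
  have hdet : gramDet v = M.det ^ 2 * gramDet (fun i => (b i : κ → ℤ)) := by
    rw [gramDet, gramDet, hcoord, transpose_mul, Matrix.mul_assoc,
      ← Matrix.mul_assoc _ _ Mᵀ, ← Matrix.mul_assoc, det_mul, det_mul, det_transpose]
    ring
  have hM : 0 < M.det ^ 2 := by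
    refine (sq_nonneg _).lt_of_ne' fun h0 => gramDet_ne_zero hv ?_
    rw [hdet, h0, zero_mul]
  rw [hdet]
  exact le_mul_of_one_le_left (gramDet_nonneg _) hM

lemma gramDet_unique [Unique ι] (v : ι → κ → ℤ) : gramDet v = v default ⬝ᵥ v default := by
  rw [gramDet, det_unique]
  rfl

-- The right-hand side would be exact for the orthogonal projection, `t = (x ⬝ᵥ y) / (y ⬝ᵥ y)`.
lemma gramDet_pair_le (x y : κ → ℤ) (t : ℝ) :
    (gramDet ![x, y] : ℝ) ≤ (∑ i, ((x i : ℝ) - t * y i) ^ 2) * (y ⬝ᵥ y : ℤ) := by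
  have hdet : gramDet ![x, y] = (x ⬝ᵥ x) * (y ⬝ᵥ y) - (x ⬝ᵥ y) * (x ⬝ᵥ y) := by
    rw [gramDet, det_fin_two]
    change (x ⬝ᵥ x) * (y ⬝ᵥ y) - (x ⬝ᵥ y) * (y ⬝ᵥ x) = _
    rw [dotProduct_comm y x]
  have hsq : ∑ i, ((x i : ℝ) - t * y i) ^ 2 =
      (x ⬝ᵥ x : ℤ) - 2 * t * (x ⬝ᵥ y : ℤ) + t ^ 2 * (y ⬝ᵥ y : ℤ) := by
    simp only [dotProduct, Int.cast_sum, Int.cast_mul, Finset.mul_sum, ← Finset.sum_sub_distrib,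
      ← Finset.sum_add_distrib]
    exact Finset.sum_congr rfl fun i _ => by ring
  rw [hdet, hsq]
  push_cast
  nlinarith [sq_nonneg (((x ⬝ᵥ y : ℤ) : ℝ) - t * (y ⬝ᵥ y : ℤ))]

end GramDeterminant

lemma linearIndependent_sumElim_sumElim {R M α β γ : Type*} [Ring R] [AddCommGroup M] [Module R M]
    {w : α → M} {u : β → M} {v : γ → M} (hu : LinearIndependent R (Sum.elim w u))
    (hv : LinearIndependent R (Sum.elim w v))
    (hinf : Submodule.span R (Set.range (Sum.elim w u)) ⊓
      Submodule.span R (Set.range (Sum.elim w v)) ≤ Submodule.span R (Set.range w)) :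
    LinearIndependent R (Sum.elim w (Sum.elim u v)) := by
  obtain ⟨-, hv_indep, hwv⟩ := linearIndependent_sum.1 hv
  have hdisj : Disjoint (Submodule.span R (Set.range (Sum.elim w u)))
      (Submodule.span R (Set.range v)) := by
    rw [Submodule.disjoint_def]
    intro x hxu hxv
    have hxw := hinf ⟨hxu, Submodule.span_mono (by simp [Set.Sum.elim_range]) hxv⟩
    exact Submodule.disjoint_def.1 hwv x hxw hxv
  have hsum := hu.sum_type hv_indep hdisj
  rw [← linearIndependent_equiv (Equiv.sumAssoc α β γ)]
  convert hsum using 1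
  ext ((i | i) | i) <;> rfl

section Height

open Matrix Submodule

variable {κ ι : Type*}

/-- The inclusion `ℤ^κ → ℚ^κ`. -/
noncomputable def castRat (κ : Type*) : (κ → ℤ) →ₗ[ℤ] (κ → ℚ) :=
  (Algebra.linearMap ℤ ℚ).compLeft κ

@[simp]
lemma castRat_apply (z : κ → ℤ) (i : κ) : castRat κ z i = z i :=
  rfl

lemma castRat_injective : Function.Injective (castRat κ) := fun x y hxy =>
  funext fun i => by simpa using congrFun hxy i

lemma linearIndependent_castRat_iff {v : ι → κ → ℤ} :
    LinearIndependent ℚ (castRat κ ∘ v) ↔ LinearIndependent ℤ v := by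
  rw [← LinearIndependent.iff_fractionRing ℤ ℚ]
  exact (castRat κ).linearIndependent_iff (LinearMap.ker_eq_bot.2 castRat_injective)

/-- The lattice `U ∩ ℤ^κ` of integer points of a rational subspace `U`. -/
noncomputable def integerPoints (U : Submodule ℚ (κ → ℚ)) : Submodule ℤ (κ → ℤ) :=
  (U.restrictScalars ℤ).comap (castRat κ)

lemma mem_integerPoints {U : Submodule ℚ (κ → ℚ)} {z : κ → ℤ} :
    z ∈ integerPoints U ↔ castRat κ z ∈ U :=
  Iff.rfl

lemma mem_integerPoints_of_smul_mem {U : Submodule ℚ (κ → ℚ)} {z : κ → ℤ} {r : ℤ} (hr : r ≠ 0)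
    (h : r • z ∈ integerPoints U) : z ∈ integerPoints U := by
  rw [mem_integerPoints, map_smul, ← Int.cast_smul_eq_zsmul ℚ] at h
  exact (U.smul_mem_iff (Int.cast_ne_zero.2 hr)).1 h

lemma linearIndependent_coe_basis {R M : Type*} [Ring R] [AddCommGroup M] [Module R M]
    {L : Submodule R M} (b : Module.Basis ι R L) : LinearIndependent R fun i => (b i : M) :=
  b.linearIndependent.map' L.subtype L.ker_subtype

lemma span_coe_basis {R M : Type*} [Ring R] [AddCommGroup M] [Module R M] {L : Submodule R M}
    (b : Module.Basis ι R L) : span R (Set.range fun i => (b i : M)) = L := by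
  have hmap := congrArg (Submodule.map L.subtype) b.span_eq
  rwa [map_span, ← Set.range_comp, Submodule.map_top, range_subtype] at hmap

lemma integerPoints_inf (U V : Submodule ℚ (κ → ℚ)) :
    integerPoints (U ⊓ V) = integerPoints U ⊓ integerPoints V :=
  rfl

-- The quotient of the two lattices is torsion free, hence free, so a basis of it can be lifted.
lemma exists_basis_integerPoints_extending [Finite κ] {W U : Submodule ℚ (κ → ℚ)} (h : W ≤ U)
    (w : Module.Basis ι ℤ (integerPoints W)) :
    ∃ (n : ℕ) (b : Module.Basis (ι ⊕ Fin n) ℤ (integerPoints U)),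
      ∀ i, (b (Sum.inl i) : κ → ℤ) = w i := by
  have hle : integerPoints W ≤ integerPoints U := fun z hz => h hz
  set W' : Submodule ℤ (integerPoints U) := (integerPoints W).comap (integerPoints U).subtype
  have htorsion : Module.IsTorsionFree ℤ (integerPoints U ⧸ W') := by
    refine ⟨fun r hr => ?_⟩
    rintro ⟨x⟩ ⟨y⟩ hxy
    refine (Submodule.Quotient.eq W').2 (mem_integerPoints_of_smul_mem hr.ne_zero ?_)
    rw [subtype_apply, ← coe_smul, smul_sub]
    exact (Submodule.Quotient.eq W').1 hxy
  obtain ⟨n, bQ⟩ : Σ n : ℕ, Module.Basis (Fin n) ℤ (integerPoints U ⧸ W') :=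
    Module.basisOfFiniteTypeTorsionFree'
  exact ⟨n, (w.map (comapSubtypeEquivOfLe hle).symm).sumQuot bQ, fun i => by simp⟩

lemma span_castRat_integerPoints [Finite κ] (U : Submodule ℚ (κ → ℚ)) :
    span ℚ (castRat κ '' integerPoints U) = U := by
  refine le_antisymm (span_le.2 (Set.image_subset_iff.2 fun _ hz => hz)) fun u hu => ?_
  obtain ⟨m, hm⟩ := IsLocalization.exist_integer_multiples_of_finite (nonZeroDivisors ℤ) u
  choose z hz using hm
  have hm0 : ((m : ℤ) : ℚ) ≠ 0 := Int.cast_ne_zero.2 (nonZeroDivisors.ne_zero m.2)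
  have hzu : castRat κ z = ((m : ℤ) : ℚ) • u := by
    ext i
    simpa [Algebra.smul_def] using hz i
  rw [← (span ℚ _).smul_mem_iff hm0, ← hzu]
  exact subset_span ⟨z, mem_integerPoints.2 (hzu ▸ U.smul_mem _ hu), rfl⟩

lemma span_castRat_basis [Finite κ] {U : Submodule ℚ (κ → ℚ)}
    (b : Module.Basis ι ℤ (integerPoints U)) :
    span ℚ (Set.range (castRat κ ∘ fun i => (b i : κ → ℤ))) = U := by
  rw [Set.range_comp, ← span_span_of_tower ℤ ℚ, span_image, span_coe_basis b, map_coe,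
    span_castRat_integerPoints]

lemma card_eq_finrank_span_castRat [Fintype ι] {v : ι → κ → ℤ} (hv : LinearIndependent ℤ v) :
    Fintype.card ι = Module.finrank ℚ (span ℚ (Set.range (castRat κ ∘ v))) :=
  linearIndependent_iff_card_eq_finrank_span.1 (linearIndependent_castRat_iff.2 hv)

lemma card_eq_finrank [Finite κ] [Fintype ι] {U : Submodule ℚ (κ → ℚ)}
    (b : Module.Basis ι ℤ (integerPoints U)) : Fintype.card ι = Module.finrank ℚ U := by
  rw [card_eq_finrank_span_castRat (linearIndependent_coe_basis b), span_castRat_basis b]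

variable [Fintype κ]

open Classical in
/-- The squared height of a rational subspace `U`: the squared covolume of its lattice of integer
points, computed from an arbitrary lattice basis. -/
noncomputable def sqHeight (U : Submodule ℚ (κ → ℚ)) : ℤ :=
  gramDet fun i => (Module.Free.chooseBasis ℤ (integerPoints U) i : κ → ℤ)

lemma sqHeight_pos (U : Submodule ℚ (κ → ℚ)) : 0 < sqHeight U := by
  classical
  exact gramDet_pos (linearIndependent_coe_basis _)

lemma sqHeight_span_le_gramDet [Fintype ι] [DecidableEq ι] {v : ι → κ → ℤ}
    (hv : LinearIndependent ℤ v) :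
    sqHeight (span ℚ (Set.range (castRat κ ∘ v))) ≤ gramDet v := by
  classical
  set b := Module.Free.chooseBasis ℤ (integerPoints (span ℚ (Set.range (castRat κ ∘ v))))
  let e := Fintype.equivOfCardEq ((card_eq_finrank b).trans (card_eq_finrank_span_castRat hv).symm)
  rw [sqHeight, ← gramDet_comp_equiv e]
  exact gramDet_basis_le b (hv.comp e e.injective) fun i => subset_span ⟨e i, rfl⟩

lemma sqHeight_eq_gramDet [Fintype ι] [DecidableEq ι] {U : Submodule ℚ (κ → ℚ)}
    (b : Module.Basis ι ℤ (integerPoints U)) : sqHeight U = gramDet fun i => (b i : κ → ℤ) := by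
  classical
  refine le_antisymm ?_ ?_
  · simpa only [span_castRat_basis] using
      sqHeight_span_le_gramDet (linearIndependent_coe_basis b)
  · set c := Module.Free.chooseBasis ℤ (integerPoints U)
    let e := Fintype.equivOfCardEq ((card_eq_finrank b).trans (card_eq_finrank c).symm)
    rw [sqHeight, ← gramDet_comp_equiv e]
    exact gramDet_basis_le b ((linearIndependent_coe_basis c).comp e e.injective)
      fun i => (c (e i)).2

lemma sqHeight_sup_mul_sqHeight_inf_le (U V : Submodule ℚ (κ → ℚ)) :
    sqHeight (U ⊔ V) * sqHeight (U ⊓ V) ≤ sqHeight U * sqHeight V := by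
  classical
  set bW := Module.Free.chooseBasis ℤ (integerPoints (U ⊓ V))
  obtain ⟨n, bU, hbU⟩ := exists_basis_integerPoints_extending (inf_le_left : U ⊓ V ≤ U) bW
  obtain ⟨m, bV, hbV⟩ := exists_basis_integerPoints_extending (inf_le_right : U ⊓ V ≤ V) bW
  set w : _ → κ → ℤ := fun i => bW i
  set u : _ → κ → ℤ := fun i => bU (Sum.inr i)
  set v : _ → κ → ℤ := fun i => bV (Sum.inr i)
  have hU : (fun i => (bU i : κ → ℤ)) = Sum.elim w u := by
    ext (i | i) : 1
    exacts [hbU i, rfl]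
  have hV : (fun i => (bV i : κ → ℤ)) = Sum.elim w v := by
    ext (i | i) : 1
    exacts [hbV i, rfl]
  have hspan : span ℚ (Set.range (castRat κ ∘ Sum.elim w (Sum.elim u v))) = U ⊔ V := by
    calc _ = span ℚ (Set.range (castRat κ ∘ Sum.elim w u)) ⊔
          span ℚ (Set.range (castRat κ ∘ Sum.elim w v)) := by
          simp only [Sum.comp_elim, Set.Sum.elim_range, span_union]
          exact sup_sup_distrib_left _ _ _
      _ = U ⊔ V := by rw [← hU, ← hV, span_castRat_basis, span_castRat_basis]
  have hindep : LinearIndependent ℤ (Sum.elim w (Sum.elim u v)) := by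
    refine linearIndependent_sumElim_sumElim (hU ▸ linearIndependent_coe_basis bU)
      (hV ▸ linearIndependent_coe_basis bV) ?_
    rw [← hU, ← hV, span_coe_basis, span_coe_basis, span_coe_basis, integerPoints_inf]
  calc sqHeight (U ⊔ V) * sqHeight (U ⊓ V)
      ≤ gramDet (Sum.elim w (Sum.elim u v)) * gramDet w := by
        rw [sqHeight_eq_gramDet bW]
        exact mul_le_mul_of_nonneg_right (hspan ▸ sqHeight_span_le_gramDet hindep)
          (gramDet_nonneg _)
    _ ≤ gramDet (Sum.elim w u) * gramDet (Sum.elim w v) := gramDet_sumElim_mul_gramDet_le hindep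
    _ = sqHeight U * sqHeight V := by
        rw [sqHeight_eq_gramDet bU, sqHeight_eq_gramDet bV, hU, hV]

lemma sqHeight_span_singleton {x : κ → ℤ} (hx : ∀ (g : ℤ) (y : κ → ℤ), x = g • y → IsUnit g) :
    sqHeight (span ℚ {castRat κ x}) = x ⬝ᵥ x := by
  classical
  set L := integerPoints (span ℚ {castRat κ x})
  set b := Module.Free.chooseBasis ℤ L
  have hx0 : castRat κ x ≠ 0 := by
    intro h0
    have : x = (0 : ℤ) • x := by rw [zero_smul, castRat_injective (h0.trans (map_zero _).symm)]
    exact not_isUnit_zero (hx 0 x this)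
  obtain ⟨hunique⟩ : Nonempty (Unique (Module.Free.ChooseBasisIndex ℤ L)) := by
    rw [← Fintype.card_eq_one_iff_nonempty_unique, card_eq_finrank b, finrank_span_singleton hx0]
  have hmem : x ∈ L := mem_span_singleton_self (castRat κ x)
  have hgen : x = b.repr ⟨x, hmem⟩ default • (b default : κ → ℤ) := by
    have hsum := congrArg (fun z : L => (z : κ → ℤ)) (b.sum_repr ⟨x, hmem⟩)
    rw [Fintype.sum_unique] at hsum
    exact hsum.symm
  rw [sqHeight_eq_gramDet b, gramDet_unique]
  conv_rhs => rw [hgen, smul_dotProduct, dotProduct_smul, smul_smul,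
    Int.isUnit_mul_self (hx _ _ hgen), one_smul]

/-- The logarithm of the height of a rational subspace. -/
noncomputable def logHeight (U : Submodule ℚ (κ → ℚ)) : ℝ :=
  Real.log (sqHeight U) / 2

lemma logHeight_nonneg (U : Submodule ℚ (κ → ℚ)) : 0 ≤ logHeight U :=
  div_nonneg (Real.log_nonneg (by exact_mod_cast sqHeight_pos U)) zero_le_two

lemma logHeight_sup_add_logHeight_inf_le (U V : Submodule ℚ (κ → ℚ)) :
    logHeight (U ⊔ V) + logHeight (U ⊓ V) ≤ logHeight U + logHeight V := by
  have hpos (W : Submodule ℚ (κ → ℚ)) : (0 : ℝ) < sqHeight W := by exact_mod_cast sqHeight_pos W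
  have hmul : (sqHeight (U ⊔ V) : ℝ) * sqHeight (U ⊓ V) ≤ sqHeight U * sqHeight V := by
    exact_mod_cast sqHeight_sup_mul_sqHeight_inf_le U V
  have hlog := Real.log_le_log (mul_pos (hpos _) (hpos _)) hmul
  rw [Real.log_mul (hpos _).ne' (hpos _).ne', Real.log_mul (hpos _).ne' (hpos _).ne'] at hlog
  simp only [logHeight]
  linarith

end Height

section ChangeTimes

variable {X : Type*} {S : ℕ → X}

open Classical in
lemma eq_of_count_ne_succ_eq {i j : ℕ} (hij : i ≤ j)
    (hcount : Nat.count (fun n => S n ≠ S (n + 1)) i = Nat.count (fun n => S n ≠ S (n + 1)) j) :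
    S i = S j := by
  induction j, hij using Nat.le_induction with
  | base => rfl
  | succ j hij ih =>
    have hmono := Nat.count_monotone (fun n => S n ≠ S (n + 1)) hij
    rw [Nat.count_succ] at hcount
    split_ifs at hcount with hj
    · omega
    · rw [ih hcount, not_not.1 hj]

lemma exists_changeTimes (hS : ∃ᶠ j in atTop, S j ≠ S (j + 1)) :
    ∃ φ : ℕ → ℕ, StrictMono φ ∧ (∀ m, S (φ m) ≠ S (φ m + 1)) ∧
      (∀ m, S (φ m + 1) = S (φ (m + 1))) ∧ ∀ j, ∃ m, j ≤ φ m ∧ S j = S (φ m) := by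
  classical
  have hinf := Nat.frequently_atTop_iff_infinite.1 hS
  refine ⟨Nat.nth _, Nat.nth_strictMono hinf, Nat.nth_mem_of_infinite hinf, fun m => ?_,
    fun j => ?_⟩
  · refine eq_of_count_ne_succ_eq (Nat.nth_strictMono hinf m.lt_succ_self) ?_
    rw [Nat.count_nth_succ_of_infinite hinf, Nat.count_nth_of_infinite hinf]
  · refine ⟨_, Nat.le_nth_count hinf j, eq_of_count_ne_succ_eq (Nat.le_nth_count hinf j) ?_⟩
    rw [Nat.count_nth_of_infinite hinf]

end ChangeTimes

section SubspaceChain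

variable {K E : Type*} [DivisionRing K] [AddCommGroup E] [Module K E]

/-- A sequence of `k`-dimensional subspaces, any two consecutive ones spanning a
`(k + 1)`-dimensional subspace, which is not eventually contained in a proper subspace and along
which `h` is positive and the quotients `h (A j ⊔ A (j + 1)) / h (A (j + 1))` and
`h (A j ⊔ A (j + 1)) / h (A j)` are at most `b / a` and `b / (ρ * a)`. The quotients are
cleared of denominators because `b` is not assumed to be positive. -/
structure SubspaceChain (h : Submodule K E → ℝ) (ρ : ℝ) (k : ℕ) (a b : ℝ)
    (A : ℕ → Submodule K E) : Prop where
  finrank_eq : ∀ j, Module.finrank K (A j) = k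
  finrank_sup : ∀ j, Module.finrank K ↥(A j ⊔ A (j + 1)) = k + 1
  frequently_not_le : ∀ W : Submodule K E, W ≠ ⊤ → ∃ᶠ j in atTop, ¬ A j ≤ W
  sup_le_succ : ∀ j, a * h (A j ⊔ A (j + 1)) ≤ b * h (A (j + 1))
  sup_le_self : ∀ j, ρ * a * h (A j ⊔ A (j + 1)) ≤ b * h (A j)
  pos : ∀ j, 0 < h (A j)

variable {h : Submodule K E → ℝ} {ρ a b : ℝ} {k : ℕ} {A : ℕ → Submodule K E}

lemma inf_eq_of_le_of_finrank_le [FiniteDimensional K E] {U V W : Submodule K E} (hUV : U ≠ V)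
    (hW : W ≤ U ⊓ V) (hU : Module.finrank K U ≤ Module.finrank K W + 1)
    (hV : Module.finrank K V ≤ Module.finrank K W + 1) : U ⊓ V = W := by
  refine (Submodule.eq_of_le_of_finrank_le hW (not_lt.1 fun hlt => hUV ?_)).symm
  have hinfU : U ⊓ V = U := Submodule.eq_of_le_of_finrank_le inf_le_left (by omega)
  have hinfV : U ⊓ V = V := Submodule.eq_of_le_of_finrank_le inf_le_right (by omega)
  exact hinfU.symm.trans hinfV

namespace SubspaceChain

lemma frequently_sup_ne (C : SubspaceChain h ρ k a b A) (hk : k + 1 < Module.finrank K E) :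
    ∃ᶠ j in atTop, A j ⊔ A (j + 1) ≠ A (j + 1) ⊔ A (j + 1 + 1) := by
  intro hconst
  obtain ⟨N, hN⟩ := eventually_atTop.1 hconst
  have hstable (j : ℕ) (hj : N ≤ j) : A j ⊔ A (j + 1) = A N ⊔ A (N + 1) := by
    induction j, hj using Nat.le_induction with
    | base => rfl
    | succ j hj ih => rw [← ih, not_not.1 (hN j hj)]
  have hproper : A N ⊔ A (N + 1) ≠ ⊤ := fun htop => by
    have := C.finrank_sup N
    rw [htop, finrank_top] at this
    omega
  refine C.frequently_not_le _ hproper (eventually_atTop.2 ⟨N, fun j hj => ?_⟩)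
  exact not_not.2 (hstable j hj ▸ le_sup_left)

variable [FiniteDimensional K E]

-- The new sequence lists the distinct consecutive values of `A j ⊔ A (j + 1)`.
lemma exists_sup_subsequence (C : SubspaceChain h ρ k a b A) (hk : k + 1 < Module.finrank K E) :
    ∃ T B : ℕ → Submodule K E,
      (∀ m, Module.finrank K (T m) = k + 1) ∧
      (∀ m, Module.finrank K ↥(T m ⊔ T (m + 1)) = k + 2) ∧
      (∀ W : Submodule K E, W ≠ ⊤ → ∃ᶠ m in atTop, ¬ T m ≤ W) ∧
      (∀ m, T m ⊓ T (m + 1) = B m) ∧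
      (∀ m, a * h (T m) ≤ b * h (B m)) ∧
      (∀ m, ρ * a * h (T (m + 1)) ≤ b * h (B m)) ∧
      ∀ m, 0 < h (B m) := by
  obtain ⟨φ, hφ, hne, hsucc, hcover⟩ := exists_changeTimes (C.frequently_sup_ne hk)
  have hinf (m : ℕ) : (A (φ m) ⊔ A (φ m + 1)) ⊓ (A (φ (m + 1)) ⊔ A (φ (m + 1) + 1)) =
      A (φ m + 1) := by
    rw [← hsucc]
    refine inf_eq_of_le_of_finrank_le (hne m) (le_inf le_sup_right le_sup_left) ?_ ?_ <;>
      rw [C.finrank_sup, C.finrank_eq]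
  refine ⟨fun m => A (φ m) ⊔ A (φ m + 1), fun m => A (φ m + 1), fun m => C.finrank_sup _,
    fun m => ?_, fun W hW => ?_, hinf, fun m => C.sup_le_succ _,
    fun m => ?_, fun m => C.pos _⟩
  · have hdim := Submodule.finrank_sup_add_finrank_inf_eq (A (φ m) ⊔ A (φ m + 1))
      (A (φ (m + 1)) ⊔ A (φ (m + 1) + 1))
    rw [hinf, C.finrank_eq, C.finrank_sup, C.finrank_sup] at hdim
    beta_reduce
    omega
  · refine frequently_atTop.2 fun m₀ => ?_
    obtain ⟨j, hj, hAj⟩ := frequently_atTop.1 (C.frequently_not_le W hW) (φ m₀)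
    obtain ⟨m, hjm, heq⟩ := hcover j
    exact ⟨m, hφ.le_iff_le.1 (hj.trans hjm), fun hle => hAj (le_sup_left.trans (heq.trans_le hle))⟩
  · beta_reduce
    rw [← hsucc]
    exact C.sup_le_self _

-- Submodularity of `h` is applied to consecutive members of the new sequence.
lemma exists_succ (C : SubspaceChain h ρ k a b A) (hnonneg : ∀ U, 0 ≤ h U)
    (hsub : ∀ U V, h (U ⊔ V) + h (U ⊓ V) ≤ h U + h V) (hρ : 0 < ρ) (ha : 0 < a) (hba : b < a)
    (hbρ : b < ρ * a) (hk : k + 1 < Module.finrank K E) :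
    0 < b ∧ ∃ T, SubspaceChain h ρ (k + 1) b (b - ρ * (a - b)) T := by
  obtain ⟨T, B, hT, hTsup, hTnot, hinf, hTB, hTB', hB⟩ := C.exists_sup_subsequence hk
  have hsubB (m : ℕ) : h (T m ⊔ T (m + 1)) + h (B m) ≤ h (T m) + h (T (m + 1)) :=
    hinf m ▸ hsub (T m) (T (m + 1))
  have hb : 0 < b := by
    have hsum : ρ * a * h (B 0) ≤ (ρ + 1) * h (B 0) * b := by
      calc ρ * a * h (B 0) ≤ ρ * (a * h (T 0)) + ρ * a * h (T 1) := by
            have := mul_le_mul_of_nonneg_left (hsubB 0) (mul_pos hρ ha).le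
            have := mul_nonneg (mul_pos hρ ha).le (hnonneg (T 0 ⊔ T 1))
            linarith
        _ ≤ ρ * (b * h (B 0)) + b * h (B 0) :=
            add_le_add (mul_le_mul_of_nonneg_left (hTB 0) hρ.le) (hTB' 0)
        _ = (ρ + 1) * h (B 0) * b := by ring
    have hBpos := hB 0
    exact pos_of_mul_pos_right ((by positivity : 0 < ρ * a * h (B 0)).trans_le hsum) (by positivity)
  refine ⟨hb, T, hT, hTsup, hTnot, fun m => ?_, fun m => ?_, fun m => ?_⟩
  · have hcomb : b * h (T m) + ρ * (a - b) * h (T (m + 1)) ≤ b * h (B m) := by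
      refine le_of_mul_le_mul_left ?_ ha
      linarith [mul_le_mul_of_nonneg_left (hTB m) hb.le,
        mul_le_mul_of_nonneg_left (hTB' m) (sub_pos.2 hba).le]
    linarith [mul_le_mul_of_nonneg_left (hsubB m) hb.le]
  · have hcomb : (ρ * a - b) * h (T m) + ρ * b * h (T (m + 1)) ≤ ρ * b * h (B m) := by
      refine le_of_mul_le_mul_left ?_ ha
      linarith [mul_le_mul_of_nonneg_left (hTB m) (sub_pos.2 hbρ).le,
        mul_le_mul_of_nonneg_left (hTB' m) hb.le]
    linarith [mul_le_mul_of_nonneg_left (hsubB m) (mul_pos hρ hb).le]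
  · have hlt : h (T (m + 1)) < h (B m) := by
      refine lt_of_mul_lt_mul_left ((hTB' m).trans_lt ?_) (mul_pos hρ ha).le
      exact mul_lt_mul_of_pos_right hbρ (hB m)
    linarith [hsubB m, hnonneg (T m ⊔ T (m + 1))]

end SubspaceChain

/-- The numerators and denominators of the ratios `b / a` that occur in the successive
`SubspaceChain`s; they solve the recursion `c₀ = 1`, `c₁ = 1 - g`,
`c_{k+2} = c_{k+1} - ρ (c_k - c_{k+1})` produced by `SubspaceChain.exists_succ`. -/
noncomputable def chainCoeff (g ρ : ℝ) (k : ℕ) : ℝ :=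
  1 - g * ∑ i ∈ Finset.range k, ρ ^ i

lemma chainCoeff_succ (g ρ : ℝ) (k : ℕ) :
    chainCoeff g ρ (k + 1) = chainCoeff g ρ k - g * ρ ^ k := by
  rw [chainCoeff, chainCoeff, Finset.sum_range_succ]
  ring

lemma chainCoeff_succ' (g ρ : ℝ) (k : ℕ) :
    chainCoeff g ρ (k + 1) = ρ * chainCoeff g ρ k + (1 - g - ρ) := by
  simp only [chainCoeff, Finset.sum_range_succ', pow_succ', ← Finset.mul_sum, pow_zero]
  ring

lemma chainCoeff_pos {g ρ : ℝ} (hρ : 0 < ρ) (hle : g + ρ ≤ 1) (k : ℕ) : 0 < chainCoeff g ρ k := by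
  induction k with
  | zero => simp [chainCoeff]
  | succ k ih => linarith [chainCoeff_succ' g ρ k, mul_pos hρ ih]

theorem chainCoeff_nonneg_of_subspaceChain [FiniteDimensional K E] {g : ℝ} {n : ℕ}
    (hnonneg : ∀ U, 0 ≤ h U) (hsub : ∀ U V, h (U ⊔ V) + h (U ⊓ V) ≤ h U + h V) (hρ : 0 < ρ)
    (hg : 0 < g) (hn : n < Module.finrank K E) (C : SubspaceChain h ρ 1 1 (1 - g) A) :
    0 ≤ chainCoeff g ρ n := by
  rcases le_or_gt (g + ρ) 1 with hle | hgt
  · exact (chainCoeff_pos hρ hle n).le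
  have hchain (k : ℕ) (hk : k + 1 < Module.finrank K E) : 0 < chainCoeff g ρ k ∧
      ∃ T, SubspaceChain h ρ (k + 1) (chainCoeff g ρ k) (chainCoeff g ρ (k + 1)) T := by
    induction k with
    | zero => exact ⟨by simp [chainCoeff], A, by simpa [chainCoeff] using C⟩
    | succ k ih =>
      obtain ⟨hpos, T, hT⟩ := ih (by omega)
      have hdecr : chainCoeff g ρ (k + 1) < chainCoeff g ρ k := by
        rw [chainCoeff_succ]
        exact sub_lt_self _ (by positivity)
      have hdecr' : chainCoeff g ρ (k + 1) < ρ * chainCoeff g ρ k := by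
        linarith [chainCoeff_succ' g ρ k]
      have hrec : chainCoeff g ρ (k + 1) - ρ * (chainCoeff g ρ k - chainCoeff g ρ (k + 1)) =
          chainCoeff g ρ (k + 1 + 1) := by
        linarith [chainCoeff_succ' g ρ k, chainCoeff_succ' g ρ (k + 1)]
      exact hrec ▸ hT.exists_succ hnonneg hsub hρ hpos hdecr hdecr' hk
  rcases n with _ | n
  · simp [chainCoeff]
  obtain ⟨hpos, T, hT⟩ := hchain n hn
  exact nonneg_of_mul_nonneg_left ((mul_nonneg hpos.le (hnonneg _)).trans (hT.sup_le_succ 0))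
    (hT.pos 1)

end SubspaceChain

section ErrorVector

variable {d : ℕ} {ξ : Fin d → ℝ}

lemma eq_zero_of_add_sum_eq_zero (hirr : TotallyIrrational ξ) {c : Fin (d + 1) → ℚ}
    (hc : (c 0 : ℝ) + ∑ j : Fin d, (c j.succ : ℝ) * ξ j = 0) : c = 0 := by
  refine funext (Fintype.linearIndependent_iff.1 hirr c ?_)
  simpa [Fin.sum_univ_succ, Rat.smul_def] using hc

lemma irrational_of_totallyIrrational (hirr : TotallyIrrational ξ) (j : Fin d) :
    Irrational (ξ j) := by
  rintro ⟨r, hr⟩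
  have hrel := eq_zero_of_add_sum_eq_zero hirr (c := Fin.cons (-r) (Pi.single j 1))
    (by simp [Pi.single_apply, apply_ite, hr])
  simpa using congrFun hrel j.succ

/-- The vector `x₀ ξ - (x₁, …, x_d)` attached to an integer point `x`, which stands for the rational
approximation `(x₁, …, x_d) / x₀` of `ξ`. -/
def errorVec (ξ : Fin d → ℝ) : (Fin (d + 1) → ℤ) →+ (Fin d → ℝ) where
  toFun x j := x 0 * ξ j - x j.succ
  map_zero' := by ext; simp
  map_add' x y := by
    ext j
    simp only [Pi.add_apply, Int.cast_add]
    ring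

lemma errorVec_apply (x : Fin (d + 1) → ℤ) (j : Fin d) :
    errorVec ξ x j = x 0 * ξ j - x j.succ :=
  rfl

lemma norm_errorVec_zsmul (g : ℤ) (x : Fin (d + 1) → ℤ) :
    ‖errorVec ξ (g • x)‖ = |(g : ℝ)| * ‖errorVec ξ x‖ := by
  rw [map_zsmul, ← Int.cast_smul_eq_zsmul ℝ, norm_smul, Real.norm_eq_abs]

lemma errorVec_ne_zero (hirr : TotallyIrrational ξ) (hd : 0 < d) {x : Fin (d + 1) → ℤ}
    (hx : x 0 ≠ 0) : errorVec ξ x ≠ 0 := fun h0 =>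
  ((irrational_of_totallyIrrational hirr ⟨0, hd⟩).intCast_mul hx).ne_int _
    (sub_eq_zero.1 (congrFun h0 ⟨0, hd⟩))

variable {E : ℝ} {x : Fin (d + 1) → ℤ}

lemma norm_le_of_norm_errorVec_le (hx : 0 < x 0) (hE : ‖errorVec ξ x‖ ≤ E) :
    ‖x‖ ≤ (1 + ‖ξ‖ + E) * x 0 := by
  have hx1 : (1 : ℝ) ≤ x 0 := by exact_mod_cast hx
  have hE0 : 0 ≤ E := (norm_nonneg _).trans hE
  refine (pi_norm_le_iff_of_nonneg (by positivity)).2 fun i => ?_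
  rw [Int.norm_eq_abs]
  induction i using Fin.cases with
  | zero =>
    rw [abs_of_nonneg (zero_le_one.trans hx1)]
    exact le_mul_of_one_le_left (by positivity) (by linarith [norm_nonneg ξ])
  | succ j =>
    calc |(x j.succ : ℝ)| = |x 0 * ξ j - errorVec ξ x j| := by rw [errorVec_apply, sub_sub_cancel]
      _ ≤ |x 0 * ξ j| + |errorVec ξ x j| := abs_sub _ _
      _ ≤ x 0 * ‖ξ‖ + E := by
        rw [abs_mul, abs_of_nonneg (zero_le_one.trans hx1)]
        gcongr
        exacts [norm_le_pi_norm ξ j, (norm_le_pi_norm _ j).trans hE]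
      _ ≤ (1 + ‖ξ‖ + E) * x 0 := by nlinarith

lemma dotProduct_self_le_of_norm_errorVec_le (hx : 0 < x 0) (hE : ‖errorVec ξ x‖ ≤ E) :
    ((x ⬝ᵥ x : ℤ) : ℝ) ≤ (d + 1) * ((1 + ‖ξ‖ + E) * x 0) ^ 2 := by
  have hcoord (i : Fin (d + 1)) : ((x i : ℝ)) * x i ≤ ((1 + ‖ξ‖ + E) * x 0) ^ 2 := by
    rw [← abs_mul_abs_self, ← sq, ← Int.norm_eq_abs]
    gcongr
    exact (norm_le_pi_norm x i).trans (norm_le_of_norm_errorVec_le hx hE)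
  simpa [dotProduct] using Finset.sum_le_card_nsmul Finset.univ _ _ fun i _ => hcoord i

end ErrorVector

section Line

open Submodule

variable {d : ℕ} {ξ : Fin d → ℝ} {E : ℝ} {x y : Fin (d + 1) → ℤ}

/-- The rational line through the origin and an integer point. -/
noncomputable def line (x : Fin (d + 1) → ℤ) : Submodule ℚ (Fin (d + 1) → ℚ) :=
  span ℚ {castRat _ x}

lemma line_sup_line (x y : Fin (d + 1) → ℤ) :
    line x ⊔ line y = span ℚ (Set.range (castRat _ ∘ ![x, y])) := by
  rw [line, line, ← span_union, Set.range_comp, Matrix.range_cons_cons_empty, Set.image_pair,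
    Set.singleton_union]

lemma log_le_logHeight_line (hx : 0 < x 0)
    (hprim : ∀ (g : ℤ) (y : Fin (d + 1) → ℤ), x = g • y → IsUnit g) :
    Real.log (x 0) ≤ logHeight (line x) := by
  have hsq : ((x 0 : ℝ)) ^ 2 ≤ (x ⬝ᵥ x : ℤ) := by
    rw [sq]
    exact_mod_cast Finset.single_le_sum (f := fun i => x i * x i)
      (fun i _ => mul_self_nonneg _) (Finset.mem_univ 0)
  rw [logHeight, line, sqHeight_span_singleton hprim, le_div_iff₀ zero_lt_two, mul_comm,
    ← Nat.cast_two, ← Real.log_pow]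
  exact Real.log_le_log (by positivity) hsq

lemma logHeight_line_le (hx : 0 < x 0) (hE : ‖errorVec ξ x‖ ≤ E)
    (hprim : ∀ (g : ℤ) (y : Fin (d + 1) → ℤ), x = g • y → IsUnit g) :
    logHeight (line x) ≤ Real.log ((d + 1) * (1 + ‖ξ‖ + E)) + Real.log (x 0) := by
  have hE0 : 0 ≤ E := (norm_nonneg _).trans hE
  have hx0 : (0 : ℝ) < x 0 := by exact_mod_cast hx
  have hpos : 0 < ((x ⬝ᵥ x : ℤ) : ℝ) := by
    exact_mod_cast sqHeight_span_singleton hprim ▸ sqHeight_pos _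
  have hsq : ((x ⬝ᵥ x : ℤ) : ℝ) ≤ ((d + 1) * (1 + ‖ξ‖ + E) * x 0) ^ 2 := by
    refine (dotProduct_self_le_of_norm_errorVec_le hx hE).trans ?_
    rw [mul_assoc, mul_pow ((d : ℝ) + 1)]
    gcongr
    exact le_self_pow₀ (by simp) two_ne_zero
  rw [logHeight, line, sqHeight_span_singleton hprim, div_le_iff₀ zero_lt_two, mul_comm,
    ← Nat.cast_two, ← Real.log_mul (by positivity) hx0.ne', ← Real.log_pow]
  exact Real.log_le_log hpos hsq

lemma abs_sub_div_mul_le_of_norm_errorVec_le (hx : 0 < x 0) (hxy : x 0 ≤ y 0)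
    (herr : ‖errorVec ξ y‖ ≤ ‖errorVec ξ x‖) (i : Fin (d + 1)) :
    |(x i : ℝ) - x 0 / y 0 * y i| ≤ 2 * ‖errorVec ξ x‖ := by
  have hx0 : (0 : ℝ) < x 0 := by exact_mod_cast hx
  have hy0 : (0 : ℝ) < y 0 := by exact_mod_cast hx.trans_le hxy
  induction i using Fin.cases with
  | zero => simp [hy0.ne']
  | succ j =>
    have hslope : |(x 0 : ℝ) / y 0| ≤ 1 := by
      rw [abs_of_pos (div_pos hx0 hy0), div_le_one hy0]
      exact_mod_cast hxy
    calc |(x j.succ : ℝ) - x 0 / y 0 * y j.succ|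
        = |x 0 / y 0 * errorVec ξ y j - errorVec ξ x j| := by
          rw [errorVec_apply, errorVec_apply]
          congr 1
          field_simp
          ring
      _ ≤ |(x 0 : ℝ) / y 0| * |errorVec ξ y j| + |errorVec ξ x j| := by
          rw [← abs_mul]
          exact abs_sub _ _
      _ ≤ 1 * ‖errorVec ξ x‖ + ‖errorVec ξ x‖ := by
          gcongr
          exacts [(norm_le_pi_norm _ j).trans herr, norm_le_pi_norm (errorVec ξ x) j]
      _ = 2 * ‖errorVec ξ x‖ := by ring

lemma gramDet_pair_le_of_norm_errorVec_le (hx : 0 < x 0) (hxy : x 0 ≤ y 0)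
    (herr : ‖errorVec ξ y‖ ≤ ‖errorVec ξ x‖) (hE : ‖errorVec ξ y‖ ≤ E) :
    (gramDet ![x, y] : ℝ) ≤
      (2 * (d + 1) * (1 + ‖ξ‖ + E) * (‖errorVec ξ x‖ * y 0)) ^ 2 := by
  have hcoord (i : Fin (d + 1)) :
      ((x i : ℝ) - x 0 / y 0 * y i) ^ 2 ≤ (2 * ‖errorVec ξ x‖) ^ 2 := by
    rw [← sq_abs]
    gcongr
    exact abs_sub_div_mul_le_of_norm_errorVec_le hx hxy herr i
  calc (gramDet ![x, y] : ℝ)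
      ≤ (∑ i, ((x i : ℝ) - x 0 / y 0 * y i) ^ 2) * (y ⬝ᵥ y : ℤ) := gramDet_pair_le x y _
    _ ≤ ((d + 1) * (2 * ‖errorVec ξ x‖) ^ 2) * ((d + 1) * ((1 + ‖ξ‖ + E) * y 0) ^ 2) := by
        refine mul_le_mul ?_ (dotProduct_self_le_of_norm_errorVec_le (hx.trans_le hxy) hE)
          (by exact_mod_cast Finset.sum_nonneg fun i _ => mul_self_nonneg (y i)) (by positivity)
        simpa using Finset.sum_le_card_nsmul Finset.univ _ _ fun i _ => hcoord i
    _ = _ := by ring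

lemma logHeight_line_sup_line_le (hx : 0 < x 0) (hxy : x 0 ≤ y 0)
    (herr : ‖errorVec ξ y‖ ≤ ‖errorVec ξ x‖) (hE : ‖errorVec ξ y‖ ≤ E)
    (hpos : 0 < ‖errorVec ξ x‖) (hindep : LinearIndependent ℤ ![x, y]) :
    logHeight (line x ⊔ line y) ≤ Real.log (2 * (d + 1) * (1 + ‖ξ‖ + E)) +
      (Real.log ‖errorVec ξ x‖ + Real.log (y 0)) := by
  have hE0 : 0 ≤ E := (norm_nonneg _).trans hE
  have hy0 : (0 : ℝ) < y 0 := by exact_mod_cast hx.trans_le hxy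
  have hsq : (sqHeight (line x ⊔ line y) : ℝ) ≤
      (2 * (d + 1) * (1 + ‖ξ‖ + E) * (‖errorVec ξ x‖ * y 0)) ^ 2 := by
    refine le_trans ?_ (gramDet_pair_le_of_norm_errorVec_le hx hxy herr hE)
    exact_mod_cast line_sup_line x y ▸ sqHeight_span_le_gramDet hindep
  rw [logHeight, div_le_iff₀ zero_lt_two, mul_comm, ← Nat.cast_two,
    ← Real.log_mul hpos.ne' hy0.ne', ← Real.log_mul (by positivity) (by positivity),
    ← Real.log_pow]
  exact Real.log_le_log (by exact_mod_cast sqHeight_pos _) hsq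

lemma sum_mul_eq_mul_sub_sum_errorVec (c : Fin (d + 1) → ℝ) (x : Fin (d + 1) → ℤ) :
    ∑ i, c i * x i =
      x 0 * (c 0 + ∑ j : Fin d, c j.succ * ξ j) - ∑ j : Fin d, c j.succ * errorVec ξ x j := by
  simp only [Fin.sum_univ_succ, errorVec_apply, mul_add, Finset.mul_sum, add_sub_assoc,
    ← Finset.sum_sub_distrib, mul_comm (c 0)]
  exact congrArg _ (Finset.sum_congr rfl fun j _ => by ring)

lemma add_sum_eq_zero_of_eventually_sum_mul_eq_zero {x : ℕ → Fin (d + 1) → ℤ}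
    (hx : Tendsto (fun n => x n 0) atTop atTop) (hE : ∀ n, ‖errorVec ξ (x n)‖ ≤ E)
    {c : Fin (d + 1) → ℝ} (hc : ∀ᶠ n in atTop, ∑ i, c i * x n i = 0) :
    c 0 + ∑ j : Fin d, c j.succ * ξ j = 0 := by
  set l : ℝ := c 0 + ∑ j : Fin d, c j.succ * ξ j
  have hbound : ∀ᶠ n in atTop, (x n 0 : ℝ) * |l| ≤ ∑ j : Fin d, |c j.succ| * E := by
    filter_upwards [hc, hx.eventually_ge_atTop 0] with n hn hn0
    rw [sum_mul_eq_mul_sub_sum_errorVec, sub_eq_zero] at hn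
    rw [← abs_of_nonneg (by exact_mod_cast hn0 : (0 : ℝ) ≤ x n 0), ← abs_mul, hn]
    refine (Finset.abs_sum_le_sum_abs _ _).trans (Finset.sum_le_sum fun j _ => ?_)
    rw [abs_mul]
    gcongr
    exact (norm_le_pi_norm _ j).trans (hE n)
  by_contra hl
  have htop : Tendsto (fun n => (x n 0 : ℝ) * |l|) atTop atTop :=
    (tendsto_intCast_atTop_atTop.comp hx).atTop_mul_const (abs_pos.2 hl)
  obtain ⟨n, hn, hn'⟩ := (hbound.and (htop.eventually_gt_atTop _)).exists
  exact hn'.not_ge hn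

lemma frequently_not_line_le (hirr : TotallyIrrational ξ) {x : ℕ → Fin (d + 1) → ℤ}
    (hx : Tendsto (fun n => x n 0) atTop atTop) (hE : ∀ n, ‖errorVec ξ (x n)‖ ≤ E)
    {W : Submodule ℚ (Fin (d + 1) → ℚ)} (hW : W ≠ ⊤) : ∃ᶠ n in atTop, ¬ line (x n) ≤ W := by
  obtain ⟨f, hf0, hWf⟩ := W.exists_le_ker_of_lt_top hW.lt_top
  obtain ⟨c, rfl⟩ := (dotProductEquiv ℚ (Fin (d + 1))).surjective f
  intro hev
  have hc : ∀ᶠ n in atTop, ∑ i, (c i : ℝ) * x n i = 0 := hev.mono fun n hn => by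
    have hmem : c ⬝ᵥ castRat _ (x n) = 0 :=
      hWf (not_not.1 hn (mem_span_singleton_self _))
    exact_mod_cast hmem
  refine hf0 ?_
  rw [eq_zero_of_add_sum_eq_zero hirr (add_sum_eq_zero_of_eventually_sum_mul_eq_zero hx hE hc),
    map_zero]

end Line

section MinimalPoints

variable {d : ℕ} {ξ : Fin d → ℝ} {x : ℕ → Fin (d + 1) → ℤ}

/-- A sequence of minimal points of `ξ`: the first term has denominator `x₀ = 1`, and each further
term has the least possible denominator among all integer points with `x₀ > 0` that approximate `ξ`
better than the preceding term. -/
structure IsMinimalPointSeq (ξ : Fin d → ℝ) (x : ℕ → Fin (d + 1) → ℤ) : Prop where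
  denom_zero : x 0 0 = 1
  pos : ∀ n, 0 < x n 0
  error_succ_lt : ∀ n, ‖errorVec ξ (x (n + 1))‖ < ‖errorVec ξ (x n)‖
  error_le : ∀ n y, 0 < y 0 → y 0 < x (n + 1) 0 → ‖errorVec ξ (x n)‖ ≤ ‖errorVec ξ y‖

lemma exists_isMinimalPointSeq (hirr : TotallyIrrational ξ) (hd : 0 < d)
    (happrox : ∀ t > 0, ∃ y : Fin (d + 1) → ℤ, 0 < y 0 ∧ ‖errorVec ξ y‖ < t) :
    ∃ x, IsMinimalPointSeq ξ x := by
  have hnext (z : {z : Fin (d + 1) → ℤ // 0 < z 0}) : ∃ y : {y : Fin (d + 1) → ℤ // 0 < y 0},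
      ‖errorVec ξ y.1‖ < ‖errorVec ξ z.1‖ ∧
      ∀ w, 0 < w 0 → w 0 < y.1 0 → ‖errorVec ξ z.1‖ ≤ ‖errorVec ξ w‖ := by
    obtain ⟨y, ⟨hy, hyz⟩, hmin⟩ := exists_minimalFor_of_wellFoundedLT
      (fun y => 0 < y 0 ∧ ‖errorVec ξ y‖ < ‖errorVec ξ z.1‖) (fun y => (y 0).toNat)
      (happrox _ (norm_pos_iff.2 (errorVec_ne_zero hirr hd z.2.ne')))
    refine ⟨⟨y, hy⟩, hyz, fun w hw hwy => not_lt.1 fun hwz => ?_⟩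
    have := hmin ⟨hw, hwz⟩ (by lia)
    lia
  choose next hlt hle using hnext
  refine ⟨fun n => (next^[n] ⟨fun _ => 1, one_pos⟩).1, rfl,
    fun n => (next^[n] _).2, fun n => ?_, fun n => ?_⟩ <;> rw [Function.iterate_succ_apply']
  exacts [hlt _, hle _]

namespace IsMinimalPointSeq

lemma error_strictAnti (hx : IsMinimalPointSeq ξ x) :
    StrictAnti fun n => ‖errorVec ξ (x n)‖ :=
  strictAnti_nat_of_succ_lt hx.error_succ_lt

lemma error_le_zero (hx : IsMinimalPointSeq ξ x) (n : ℕ) :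
    ‖errorVec ξ (x n)‖ ≤ ‖errorVec ξ (x 0)‖ :=
  hx.error_strictAnti.antitone n.zero_le

lemma error_pos (hx : IsMinimalPointSeq ξ x) (n : ℕ) : 0 < ‖errorVec ξ (x n)‖ :=
  (norm_nonneg _).trans_lt (hx.error_succ_lt n)

lemma denom_le_succ (hx : IsMinimalPointSeq ξ x) (n : ℕ) : x n 0 ≤ x (n + 1) 0 := by
  rcases n with _ | n
  · exact hx.denom_zero ▸ hx.pos 1
  · exact not_lt.1 fun hlt => (hx.error_le n _ (hx.pos _) hlt).not_gt
      ((hx.error_succ_lt _).trans (hx.error_succ_lt _))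

lemma isUnit_of_eq_smul (hx : IsMinimalPointSeq ξ x) {n : ℕ} (g : ℤ) (y : Fin (d + 1) → ℤ)
    (hy : x n = g • y) : IsUnit g := by
  have hdenom : x n 0 = g * y 0 := congrFun hy 0
  rcases n with _ | n
  · exact .of_mul_eq_one _ (hdenom.symm.trans hx.denom_zero)
  wlog hg : 0 ≤ g generalizing g y
  · refine (IsUnit.neg_iff g).1 (this (-g) (-y) (by rwa [neg_smul_neg]) ?_ (by lia))
    rwa [Pi.neg_apply, neg_mul_neg]
  have hpos : 0 < g * y 0 := hdenom ▸ hx.pos (n + 1)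
  have hy0 : 0 < y 0 := pos_of_mul_pos_right hpos hg
  have hg0 : 0 < g := pos_of_mul_pos_left hpos hy0.le
  refine Int.isUnit_iff.2 (Or.inl (le_antisymm (not_lt.1 fun hg1 => ?_) hg0))
  have hlt : |(g : ℝ)| * ‖errorVec ξ y‖ < ‖errorVec ξ (x n)‖ := by
    rw [← norm_errorVec_zsmul, ← hy]
    exact hx.error_succ_lt n
  have hle := hx.error_le n y hy0 (hdenom ▸ lt_mul_of_one_lt_left hy0 hg1)
  have hg1' : (1 : ℝ) ≤ |(g : ℝ)| := by exact_mod_cast Int.one_le_abs hg0.ne'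
  linarith [le_mul_of_one_le_left (norm_nonneg (errorVec ξ y)) hg1']

-- In a relation `a x = -b y` the denominators give `|b| ≤ |a|`, and the errors give `|a| < |b|`
-- unless `a = b = 0`.
lemma linearIndependent_pair (hx : IsMinimalPointSeq ξ x) (n : ℕ) :
    LinearIndependent ℤ ![x n, x (n + 1)] := by
  refine LinearIndependent.pair_iff.2 fun a b hab => ?_
  rw [add_eq_zero_iff_eq_neg, ← neg_smul] at hab
  have hdenom : |b| * x (n + 1) 0 = |a| * x n 0 := by
    have := congrArg (|·|) (congrFun hab 0)
    simpa [abs_mul, abs_of_pos (hx.pos _)] using this.symm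
  have herr : |(a : ℝ)| * ‖errorVec ξ (x n)‖ = |(b : ℝ)| * ‖errorVec ξ (x (n + 1))‖ := by
    have := congrArg (fun z => ‖errorVec ξ z‖) hab
    simpa only [norm_errorVec_zsmul, Int.cast_neg, abs_neg] using this
  have hba : |b| ≤ |a| := by
    refine le_of_mul_le_mul_right ?_ (hx.pos n)
    rw [← hdenom]
    exact mul_le_mul_of_nonneg_left (hx.denom_le_succ n) (abs_nonneg b)
  have hb : b = 0 := by
    by_contra hb
    have hba' : |(b : ℝ)| ≤ |(a : ℝ)| := by exact_mod_cast hba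
    have hb' : 0 < |(b : ℝ)| := by positivity
    have := mul_le_mul_of_nonneg_right hba' (hx.error_pos n).le
    linarith [mul_lt_mul_of_pos_left (hx.error_succ_lt n) hb']
  refine ⟨?_, hb⟩
  simpa [hb, (hx.error_pos n).ne'] using herr

-- The points are distinct and `‖x n‖` is at most a constant times the denominator of `x n`.
lemma tendsto_denom (hx : IsMinimalPointSeq ξ x) : Tendsto (fun n => x n 0) atTop atTop := by
  have hinj : Function.Injective x := fun m n hmn =>
    hx.error_strictAnti.injective (congrArg (fun z => ‖errorVec ξ z‖) hmn)
  have hnorm : Tendsto (fun n => ‖x n‖) atTop atTop := by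
    refine (tendsto_norm_cocompact_atTop (E := Fin (d + 1) → ℤ)).comp ?_
    rw [cocompact_eq_cofinite, ← Nat.cofinite_eq_atTop]
    exact hinj.tendsto_cofinite
  have hC : 0 < 1 + ‖ξ‖ + ‖errorVec ξ (x 0)‖ := by positivity
  refine (tendsto_intCast_atTop_iff (R := ℝ)).1 ((tendsto_const_mul_atTop_of_pos hC).1 ?_)
  exact tendsto_atTop_mono
    (fun n => norm_le_of_norm_errorVec_le (hx.pos n) (hx.error_le_zero n)) hnorm

lemma tendsto_log_denom (hx : IsMinimalPointSeq ξ x) :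
    Tendsto (fun n => Real.log (x n 0)) atTop atTop :=
  Real.tendsto_log_atTop.comp (tendsto_intCast_atTop_atTop.comp hx.tendsto_denom)

lemma finrank_line (hx : IsMinimalPointSeq ξ x) (n : ℕ) :
    Module.finrank ℚ (line (x n)) = 1 := by
  refine finrank_span_singleton fun h0 => (hx.pos n).ne' ?_
  simpa using congrFun h0 0

lemma finrank_line_sup_line (hx : IsMinimalPointSeq ξ x) (n : ℕ) :
    Module.finrank ℚ ↥(line (x n) ⊔ line (x (n + 1))) = 2 := by
  rw [line_sup_line, ← card_eq_finrank_span_castRat (hx.linearIndependent_pair n), Fintype.card_fin]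

lemma exists_logHeight_bounds (hx : IsMinimalPointSeq ξ x) : ∃ C : ℝ, ∀ n,
    Real.log (x n 0) ≤ logHeight (line (x n)) ∧
    logHeight (line (x n)) ≤ C + Real.log (x n 0) ∧
    logHeight (line (x n) ⊔ line (x (n + 1))) ≤
      C + (Real.log ‖errorVec ξ (x n)‖ + Real.log (x (n + 1) 0)) := by
  refine ⟨Real.log (2 * (d + 1) * (1 + ‖ξ‖ + ‖errorVec ξ (x 0)‖)), fun n =>
    ⟨log_le_logHeight_line (hx.pos _) hx.isUnit_of_eq_smul,
    (logHeight_line_le (hx.pos _) (hx.error_le_zero _) hx.isUnit_of_eq_smul).trans ?_,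
    logHeight_line_sup_line_le (hx.pos _) (hx.denom_le_succ n) (hx.error_succ_lt _).le
      (hx.error_le_zero _) (hx.error_pos _) (hx.linearIndependent_pair n)⟩⟩
  gcongr
  linarith

end IsMinimalPointSeq

end MinimalPoints

section UniformApproximation

variable {d : ℕ} {ξ : Fin d → ℝ} {γ : ℝ}

lemma eventually_exists_norm_errorVec_lt (hγ : UnifApprox ξ γ) :
    ∀ᶠ Q : ℝ in atTop, ∃ y : Fin (d + 1) → ℤ,
      0 < y 0 ∧ y 0 ≤ Q ∧ ‖errorVec ξ y‖ < Q ^ (-γ) := by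
  filter_upwards [hγ, eventually_gt_atTop 0] with Q ⟨q, a, hq, hqQ, ha⟩ hQ
  exact ⟨Fin.cons q a, hq, hqQ, (pi_norm_lt_iff (by positivity)).2 ha⟩

lemma exists_norm_errorVec_lt (hγ : UnifApprox ξ γ) (hγ0 : 0 < γ) {t : ℝ} (ht : 0 < t) :
    ∃ y : Fin (d + 1) → ℤ, 0 < y 0 ∧ ‖errorVec ξ y‖ < t := by
  obtain ⟨Q, ⟨y, hy, -, herr⟩, hQ⟩ := ((eventually_exists_norm_errorVec_lt hγ).and
    ((tendsto_rpow_neg_atTop hγ0).eventually_lt_const ht)).exists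
  exact ⟨y, hy, herr.trans hQ⟩

lemma IsMinimalPointSeq.eventually_log_error_le {x : ℕ → Fin (d + 1) → ℤ}
    (hx : IsMinimalPointSeq ξ x) (hγ : UnifApprox ξ γ) :
    ∀ᶠ n in atTop, Real.log ‖errorVec ξ (x n)‖ ≤ γ * Real.log 2 - γ * Real.log (x (n + 1) 0) := by
  have hhalf : Tendsto (fun n => (x (n + 1) 0 : ℝ) / 2) atTop atTop :=
    (tendsto_intCast_atTop_atTop.comp
      (hx.tendsto_denom.comp (tendsto_add_atTop_nat 1))).atTop_div_const two_pos
  filter_upwards [hhalf.eventually (eventually_exists_norm_errorVec_lt hγ)]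
    with n ⟨y, hy, hyx, herr⟩
  have hpos : (0 : ℝ) < x (n + 1) 0 := by exact_mod_cast hx.pos (n + 1)
  have hlt : y 0 < x (n + 1) 0 := by exact_mod_cast hyx.trans_lt (half_lt_self hpos)
  calc Real.log ‖errorVec ξ (x n)‖ ≤ Real.log ((x (n + 1) 0 / 2) ^ (-γ)) :=
        Real.log_le_log (hx.error_pos n) ((hx.error_le n y hy hlt).trans herr.le)
    _ = γ * Real.log 2 - γ * Real.log (x (n + 1) 0) := by
        rw [Real.log_rpow (half_pos hpos), Real.log_div hpos.ne' two_ne_zero]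
        ring

end UniformApproximation

section ExponentBound

variable {d : ℕ} {ξ : Fin d → ℝ} {γ τ c : ℝ}

/-- Every integer point whose denominator `x₀` is large approximates `ξ` with error at least
`c * x₀ ^ (-τ)`. -/
def ErrorLowerBound (ξ : Fin d → ℝ) (τ c : ℝ) : Prop :=
  ∀ᶠ x : Fin (d + 1) → ℤ in comap (fun x => x 0) atTop, c ≤ ‖errorVec ξ x‖ * (x 0 : ℝ) ^ τ

namespace IsMinimalPointSeq

variable {x : ℕ → Fin (d + 1) → ℤ}

lemma eventually_mul_log_denom_succ_le (hx : IsMinimalPointSeq ξ x) (hc : 0 < c)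
    (hlow : ErrorLowerBound ξ τ c) (hγ : UnifApprox ξ γ) :
    ∀ᶠ n in atTop, γ * Real.log (x (n + 1) 0) ≤
      γ * Real.log 2 - Real.log c + τ * Real.log (x n 0) := by
  filter_upwards [(tendsto_comap_iff.2 hx.tendsto_denom).eventually hlow,
    hx.eventually_log_error_le hγ] with n hn hlog
  have hpos : (0 : ℝ) < x n 0 := by exact_mod_cast hx.pos n
  have := Real.log_le_log hc hn
  rw [Real.log_mul (hx.error_pos n).ne' (by positivity), Real.log_rpow hpos] at this
  linarith

lemma eventually_logHeight_estimates (hx : IsMinimalPointSeq ξ x) (hc : 0 < c) (hτ : 0 < τ)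
    (hlow : ErrorLowerBound ξ τ c) (hγ : UnifApprox ξ γ) {g : ℝ} (hg : 0 < g) (hgγ : g < γ) :
    ∀ᶠ n in atTop, 0 < logHeight (line (x n)) ∧
      logHeight (line (x n) ⊔ line (x (n + 1))) ≤ (1 - g) * logHeight (line (x (n + 1))) ∧
      g * logHeight (line (x (n + 1))) ≤ τ * logHeight (line (x n)) := by
  obtain ⟨C, hC⟩ := hx.exists_logHeight_bounds
  have hlog := (tendsto_add_atTop_iff_nat 1).2 hx.tendsto_log_denom
  filter_upwards [hx.tendsto_log_denom.eventually_gt_atTop 0, hx.eventually_log_error_le hγ,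
    hx.eventually_mul_log_denom_succ_le hc hlow hγ,
    (hlog.const_mul_atTop (sub_pos.2 hgγ)).eventually_ge_atTop (C + γ * Real.log 2 + g * C),
    (hlog.const_mul_atTop (sub_pos.2 hgγ)).eventually_ge_atTop
      (γ * Real.log 2 - Real.log c + g * C)] with n hpos herr hdenom hlarge hlarge'
  obtain ⟨hlower, -, hsup⟩ := hC n
  obtain ⟨hlower', hupper', -⟩ := hC (n + 1)
  have hg_upper := mul_le_mul_of_nonneg_left hupper' hg.le
  refine ⟨hpos.trans_le hlower, ?_, ?_⟩
  · linarith
  · linarith [mul_le_mul_of_nonneg_left hlower hτ.le]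

end IsMinimalPointSeq

theorem chainCoeff_nonneg_of_errorLowerBound (hirr : TotallyIrrational ξ) (hd : 0 < d) (hτ : 0 < τ)
    (hc : 0 < c) (hlow : ErrorLowerBound ξ τ c) (hγ : UnifApprox ξ γ) {g : ℝ} (hg : 0 < g)
    (hgγ : g < γ) : 0 ≤ chainCoeff g (g / τ) d := by
  obtain ⟨x, hx⟩ := exists_isMinimalPointSeq hirr hd
    fun t ht => exists_norm_errorVec_lt hγ (hg.trans hgγ) ht
  obtain ⟨N, hN⟩ := eventually_atTop.1 (hx.eventually_logHeight_estimates hc hτ hlow hγ hg hgγ)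
  have hg1 : 0 ≤ 1 - g :=
    nonneg_of_mul_nonneg_left ((logHeight_nonneg _).trans (hN N le_rfl).2.1) (hN (N + 1) (by lia)).1
  have hchain : SubspaceChain logHeight (g / τ) 1 1 (1 - g) fun n => line (x (n + N)) := by
    have hest (n : ℕ) := n.add_right_comm 1 N ▸ hN (n + N) (Nat.le_add_left N n)
    refine ⟨fun n => hx.finrank_line _, fun n => ?_, fun W hW => ?_, fun n => ?_, fun n => ?_,
      fun n => (hest n).1⟩
    · rw [n.add_right_comm]
      exact hx.finrank_line_sup_line _
    · exact frequently_not_line_le hirr ((tendsto_add_atTop_iff_nat N).2 hx.tendsto_denom)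
        (fun n => hx.error_le_zero _) hW
    · rw [one_mul]
      exact (hest n).2.1
    · have hratio : g / τ * logHeight (line (x (n + 1 + N))) ≤ logHeight (line (x (n + N))) := by
        rw [div_mul_eq_mul_div, div_le_iff₀' hτ]
        exact (hest n).2.2
      have hsup := mul_le_mul_of_nonneg_left (hest n).2.1 (div_pos hg hτ).le
      linarith [mul_le_mul_of_nonneg_left hratio hg1]
  exact chainCoeff_nonneg_of_subspaceChain logHeight_nonneg logHeight_sup_add_logHeight_inf_le
    (div_pos hg hτ) hg (by simp) hchain

end ExponentBound

section Liouville

open MvPolynomial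

variable {d s : ℕ} {ξ : Fin d → ℝ} {p : MvPolynomial (Fin d) ℚ}

lemma pow_mul_prod_div_pow {σ F : Type*} [Field F] {q : F} (hq : q ≠ 0) (t : Finset σ)
    (a : σ → F) {m : σ → ℕ} (hm : ∑ i ∈ t, m i ≤ s) :
    q ^ s * ∏ i ∈ t, (a i / q) ^ m i = q ^ (s - ∑ i ∈ t, m i) * ∏ i ∈ t, a i ^ m i := by
  simp only [div_pow, Finset.prod_div_distrib, Finset.prod_pow_eq_pow_sum, pow_sub₀ q hq hm]
  field

lemma exists_forall_mul_pow_mul_eval_eq_intCast {σ : Type*} (p : MvPolynomial σ ℚ)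
    (hdeg : p.totalDegree ≤ s) :
    ∃ M : ℤ, M ≠ 0 ∧ ∀ (q : ℤ) (a : σ → ℤ), q ≠ 0 →
      ∃ z : ℤ, M * (q : ℚ) ^ s * eval (fun i => (a i : ℚ) / q) p = z := by
  obtain ⟨M, hM⟩ := IsLocalization.exist_integer_multiples (nonZeroDivisors ℤ) p.support p.coeff
  refine ⟨M, nonZeroDivisors.ne_zero M.2, fun q a hq => ?_⟩
  suffices h : (M : ℤ) * (q : ℚ) ^ s * eval (fun i => (a i : ℚ) / q) p ∈
      (algebraMap ℤ ℚ).range from h.imp fun z hz => hz.symm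
  rw [eval_eq, Finset.mul_sum]
  refine sum_mem fun m hm => ?_
  have hterm : (M : ℤ) * (q : ℚ) ^ s * (p.coeff m * ∏ i ∈ m.support, ((a i : ℚ) / q) ^ m i) =
      ((M : ℤ) • p.coeff m) *
        (q ^ (s - ∑ i ∈ m.support, m i) * ∏ i ∈ m.support, (a i : ℚ) ^ m i) := by
    rw [← pow_mul_prod_div_pow (Int.cast_ne_zero.2 hq) _ _ ((le_totalDegree hm).trans hdeg),
      zsmul_eq_mul]
    ring
  rw [hterm]
  exact mul_mem (hM m hm) ⟨q ^ (s - ∑ i ∈ m.support, m i) * ∏ i ∈ m.support, a i ^ m i, by simp⟩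

lemma exists_le_pow_mul_abs_eval {σ : Type*} (p : MvPolynomial σ ℚ)
    (hdeg : p.totalDegree ≤ s) :
    ∃ c : ℝ, 0 < c ∧ ∀ (q : ℤ) (a : σ → ℤ), 0 < q → eval (fun i => (a i : ℚ) / q) p ≠ 0 →
      c ≤ (q : ℝ) ^ s * |((eval (fun i => (a i : ℚ) / q) p : ℚ) : ℝ)| := by
  obtain ⟨M, hM, hval⟩ := exists_forall_mul_pow_mul_eval_eq_intCast p hdeg
  refine ⟨|(M : ℝ)|⁻¹, by positivity, fun q a hq hne => ?_⟩
  obtain ⟨z, hz⟩ := hval q a hq.ne'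
  have hq0 : (q : ℚ) ≠ 0 := Int.cast_ne_zero.2 hq.ne'
  have hz0 : z ≠ 0 := by
    rintro rfl
    simp [hM, hq0, hne] at hz
  have hzR : |(z : ℝ)| =
      |(M : ℝ)| * ((q : ℝ) ^ s * |((eval (fun i => (a i : ℚ) / q) p : ℚ) : ℝ)|) := by
    rw [← abs_of_pos (by positivity : 0 < (q : ℝ) ^ s), ← abs_mul, ← abs_mul, ← mul_assoc]
    exact_mod_cast congrArg (|·|) hz.symm
  rw [inv_le_iff_one_le_mul₀' (by positivity), ← hzR]
  exact_mod_cast Int.one_le_abs hz0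

lemma aeval_ratCast {σ : Type*} (p : MvPolynomial σ ℚ) (v : σ → ℚ) :
    aeval (fun j => (v j : ℝ)) p = (eval v p : ℚ) := by
  rw [← aeval_eq_eval]
  exact aeval_algebraMap_apply ℝ v p

lemma exists_eventually_abs_aeval_le {σ : Type*} [Fintype σ] {ξ : σ → ℝ} {p : MvPolynomial σ ℚ}
    (hξ : aeval ξ p = 0) :
    ∃ K : ℝ, 0 < K ∧ ∀ᶠ y in nhds ξ, |aeval y p| ≤ K * ‖y - ξ‖ := by
  have hdiff : DifferentiableAt ℝ (fun y : σ → ℝ => aeval y p) ξ := by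
    simp only [aeval_def, eval₂_eq']
    fun_prop
  obtain ⟨K, hK, hbound⟩ := hdiff.isBigO_sub.exists_pos
  exact ⟨K, hK, by simpa [hξ] using hbound.bound⟩

/-- The rational point `(x₁, …, x_d) / x₀` with homogeneous coordinates `x`. -/
def ratPoint (x : Fin (d + 1) → ℤ) : Fin d → ℚ := fun j => x j.succ / x 0

lemma norm_ratPoint_sub {x : Fin (d + 1) → ℤ} (hx : 0 < x 0) :
    ‖(fun j => (ratPoint x j : ℝ)) - ξ‖ = ‖errorVec ξ x‖ / x 0 := by
  have hx0 : (0 : ℝ) < x 0 := by exact_mod_cast hx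
  have hsmul : (fun j => (ratPoint x j : ℝ)) - ξ = -((x 0 : ℝ)⁻¹ • errorVec ξ x) := by
    ext j
    simp only [ratPoint, errorVec_apply, Pi.sub_apply, Pi.neg_apply, Pi.smul_apply, smul_eq_mul,
      Rat.cast_div, Rat.cast_intCast]
    field
  rw [hsmul, norm_neg, norm_smul, norm_inv, Real.norm_of_nonneg hx0.le, inv_mul_eq_div]

lemma tendsto_ratPoint (ξ : Fin d → ℝ) :
    Tendsto (fun (x : Fin (d + 1) → ℤ) j => (ratPoint x j : ℝ))
      (comap (fun x => x 0) atTop ⊓ 𝓟 {x | ‖errorVec ξ x‖ ≤ 1}) (nhds ξ) := by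
  have hdenom : Tendsto (fun x : Fin (d + 1) → ℤ => x 0)
      (comap (fun x => x 0) atTop ⊓ 𝓟 {x | ‖errorVec ξ x‖ ≤ 1}) atTop :=
    tendsto_comap.mono_left inf_le_left
  rw [tendsto_iff_norm_sub_tendsto_zero]
  refine squeeze_zero' (.of_forall fun x => norm_nonneg _) ?_
    (tendsto_inv_atTop_zero.comp ((tendsto_intCast_atTop_atTop (R := ℝ)).comp hdenom))
  filter_upwards [hdenom.eventually_gt_atTop 0, mem_inf_of_right (mem_principal_self _)]
    with x hx herr
  have hx0 : (0 : ℝ) < x 0 := by exact_mod_cast hx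
  rw [norm_ratPoint_sub hx, div_eq_mul_inv]
  exact mul_le_of_le_one_left (inv_nonneg.2 hx0.le) herr

theorem exists_errorLowerBound_of_aeval_eq_zero (hs : 1 ≤ s) (hdeg : p.totalDegree ≤ s)
    (hξ : aeval ξ p = 0)
    (hp : ∀ᶠ v in comap (fun (v : Fin d → ℚ) j => (v j : ℝ)) (nhds ξ), eval v p ≠ 0) :
    ∃ c > 0, ErrorLowerBound ξ (s - 1) c := by
  obtain ⟨c, hc, hlow⟩ := exists_le_pow_mul_abs_eval p hdeg
  obtain ⟨K, hK, hlip⟩ := exists_eventually_abs_aeval_le hξ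
  have hnear := (tendsto_ratPoint ξ).eventually hlip
  have hne := (tendsto_comap_iff.2 (tendsto_ratPoint ξ)).eventually hp
  rw [eventually_inf_principal] at hnear hne
  refine ⟨min 1 (c / K), by positivity, ?_⟩
  filter_upwards [hnear, hne, preimage_mem_comap (eventually_gt_atTop 0)] with x hnear hne hx
  have hx1 : (1 : ℝ) ≤ x 0 := by exact_mod_cast hx
  rcases le_total 1 ‖errorVec ξ x‖ with hfar | hclose
  · refine (min_le_left _ _).trans (one_le_mul_of_one_le_of_one_le hfar ?_)
    exact Real.one_le_rpow hx1 (sub_nonneg.2 (by exact_mod_cast hs))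
  · refine (min_le_right _ _).trans ((div_le_iff₀' hK).2 ?_)
    have hle := hnear hclose
    rw [aeval_ratCast, norm_ratPoint_sub hx] at hle
    calc c ≤ (x 0 : ℝ) ^ s * |((eval (ratPoint x) p : ℚ) : ℝ)| := hlow _ _ hx (hne hclose)
      _ ≤ (x 0 : ℝ) ^ s * (K * (‖errorVec ξ x‖ / x 0)) := by gcongr
      _ = K * (‖errorVec ξ x‖ * (x 0 : ℝ) ^ ((s : ℝ) - 1)) := by
        rw [Real.rpow_sub_one (by positivity), Real.rpow_natCast]
        ring

lemma eventually_comap_notMem_of_finite (hirr : TotallyIrrational ξ) (hd : 0 < d)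
    {S : Set (Fin d → ℚ)} (hS : S.Finite) :
    ∀ᶠ v in comap (fun (v : Fin d → ℚ) j => (v j : ℝ)) (nhds ξ), v ∉ S := by
  set ι : (Fin d → ℚ) → Fin d → ℝ := fun v j => v j
  have hξ : ξ ∉ ι '' S := by
    rintro ⟨v, -, rfl⟩
    exact irrational_of_totallyIrrational hirr ⟨0, hd⟩ ⟨v ⟨0, hd⟩, rfl⟩
  have hnhds := (hS.image ι).isClosed.isOpen_compl.mem_nhds hξ
  exact mem_of_superset (preimage_mem_comap hnhds) fun v hv hvS => hv ⟨v, hvS, rfl⟩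

end Liouville

lemma chainCoeff_neg_of_root_lt {τ H g : ℝ} {n : ℕ} (hτ : 0 < τ) (hH : 0 < H)
    (hroot : 1 - H = H * ∑ k ∈ Finset.range n, (H / τ) ^ (k + 1)) (hHg : H < g) :
    chainCoeff g (g / τ) (n + 1) < 0 := by
  have hsum : H * ∑ k ∈ Finset.range (n + 1), (H / τ) ^ k = 1 := by
    rw [Finset.sum_range_succ', mul_add, ← hroot, pow_zero]
    ring
  have hlt : 1 < g * ∑ k ∈ Finset.range (n + 1), (g / τ) ^ k := by
    calc 1 = H * ∑ k ∈ Finset.range (n + 1), (H / τ) ^ k := hsum.symm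
      _ ≤ H * ∑ k ∈ Finset.range (n + 1), (g / τ) ^ k := by gcongr
      _ < g * ∑ k ∈ Finset.range (n + 1), (g / τ) ^ k := by
        have : 0 < g := hH.trans hHg
        exact mul_lt_mul_of_pos_right hHg (Finset.sum_pos (fun k _ => by positivity) (by simp))
  rw [chainCoeff]
  linarith

end UniformExponent

open UniformExponent in
theorem uniform_exponent_le_of_on_hypersurface_general
    (d s : ℕ) (hd : 1 ≤ d) (hs : 2 ≤ s)
    (f : MvPolynomial (Fin d) ℚ) (hdeg : f.totalDegree ≤ s)
    (ξ : Fin d → ℝ)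
    (hirr : TotallyIrrational ξ)
    (hsurf : MvPolynomial.aeval ξ f = 1)
    (hloc : ∀ᶠ x in comap (fun (x : Fin d → ℚ) j => (x j : ℝ)) (nhds ξ),
      MvPolynomial.eval x f ≠ 1)
    (H : ℝ) (hHpos : 0 < H)
    (hHroot : 1 - H = H * ∑ k ∈ Finset.range (d - 1), (H / ((s : ℝ) - 1)) ^ (k + 1)) :
    ∀ γ : ℝ, UnifApprox ξ γ → γ ≤ H := by
  intro γ hγ
  by_contra! hHγ
  obtain ⟨g, hHg, hgγ⟩ := exists_between hHγ
  have hτ : 0 < (s : ℝ) - 1 := sub_pos.2 (by exact_mod_cast hs)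
  obtain ⟨c, hc, hlow⟩ := exists_errorLowerBound_of_aeval_eq_zero (p := f - 1) (one_le_two.trans hs)
    ((f.totalDegree_sub 1).trans (by simpa using hdeg)) (by simp [hsurf])
    (hloc.mono fun x hx => by simpa [sub_eq_zero] using hx)
  have hnonneg := chainCoeff_nonneg_of_errorLowerBound hirr hd hτ hc hlow hγ (hHpos.trans hHg) hgγ
  rw [← Nat.sub_add_cancel hd] at hnonneg
  exact hnonneg.not_gt (chainCoeff_neg_of_root_lt hτ hHpos hHroot hHg)

/-- Theorem 2b(ii): if `f` is an arbitrary polynomial of degree `s ≥ 2` in `d ≥ 2`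
variables with rational coefficients such that `{x ∈ ℚ^d : f(x) = 1}` is finite, and `ξ`
is totally irrational with `f(ξ) = 1`, then `ω̂(ξ) ≤ H_{d-1,s}`, where `H_{d-1,s}` is
the unique positive root of `1 - x = x · Σ_{k=1}^{d-1} (x/(s-1))^k`. -/
theorem uniform_exponent_le_of_on_hypersurface
    (d s : ℕ) (hd : 2 ≤ d) (hs : 2 ≤ s)
    (f : MvPolynomial (Fin d) ℚ) (hdeg : f.totalDegree = s)
    (hfin : {x : Fin d → ℚ | MvPolynomial.eval x f = 1}.Finite)
    (ξ : Fin d → ℝ)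
    (hirr : TotallyIrrational ξ)
    (hsurf : MvPolynomial.aeval ξ f = 1)
    (H : ℝ) (hHpos : 0 < H)
    (hHroot : 1 - H = H * ∑ k ∈ Finset.range (d - 1), (H / ((s : ℝ) - 1)) ^ (k + 1)) :
    ∀ γ : ℝ, UnifApprox ξ γ → γ ≤ H := by
  exact uniform_exponent_le_of_on_hypersurface_general d s (one_le_two.trans hd) hs f hdeg.le ξ hirr
    hsurf (UniformExponent.eventually_comap_notMem_of_finite hirr (by lia) hfin) H hHpos hHroot
end

section
/- Let s ≥ 2 be an integer, let f be a homogeneous polynomial of degree s in d variables with rational coefficients, let D = D(f) be the common denominator of its coefficients and K = K(f) = sup{|f(x)| : |x| = 1}. Let α = (a₁/q, …, a_d/q) and β = (b₁/r, …, b_d/r) be rational vectors (q, r positive integers, a_i, b_i ∈ ℤ) with f(α − β) ≠ 0. If f(α) = A/q and f(β) = B/r for some integers A and B, then |α − β|^s ≥ 1/(D K q^{s−1} r^{s−1}), where |·| is the Euclidean norm. -/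
/-!
Let `F = D f`, which has integer coefficients. Expanding `F(r a - q b)`, every monomial that
involves both `a` and `b` is divisible by `q r`, so that `F(r a - q b)` is congruent to
`r ^ s F(a) + (-q) ^ s F(b)` modulo `q r`. The hypotheses give `q ∣ F(a)` and `r ∣ F(b)`, hence
`D f(α - β) = F(r a - q b) / (q r) ^ s` is a nonzero integer divided by `(q r) ^ (s - 1)`. This
bounds `|f(α - β)|` from below, while homogeneity bounds it from above by `K |α - β| ^ s`.
-/

open MvPolynomial

section Homogeneous

variable {σ R S : Type*} [CommSemiring R] [CommSemiring S] [Algebra R S]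

theorem aeval_smul_of_isHomogeneous_s10 {f : MvPolynomial σ R} {n : ℕ} (hf : f.IsHomogeneous n)
    (c : S) (x : σ → S) : aeval (c • x) f = c ^ n * aeval x f := by
  rw [aeval_def, aeval_def, eval₂_eq, eval₂_eq, Finset.mul_sum]
  refine Finset.sum_congr rfl fun m hm => ?_
  simp only [Pi.smul_apply, smul_eq_mul, mul_pow]
  rw [Finset.prod_mul_distrib, Finset.prod_pow_eq_pow_sum, ← hf.degree_eq_sum_deg_support hm,
    mul_left_comm]

theorem aeval_zero_of_isHomogeneous {f : MvPolynomial σ R} {n : ℕ} (hf : f.IsHomogeneous n)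
    (hn : n ≠ 0) : aeval (0 : σ → S) f = 0 := by
  simpa [hn] using aeval_smul_of_isHomogeneous_s10 hf (0 : S) 0

end Homogeneous

section Divisibility

variable {σ R : Type*} [CommRing R]

theorem dvd_eval_sub_eval {c : R} {x y : σ → R} (h : ∀ i, c ∣ x i - y i)
    (f : MvPolynomial σ R) : c ∣ eval x f - eval y f := by
  induction f using MvPolynomial.induction_on with
  | C a => simp
  | add f g hf hg =>
    simp only [map_add, add_sub_add_comm]
    exact dvd_add hf hg
  | mul_X f i hf =>
    simp only [map_mul, eval_X]
    exact dvd_mul_sub_mul hf (h i)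

theorem mul_dvd_eval_add_sub_eval_sub_eval {c d : R} {x y : σ → R} (hx : ∀ i, c ∣ x i)
    (hy : ∀ i, d ∣ y i) (f : MvPolynomial σ R) :
    c * d ∣ eval (x + y) f - eval x f - eval y f + eval 0 f := by
  induction f using MvPolynomial.induction_on with
  | C a => simp
  | add f g hf hg =>
    convert dvd_add hf hg using 1
    simp only [map_add]
    ring
  | mul_X f i hf =>
    have hfx : c ∣ eval x f - eval 0 f := dvd_eval_sub_eval (by simpa using hx) f
    have hfy : d ∣ eval y f - eval 0 f := dvd_eval_sub_eval (by simpa using hy) f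
    convert dvd_add (hf.mul_right (x i + y i))
      (dvd_add (mul_dvd_mul hfx (hy i)) (mul_dvd_mul (hx i) hfy)) using 1
    simp only [map_mul, eval_X, Pi.add_apply, Pi.zero_apply]
    ring

theorem mul_dvd_eval_smul_sub_smul {f : MvPolynomial σ R} {n : ℕ} (hf : f.IsHomogeneous n)
    (hn : n ≠ 0) {q r : R} {a b : σ → R} (ha : q ∣ eval a f) (hb : r ∣ eval b f) :
    q * r ∣ eval (r • a - q • b) f := by
  have h_mixed : r * q ∣ eval (r • a - q • b) f - eval (r • a) f - eval (-(q • b)) f := by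
    have h := mul_dvd_eval_add_sub_eval_sub_eval (c := r) (d := q) (x := r • a) (y := -(q • b))
      (by simp) (by simp) f
    rwa [← aeval_eq_eval (f := 0), aeval_zero_of_isHomogeneous hf hn, add_zero,
      ← sub_eq_add_neg] at h
  have h_left : q * r ∣ eval (r • a) f := by
    rw [← aeval_eq_eval, aeval_smul_of_isHomogeneous_s10 hf, mul_comm]
    exact mul_dvd_mul (dvd_pow_self r hn) ha
  have h_right : q * r ∣ eval (-(q • b)) f := by
    rw [← aeval_eq_eval, ← neg_smul, aeval_smul_of_isHomogeneous_s10 hf]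
    exact mul_dvd_mul ((dvd_neg.2 dvd_rfl).trans (dvd_pow_self (-q) hn)) hb
  rw [mul_comm r q, sub_sub] at h_mixed
  exact (dvd_sub_left (dvd_add h_left h_right)).1 h_mixed

end Divisibility

section Integrality

variable {σ K : Type*} {F : MvPolynomial σ ℤ} {n : ℕ}

theorem intCast_eval_eq_pow_mul_aeval [CommRing K] (hF : F.IsHomogeneous n) {c : K} {a : σ → ℤ}
    {x : σ → K} (hx : ∀ i, (a i : K) = c * x i) : (eval a F : K) = c ^ n * aeval x F := by
  have hcx : algebraMap ℤ K ∘ a = c • x := funext hx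
  rw [← aeval_smul_of_isHomogeneous_s10 hF, ← hcx, aeval_algebraMap_apply, aeval_eq_eval,
    algebraMap_int_eq, eq_intCast]

theorem dvd_eval_of_pow_mul_aeval_div_eq_intCast [Field K] [CharZero K]
    (hF : F.IsHomogeneous (n + 1)) {q : ℤ} (hq : q ≠ 0) {a : σ → ℤ} {A : ℤ}
    (hA : (q : K) ^ n * aeval (fun i => (a i : K) / q) F = A) : q ∣ eval a F := by
  have hqK : (q : K) ≠ 0 := Int.cast_ne_zero.2 hq
  have h : (eval a F : K) = q ^ (n + 1) * aeval (fun i => (a i : K) / q) F :=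
    intCast_eval_eq_pow_mul_aeval hF fun i => (mul_div_cancel₀ _ hqK).symm
  rw [pow_succ', mul_assoc, hA] at h
  exact ⟨A, by exact_mod_cast h⟩

theorem exists_intCast_eq_pow_mul_aeval_sub [Field K] [CharZero K] (hF : F.IsHomogeneous (n + 1))
    {q r : ℤ} (hq : q ≠ 0) (hr : r ≠ 0) {a b : σ → ℤ} {A B : ℤ}
    (hA : (q : K) ^ n * aeval (fun i => (a i : K) / q) F = A)
    (hB : (r : K) ^ n * aeval (fun i => (b i : K) / r) F = B) :
    ∃ N : ℤ, ((q : K) * r) ^ n * aeval (fun i => (a i : K) / q - b i / r) F = N := by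
  have hqK : (q : K) ≠ 0 := Int.cast_ne_zero.2 hq
  have hrK : (r : K) ≠ 0 := Int.cast_ne_zero.2 hr
  obtain ⟨N, hN⟩ : q * r ∣ eval (r • a - q • b) F :=
    mul_dvd_eval_smul_sub_smul hF n.succ_ne_zero
      (dvd_eval_of_pow_mul_aeval_div_eq_intCast hF hq hA)
      (dvd_eval_of_pow_mul_aeval_div_eq_intCast hF hr hB)
  have h : (eval (r • a - q • b) F : K) =
      (q * r) ^ (n + 1) * aeval (fun i => (a i : K) / q - b i / r) F :=
    intCast_eval_eq_pow_mul_aeval hF fun i => by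
      simp only [Pi.sub_apply, Pi.smul_apply, smul_eq_mul]
      push_cast
      field_simp
  refine ⟨N, mul_left_cancel₀ (mul_ne_zero hqK hrK) ?_⟩
  rw [← mul_assoc, ← pow_succ', ← h, hN]
  push_cast
  rfl

theorem mul_pow_succ_mul_div_eq_intCast [Field K] [CharZero K] (D n : ℕ) {q : ℤ} (hq : q ≠ 0)
    (A : ℤ) : (D : K) * q ^ (n + 1) * (A / q) = (D * q ^ n * A : ℤ) := by
  have hqK : (q : K) ≠ 0 := Int.cast_ne_zero.2 hq
  push_cast
  rw [pow_succ, mul_assoc, mul_assoc, mul_div_cancel₀ _ hqK, mul_assoc]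

end Integrality

section CommonDenominator

variable {σ : Type*}

/-- The least common denominator `D(f)` of the coefficients of a rational polynomial `f`; it is `1`
for `f = 0`. -/
def commonDen (f : MvPolynomial σ ℚ) : ℕ :=
  f.support.lcm fun m => (f.coeff m).den

theorem commonDen_pos (f : MvPolynomial σ ℚ) : 0 < commonDen f := by
  simp [Nat.pos_iff_ne_zero, commonDen, Finset.lcm_eq_zero_iff]

theorem den_coeff_dvd_commonDen (f : MvPolynomial σ ℚ) (m : σ →₀ ℕ) :
    (f.coeff m).den ∣ commonDen f := by
  by_cases hm : m ∈ f.support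
  · exact Finset.dvd_lcm (f := fun m => (f.coeff m).den) hm
  · simp [notMem_support_iff.1 hm]

theorem exists_map_intCast_eq_commonDen_mul (f : MvPolynomial σ ℚ) :
    ∃ F : MvPolynomial σ ℤ, map (Int.castRingHom ℚ) F = C (commonDen f : ℚ) * f := by
  refine mem_range_map_iff_coeffs_subset.2 fun c hc => ?_
  obtain ⟨m, -, rfl⟩ := mem_coeffs_iff.1 hc
  obtain ⟨e, he⟩ := den_coeff_dvd_commonDen f m
  refine ⟨e * (f.coeff m).num, ?_⟩
  rw [eq_intCast, coeff_C_mul, he]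
  push_cast
  rw [← Rat.den_mul_eq_num]
  ring

theorem exists_intCast_eq_commonDen_mul_eval_sub {f : MvPolynomial σ ℚ} {n : ℕ}
    (hf : f.IsHomogeneous (n + 1)) {q r : ℤ} (hq : q ≠ 0) (hr : r ≠ 0) {a b : σ → ℤ} {A B : ℤ}
    (hA : commonDen f * (q : ℚ) ^ n * eval (fun i => (a i : ℚ) / q) f = A)
    (hB : commonDen f * (r : ℚ) ^ n * eval (fun i => (b i : ℚ) / r) f = B) :
    ∃ N : ℤ, commonDen f * ((q : ℚ) * r) ^ n * eval (fun i => (a i : ℚ) / q - b i / r) f = N := by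
  obtain ⟨F, hF⟩ := exists_map_intCast_eq_commonDen_mul f
  have hF_hom : F.IsHomogeneous (n + 1) :=
    .of_map (RingHom.injective_int (Int.castRingHom ℚ)) (hF ▸ hf.C_mul _)
  have pow_mul_aeval (c : ℚ) (x : σ → ℚ) :
      c ^ n * aeval x F = commonDen f * c ^ n * eval x f := by
    rw [aeval_def, algebraMap_int_eq, ← eval_map, hF, map_mul, eval_C]
    ring
  simp only [← pow_mul_aeval] at hA hB ⊢
  exact exists_intCast_eq_pow_mul_aeval_sub hF_hom hq hr hA hB

theorem one_le_commonDen_mul_abs_eval_sub {f : MvPolynomial σ ℚ} {n : ℕ}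
    (hf : f.IsHomogeneous (n + 1)) {q r : ℤ} (hq : 0 < q) (hr : 0 < r) {a b : σ → ℤ}
    (hne : eval (fun i => (a i : ℚ) / q - b i / r) f ≠ 0) {A B : ℤ}
    (hA : commonDen f * (q : ℚ) ^ n * eval (fun i => (a i : ℚ) / q) f = A)
    (hB : commonDen f * (r : ℚ) ^ n * eval (fun i => (b i : ℚ) / r) f = B) :
    1 ≤ commonDen f * ((q : ℚ) * r) ^ n * |eval (fun i => (a i : ℚ) / q - b i / r) f| := by
  obtain ⟨N, hN⟩ := exists_intCast_eq_commonDen_mul_eval_sub hf hq.ne' hr.ne' hA hB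
  have h_pos : 0 < commonDen f * ((q : ℚ) * r) ^ n :=
    mul_pos (Nat.cast_pos.2 (commonDen_pos f)) (pow_pos (by exact_mod_cast mul_pos hq hr) n)
  have hN_ne : (N : ℚ) ≠ 0 := hN ▸ mul_ne_zero h_pos.ne' hne
  rw [← abs_of_pos h_pos, ← abs_mul, hN]
  exact_mod_cast Int.one_le_abs (Int.cast_ne_zero.1 hN_ne)

end CommonDenominator

section SphereSup

variable {σ R : Type*} [Fintype σ] [CommSemiring R] [Algebra R ℝ]

theorem isCompact_setOf_sum_sq_eq_one : IsCompact {x : σ → ℝ | ∑ i, x i ^ 2 = 1} := by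
  have h_image := (isCompact_sphere (0 : EuclideanSpace ℝ σ) 1).image
    (PiLp.continuous_ofLp 2 fun _ => ℝ)
  convert h_image
  ext x
  simp [EuclideanSpace.sphere_zero_eq, (WithLp.equiv 2 (σ → ℝ)).symm.surjective.exists]

/-- The supremum `K(f)` of `|f|` over the Euclidean unit sphere, which is written in coordinates
because `σ → ℝ` carries the supremum norm. For empty `σ` the sphere is empty and the value is the
junk value `0`. -/
noncomputable def sphereSup (f : MvPolynomial σ R) : ℝ :=
  sSup {y : ℝ | ∃ x : σ → ℝ, ∑ i, x i ^ 2 = 1 ∧ y = |aeval x f|}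

theorem sphereSup_nonneg (f : MvPolynomial σ R) : 0 ≤ sphereSup f := by
  refine Real.sSup_nonneg ?_
  rintro _ ⟨x, -, rfl⟩
  exact abs_nonneg _

theorem abs_aeval_le_sphereSup (f : MvPolynomial σ R) {x : σ → ℝ} (hx : ∑ i, x i ^ 2 = 1) :
    |aeval x f| ≤ sphereSup f := by
  have h_cont : Continuous fun x : σ → ℝ => |aeval x f| := by
    simp only [aeval_def, ← eval_map]
    exact (continuous_eval _).abs
  refine le_csSup ((isCompact_setOf_sum_sq_eq_one.bddAbove_image h_cont.continuousOn).mono ?_)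
    ⟨x, hx, rfl⟩
  rintro _ ⟨x, hx, rfl⟩
  exact ⟨x, hx, rfl⟩

theorem abs_aeval_le_sphereSup_mul {f : MvPolynomial σ R} {n : ℕ} (hf : f.IsHomogeneous n)
    (hn : n ≠ 0) (x : σ → ℝ) : |aeval x f| ≤ sphereSup f * √(∑ i, x i ^ 2) ^ n := by
  have h_nonneg : 0 ≤ ∑ i, x i ^ 2 := Finset.sum_nonneg fun i _ => sq_nonneg (x i)
  rcases eq_or_ne x 0 with rfl | hx
  · simp [aeval_zero_of_isHomogeneous hf hn, hn]
  set ρ := √(∑ i, x i ^ 2) with hρ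
  have hρ_pos : 0 < ρ := by
    obtain ⟨i, hi⟩ := Function.ne_iff.1 hx
    exact Real.sqrt_pos.2 <| Finset.sum_pos' (fun i _ => sq_nonneg (x i))
      ⟨i, Finset.mem_univ i, sq_pos_of_ne_zero hi⟩
  have h_unit : ∑ i, (ρ⁻¹ • x) i ^ 2 = 1 := by
    simp only [Pi.smul_apply, smul_eq_mul, mul_pow]
    rw [← Finset.mul_sum, ← Real.sq_sqrt h_nonneg, ← hρ, ← mul_pow,
      inv_mul_cancel₀ hρ_pos.ne', one_pow]
  calc |aeval x f| = ρ ^ n * |aeval (ρ⁻¹ • x) f| := by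
        rw [← abs_of_pos (pow_pos hρ_pos n), ← abs_mul, ← aeval_smul_of_isHomogeneous_s10 hf,
          smul_inv_smul₀ hρ_pos.ne']
    _ ≤ ρ ^ n * sphereSup f := by
        gcongr
        exact abs_aeval_le_sphereSup f h_unit
    _ = sphereSup f * ρ ^ n := mul_comm _ _

end SphereSup

theorem simplex_lemma_ii_general {σ : Type*} [Fintype σ] {n : ℕ} {f : MvPolynomial σ ℚ}
    (hf : f.IsHomogeneous (n + 1)) {q r : ℤ} (hq : 0 < q) (hr : 0 < r) {a b : σ → ℤ}
    (hne : eval (fun i => (a i : ℚ) / q - b i / r) f ≠ 0) {A B : ℤ}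
    (hA : commonDen f * (q : ℚ) ^ n * eval (fun i => (a i : ℚ) / q) f = A)
    (hB : commonDen f * (r : ℚ) ^ n * eval (fun i => (b i : ℚ) / r) f = B) :
    1 / (commonDen f * sphereSup f * (q : ℝ) ^ n * (r : ℝ) ^ n) ≤
      √(∑ i, ((a i : ℝ) / q - b i / r) ^ 2) ^ (n + 1) := by
  have hK : 0 ≤ sphereSup f := sphereSup_nonneg f
  set δ : σ → ℝ := fun i => (a i : ℝ) / q - b i / r
  have h_cast : aeval δ f = (eval (fun i => (a i : ℚ) / q - b i / r) f : ℝ) := by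
    rw [← aeval_eq_eval, ← eq_ratCast (algebraMap ℚ ℝ), ← aeval_algebraMap_apply]
    simp [δ, Function.comp_def]
  refine div_le_of_le_mul₀ (by positivity) (by positivity) ?_
  calc (1 : ℝ) ≤ commonDen f * ((q : ℝ) * r) ^ n * |aeval δ f| := by
        rw [h_cast]
        exact_mod_cast one_le_commonDen_mul_abs_eval_sub hf hq hr hne hA hB
    _ ≤ commonDen f * ((q : ℝ) * r) ^ n * (sphereSup f * √(∑ i, δ i ^ 2) ^ (n + 1)) := by
        gcongr
        exact abs_aeval_le_sphereSup_mul hf n.succ_ne_zero δ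
    _ = √(∑ i, δ i ^ 2) ^ (n + 1) * (commonDen f * sphereSup f * (q : ℝ) ^ n * (r : ℝ) ^ n) := by
        rw [mul_pow]
        ring

/-- Lemma 1(ii): let `f` be a homogeneous polynomial of degree `s ≥ 2` with rational
coefficients, `D` the common denominator of its coefficients, `K = sup_{|x|=1} |f(x)|`.
If `α = a/q`, `β = b/r` are rational vectors with `f(α - β) ≠ 0`, `f(α) = A/q` and
`f(β) = B/r` for integers `A, B`, then `|α - β|^s ≥ 1/(D K q^{s-1} r^{s-1})`. -/
theorem simplex_lemma_ii
    (d s : ℕ) (hs : 2 ≤ s)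
    (f : MvPolynomial (Fin d) ℚ) (hhom : f.IsHomogeneous s)
    (D : ℕ) (hD : D = f.support.lcm fun m => (f.coeff m).den)
    (K : ℝ)
    (hK : K = sSup {y : ℝ | ∃ x : Fin d → ℝ,
      ∑ i, x i ^ 2 = 1 ∧ y = |MvPolynomial.aeval x f|})
    (q r : ℤ) (hq : 0 < q) (hr : 0 < r)
    (a b : Fin d → ℤ)
    (hne : MvPolynomial.eval (fun i => (a i : ℚ) / (q : ℚ) - (b i : ℚ) / (r : ℚ)) f ≠ 0)
    (A B : ℤ)
    (hA : MvPolynomial.eval (fun i => (a i : ℚ) / (q : ℚ)) f = (A : ℚ) / (q : ℚ))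
    (hB : MvPolynomial.eval (fun i => (b i : ℚ) / (r : ℚ)) f = (B : ℚ) / (r : ℚ)) :
    (Real.sqrt (∑ i, ((a i : ℝ) / (q : ℝ) - (b i : ℝ) / (r : ℝ)) ^ 2)) ^ s
      ≥ 1 / (D * K * (q : ℝ) ^ (s - 1) * (r : ℝ) ^ (s - 1)) := by
  obtain ⟨t, rfl⟩ := Nat.exists_eq_add_of_le' hs
  subst hD hK
  exact simplex_lemma_ii_general hhom hq hr hne
    (hA ▸ mul_pow_succ_mul_div_eq_intCast _ t hq.ne' A)
    (hB ▸ mul_pow_succ_mul_div_eq_intCast _ t hr.ne' B)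
end

section
/- Let s ≥ 2 be an integer, let f be a homogeneous polynomial of degree s in d variables with rational coefficients, and let D = D(f) be the common denominator of its coefficients. Let α = (a₁/q, …, a_d/q) and β = (b₁/r, …, b_d/r) be rational vectors (q, r positive integers, a_i, b_i ∈ ℤ) with f(α − β) ≠ 0. If f(α) = A/q for some integer A, then |f(α − β)| ≥ 1/(D q^{s−1} r^s). -/
/-!
Let `g = D f`, a form with integer coefficients. Homogeneity gives
`g(r a - q b) = D (q r)^s f(α - β)`, so `D q^s r^s f(α - β)` is an integer. One factor `q` can be
saved: `g(r a - q b) ≡ r^s g(a)` modulo `q`, and `g(a) = D q^s f(α) = D q^(s-1) A` is divisible by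
`q` because `s ≥ 2`. Hence `D q^(s-1) r^s f(α - β)` is a nonzero integer.
-/

section ValueAtDifference

open MvPolynomial

variable {σ : Type*}

theorem eval_smul_of_isHomogeneous {R : Type*} [CommSemiring R] {g : MvPolynomial σ R} {n : ℕ}
    (hg : g.IsHomogeneous n) (c : R) (x : σ → R) : eval (c • x) g = c ^ n * eval x g := by
  rw [eval_eq, eval_eq, Finset.mul_sum]
  refine Finset.sum_congr rfl fun m hm => ?_
  have hdeg : ∑ i ∈ m.support, m i = n := by
    rw [← Finsupp.degree_apply, Finsupp.degree_eq_weight_one]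
    exact hg (mem_support_iff.mp hm)
  simp only [Pi.smul_apply, smul_eq_mul, mul_pow, Finset.prod_mul_distrib,
    Finset.prod_pow_eq_pow_sum, hdeg]
  ring

theorem map_eval_eq_of_map_eq_smul {R S : Type*} [CommSemiring R] [CommSemiring S] {φ : R →+* S}
    {g : MvPolynomial σ R} {f : MvPolynomial σ S} {n : ℕ} (hf : f.IsHomogeneous n) {D : S}
    (hg : map φ g = D • f) {c : S} {x : σ → R} {ξ : σ → S} (hx : ∀ i, φ (x i) = c * ξ i) :
    φ (eval x g) = D * c ^ n * eval ξ f := by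
  have hxξ : φ ∘ x = c • ξ := funext hx
  rw [map_eval, hg, hxξ, smul_eval, eval_smul_of_isHomogeneous hf, mul_assoc]

section CommRing

variable {R : Type*} [CommRing R]

theorem eval_sub_eval_mem (g : MvPolynomial σ R) {I : Ideal R} {x y : σ → R}
    (h : ∀ i, x i - y i ∈ I) : eval x g - eval y g ∈ I := by
  have hxy : Ideal.Quotient.mk I ∘ x = Ideal.Quotient.mk I ∘ y :=
    funext fun i => Ideal.Quotient.mk_eq_mk_iff_sub_mem _ _ |>.mpr (h i)
  rw [← Ideal.Quotient.mk_eq_mk_iff_sub_mem, map_eval, map_eval, hxy]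

theorem dvd_eval_smul_sub_smul {g : MvPolynomial σ R} {n : ℕ} (hg : g.IsHomogeneous n)
    {q : R} {a : σ → R} (ha : q ∣ eval a g) (r : R) (b : σ → R) :
    q ∣ eval (r • a - q • b) g := by
  have hcongr : q ∣ eval (r • a - q • b) g - eval (r • a) g :=
    Ideal.mem_span_singleton.mp <| eval_sub_eval_mem g fun i =>
      Ideal.mem_span_singleton.mpr ⟨-b i, by simp⟩
  rw [dvd_iff_dvd_of_dvd_sub hcongr, eval_smul_of_isHomogeneous hg]
  exact ha.mul_left _

end CommRing

/-- The common denominator `D(f)` of the coefficients of a rational polynomial `f`, i.e. the least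
common multiple of their reduced denominators; it equals `1` for `f = 0`. -/
def commonDenom (f : MvPolynomial σ ℚ) : ℕ :=
  f.support.lcm fun m => (f.coeff m).den

theorem commonDenom_pos (f : MvPolynomial σ ℚ) : 0 < commonDenom f := by
  simp [Nat.pos_iff_ne_zero, commonDenom, Finset.lcm_eq_zero_iff]

theorem den_coeff_dvd_commonDenom (f : MvPolynomial σ ℚ) (m : σ →₀ ℕ) :
    (f.coeff m).den ∣ commonDenom f := by
  by_cases hm : m ∈ f.support
  · exact Finset.dvd_lcm (f := fun m => (f.coeff m).den) hm
  · simp [notMem_support_iff.mp hm]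

theorem exists_map_intCast_eq_commonDenom_smul (f : MvPolynomial σ ℚ) :
    ∃ g : MvPolynomial σ ℤ, map (Int.castRingHom ℚ) g = (commonDenom f : ℚ) • f := by
  rw [← Set.mem_range, mem_range_map_iff_coeffs_subset]
  intro c hc
  obtain ⟨m, -, rfl⟩ := mem_coeffs_iff.mp (Finset.mem_coe.mp hc)
  obtain ⟨k, hk⟩ := den_coeff_dvd_commonDenom f m
  refine ⟨k * (f.coeff m).num, ?_⟩
  rw [coeff_smul, hk, map_mul, eq_intCast, eq_intCast, ← Rat.den_mul_eq_num]
  push_cast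
  ring

theorem exists_intCast_eq_mul_eval_sub {s : ℕ} (hs : 2 ≤ s) {f : MvPolynomial σ ℚ}
    (hf : f.IsHomogeneous s) {q r : ℤ} (hq : q ≠ 0) (hr : r ≠ 0) {a : σ → ℤ} (b : σ → ℤ) {A : ℤ}
    (hA : eval (fun i => (a i : ℚ) / q) f = A / q) :
    ∃ k : ℤ, (k : ℚ) =
      commonDenom f * (q : ℚ) ^ (s - 1) * (r : ℚ) ^ s *
        eval (fun i => (a i : ℚ) / q - (b i : ℚ) / r) f := by
  obtain ⟨g, hg⟩ := exists_map_intCast_eq_commonDenom_smul f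
  have hg_hom : g.IsHomogeneous s :=
    .of_map Int.cast_injective (f := Int.castRingHom ℚ) <| by
      rw [hg, smul_eq_C_mul]
      exact hf.C_mul _
  have hq' : (q : ℚ) ≠ 0 := Int.cast_ne_zero.mpr hq
  have hr' : (r : ℚ) ≠ 0 := Int.cast_ne_zero.mpr hr
  obtain ⟨t, rfl⟩ := Nat.exists_eq_add_of_le' hs
  have hdvd : q ∣ eval a g := by
    refine ⟨commonDenom f * q ^ t * A, Int.cast_injective (α := ℚ) ?_⟩
    rw [← eq_intCast (Int.castRingHom ℚ), map_eval_eq_of_map_eq_smul hf hg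
      fun i => (mul_div_cancel₀ (a i : ℚ) hq').symm, hA]
    push_cast
    field_simp
    ring
  obtain ⟨k, hk⟩ := dvd_eval_smul_sub_smul hg_hom hdvd r b
  refine ⟨k, mul_left_cancel₀ hq' ?_⟩
  have hscale (i : σ) :
      ((r • a - q • b) i : ℤ) = (q * r : ℚ) * ((a i : ℚ) / q - (b i : ℚ) / r) := by
    simp only [Pi.sub_apply, Pi.smul_apply, smul_eq_mul, Int.cast_sub, Int.cast_mul]
    field_simp
  rw [← Int.cast_mul, ← hk, ← eq_intCast (Int.castRingHom ℚ),
    map_eval_eq_of_map_eq_smul hf hg hscale]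
  simp only [mul_pow, Nat.add_succ_sub_one]
  ring

theorem one_div_le_abs_of_intCast_eq_mul {K : Type*} [Field K] [LinearOrder K]
    [IsStrictOrderedRing K] {c x : K} (hc : 0 < c) (hx : x ≠ 0) {k : ℤ} (hk : (k : K) = c * x) :
    1 / c ≤ |x| := by
  have hk_ne : k ≠ 0 := Int.cast_ne_zero.mp (hk ▸ mul_ne_zero hc.ne' hx : (k : K) ≠ 0)
  rw [div_le_iff₀' hc]
  calc (1 : K) ≤ |(k : K)| := by exact_mod_cast Int.one_le_abs hk_ne
    _ = c * |x| := by rw [hk, abs_mul, abs_of_pos hc]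

theorem simplex_lemma_value_i_general {s : ℕ} (hs : 2 ≤ s) {f : MvPolynomial σ ℚ}
    (hf : f.IsHomogeneous s) {q r : ℤ} (hq : 0 < q) (hr : 0 < r) {a b : σ → ℤ}
    (hne : eval (fun i => (a i : ℚ) / q - (b i : ℚ) / r) f ≠ 0) {A : ℤ}
    (hA : eval (fun i => (a i : ℚ) / q) f = A / q) :
    1 / ((commonDenom f : ℚ) * (q : ℚ) ^ (s - 1) * (r : ℚ) ^ s) ≤
      |eval (fun i => (a i : ℚ) / q - (b i : ℚ) / r) f| := by
  obtain ⟨k, hk⟩ := exists_intCast_eq_mul_eval_sub hs hf hq.ne' hr.ne' b hA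
  have hD := commonDenom_pos f
  exact one_div_le_abs_of_intCast_eq_mul (by positivity) hne hk

end ValueAtDifference

/-- Inequality (10) in Lemma 1(i): let `f` be a homogeneous polynomial of degree `s ≥ 2`
with rational coefficients and `D` the common denominator of its coefficients. If
`α = a/q`, `β = b/r` are rational vectors with `f(α - β) ≠ 0` and `f(α) = A/q` for an
integer `A`, then `|f(α - β)| ≥ 1/(D q^{s-1} r^s)`. -/
theorem simplex_lemma_value_i
    (d s : ℕ) (hs : 2 ≤ s)
    (f : MvPolynomial (Fin d) ℚ) (hhom : f.IsHomogeneous s)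
    (D : ℕ) (hD : D = f.support.lcm fun m => (f.coeff m).den)
    (q r : ℤ) (hq : 0 < q) (hr : 0 < r)
    (a b : Fin d → ℤ)
    (hne : MvPolynomial.eval (fun i => (a i : ℚ) / (q : ℚ) - (b i : ℚ) / (r : ℚ)) f ≠ 0)
    (A : ℤ)
    (hA : MvPolynomial.eval (fun i => (a i : ℚ) / (q : ℚ)) f = (A : ℚ) / (q : ℚ)) :
    |MvPolynomial.eval (fun i => (a i : ℚ) / (q : ℚ) - (b i : ℚ) / (r : ℚ)) f|
      ≥ 1 / ((D : ℚ) * (q : ℚ) ^ (s - 1) * (r : ℚ) ^ s) := by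
  subst hD
  exact simplex_lemma_value_i_general hs hhom hq hr hne hA
end
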